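/- There exist positive numerical constants ρ_r′, ρ_s′, and c′ such that the following holds. Under the observation model with incoherence parameter ν, if r ≤ ρ_r′ · n2 · ν⁻¹ · (log n1)⁻² and m ≤ ρ_s′ · n1 · n2, then with probability at least 1 − c′·n1^{−10} over the random support Ω and the random signs: when Z0 = 0 (so D = L0 + S0), every minimizer of StablePCP_c(0) with λ = 1/√n1 equals (L0, S0); that is, the constrained stable PCP with δ = 0 recovers the pair (L0, S0) exactly. -/

import Mathlib

open Matrix
open scoped BigOperators

/-- Frobenius norm of a real matrix. -/
noncomputable def frob {n1 n2 : ℕ} (A : Matrix (Fin n1) (Fin n2) ℝ) : ℝ :=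
  Real.sqrt (∑ i, ∑ j, A i j ^ 2)

/-- Entrywise ℓ¹ norm. -/
noncomputable def l1norm {n1 n2 : ℕ} (A : Matrix (Fin n1) (Fin n2) ℝ) : ℝ :=
  ∑ i, ∑ j, |A i j|

/-- Trace inner product ⟨A,B⟩ = trace(AᵀB). -/
noncomputable def minner {n1 n2 : ℕ} (A B : Matrix (Fin n1) (Fin n2) ℝ) : ℝ :=
  ∑ i, ∑ j, A i j * B i j

/-- Spectral norm (largest singular value), as the ℓ²→ℓ² operator norm. -/
noncomputable def spec {n1 n2 : ℕ} (A : Matrix (Fin n1) (Fin n2) ℝ) : ℝ :=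
  sSup {c : ℝ | ∃ x : Fin n2 → ℝ, (∑ j, x j ^ 2) ≤ 1 ∧
    c = Real.sqrt (∑ i, (∑ j, A i j * x j) ^ 2)}

/-- Nuclear norm (sum of singular values), via duality with the spectral norm. -/
noncomputable def nuc {n1 n2 : ℕ} (A : Matrix (Fin n1) (Fin n2) ℝ) : ℝ :=
  sSup {c : ℝ | ∃ B : Matrix (Fin n1) (Fin n2) ℝ, spec B ≤ 1 ∧ c = minner A B}

/-- P_Ω: the matrix agreeing with `M` on `Ω` and zero off `Ω`. -/
noncomputable def projS {n1 n2 : ℕ} (Ω : Finset (Fin n1 × Fin n2))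
    (M : Matrix (Fin n1) (Fin n2) ℝ) : Matrix (Fin n1) (Fin n2) ℝ :=
  Matrix.of fun i j => if (i, j) ∈ Ω then M i j else 0

/-- Entrywise sign matrix. -/
noncomputable def signM {n1 n2 : ℕ} (A : Matrix (Fin n1) (Fin n2) ℝ) :
    Matrix (Fin n1) (Fin n2) ℝ :=
  Matrix.of fun i j => Real.sign (A i j)

/-- The tangent space T = {UQᵀ + RVᵀ}. -/
def memT {n1 n2 r : ℕ} (U : Matrix (Fin n1) (Fin r) ℝ) (V : Matrix (Fin n2) (Fin r) ℝ)
    (M : Matrix (Fin n1) (Fin n2) ℝ) : Prop :=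
  ∃ (Q : Matrix (Fin n2) (Fin r) ℝ) (R : Matrix (Fin n1) (Fin r) ℝ), M = U * Qᵀ + R * Vᵀ

/-- Membership in T⊥, the orthogonal complement of the tangent space. -/
def memTperp {n1 n2 r : ℕ} (U : Matrix (Fin n1) (Fin r) ℝ) (V : Matrix (Fin n2) (Fin r) ℝ)
    (W : Matrix (Fin n1) (Fin n2) ℝ) : Prop :=
  ∀ M, memT U V M → minner W M = 0

/-- (L̂, Ŝ) is a global minimizer of the √PCP objective
`‖L‖_* + λ‖S‖₁ + μ‖L + S − D‖_F`. -/
def IsRootPCPMin {n1 n2 : ℕ} (D : Matrix (Fin n1) (Fin n2) ℝ) (lam mu : ℝ)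
    (Lh Sh : Matrix (Fin n1) (Fin n2) ℝ) : Prop :=
  ∀ L S : Matrix (Fin n1) (Fin n2) ℝ,
    nuc Lh + lam * l1norm Sh + mu * frob (Lh + Sh - D) ≤
      nuc L + lam * l1norm S + mu * frob (L + S - D)

/-- (L̂, Ŝ) is a minimizer of StablePCP_c(δ):
minimize `‖L‖_* + λ‖S‖₁` subject to `‖L + S − D‖_F ≤ δ`. -/
def IsStablePCPMin {n1 n2 : ℕ} (D : Matrix (Fin n1) (Fin n2) ℝ) (lam δ : ℝ)
    (Lh Sh : Matrix (Fin n1) (Fin n2) ℝ) : Prop :=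
  frob (Lh + Sh - D) ≤ δ ∧
    ∀ L S : Matrix (Fin n1) (Fin n2) ℝ, frob (L + S - D) ≤ δ →
      nuc Lh + lam * l1norm Sh ≤ nuc L + lam * l1norm S

/-- Frobenius distance between pairs: ‖(L,S) − (L',S')‖_F. -/
noncomputable def pairDist {n1 n2 : ℕ} (L S L' S' : Matrix (Fin n1) (Fin n2) ℝ) : ℝ :=
  Real.sqrt (frob (L - L') ^ 2 + frob (S - S') ^ 2)

/-- Sample space of the random sparsity model: a uniformly random support of
cardinality m together with iid uniform random signs. -/
abbrev SampleSpace (n1 n2 m : ℕ) : Type :=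
  {Ω : Finset (Fin n1 × Fin n2) // Ω.card = m} × ((Fin n1 × Fin n2) → Bool)

/-- The sparse matrix S0 built from fixed magnitudes `a` and a random sample:
S0 vanishes off Ω and equals ±a on Ω according to the random signs. -/
noncomputable def sparseOf {n1 n2 m : ℕ} (a : Fin n1 × Fin n2 → ℝ) (ω : SampleSpace n1 n2 m) :
    Matrix (Fin n1) (Fin n2) ℝ :=
  Matrix.of fun i j =>
    if (i, j) ∈ ω.1.1 then (if ω.2 (i, j) then a (i, j) else -a (i, j)) else 0

open Classical in
/-- Uniform probability of an event on a finite sample space. -/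
noncomputable def unifProb {α : Type*} [Fintype α] (E : α → Prop) : ℝ :=
  ((Finset.univ.filter fun a => E a).card : ℝ) / (Fintype.card α : ℝ)

section FiniteAverage

/-- The uniform average of a real function on a finite type. -/
noncomputable def avg {α : Type*} [Fintype α] (f : α → ℝ) : ℝ :=
  (∑ a, f a) / (Fintype.card α : ℝ)

variable {α β ι : Type*} [Fintype α] [Fintype β]

theorem avg_mono {f g : α → ℝ} (h : ∀ a, f a ≤ g a) : avg f ≤ avg g := by
  unfold avg
  gcongr
  exact h _

theorem avg_nonneg {f : α → ℝ} (h : ∀ a, 0 ≤ f a) : 0 ≤ avg f :=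
  div_nonneg (Finset.sum_nonneg fun a _ => h a) (Nat.cast_nonneg _)

theorem avg_const [Nonempty α] (c : ℝ) : avg (fun _ : α => c) = c := by
  unfold avg
  have : (Fintype.card α : ℝ) ≠ 0 := by exact_mod_cast Fintype.card_ne_zero
  simp [this]

theorem avg_le_of_forall_le [Nonempty α] {f : α → ℝ} {c : ℝ} (h : ∀ a, f a ≤ c) : avg f ≤ c :=
  (avg_mono h).trans (avg_const c).le

theorem avg_add (f g : α → ℝ) : avg (fun a => f a + g a) = avg f + avg g := by
  unfold avg
  rw [Finset.sum_add_distrib, add_div]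

theorem avg_const_mul (c : ℝ) (f : α → ℝ) : avg (fun a => c * f a) = c * avg f := by
  unfold avg
  rw [← Finset.mul_sum, mul_div_assoc]

theorem avg_sum (s : Finset ι) (f : ι → α → ℝ) :
    avg (fun a => ∑ i ∈ s, f i a) = ∑ i ∈ s, avg (f i) := by
  unfold avg
  rw [Finset.sum_comm, Finset.sum_div]

/-- Resampling part of a uniform variable does not change averages. -/
theorem avg_resample [Nonempty β] (upd : α → β → α) (old : α → β)
    (h₁ : ∀ a b, upd (upd a b) (old a) = a) (h₂ : ∀ a b, old (upd a b) = b) (f : α → ℝ) :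
    avg f = avg (fun a => avg (fun b => f (upd a b))) := by
  have hβ : (Fintype.card β : ℝ) ≠ 0 := by exact_mod_cast Fintype.card_ne_zero
  have key : ∑ a, ∑ b, f (upd a b) = (Fintype.card β : ℝ) * ∑ a, f a := by
    let e : α × β → α × β := fun p => (upd p.1 p.2, old p.1)
    have he : Function.Involutive e := fun p => by simp [e, h₁, h₂]
    calc ∑ a, ∑ b, f (upd a b) = ∑ p : α × β, f (e p).1 := by
          rw [Fintype.sum_prod_type]
      _ = ∑ p : α × β, f p.1 := Equiv.sum_comp he.toPerm (fun p : α × β => f p.1)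
      _ = _ := by
          rw [Fintype.sum_prod_type]
          simp [Finset.mul_sum]
  unfold avg
  rw [← Finset.sum_div, key]
  field_simp

theorem avg_pi_prod [DecidableEq ι] [Fintype ι] (g : ι → α → ℝ) :
    avg (fun x : ι → α => ∏ i, g i (x i)) = ∏ i, avg (g i) := by
  unfold avg
  rw [Finset.prod_div_distrib, Finset.prod_univ_sum]
  simp

theorem unifProb_eq_avg (E : α → Prop) [DecidablePred E] :
    unifProb E = avg (fun a => if E a then (1 : ℝ) else 0) := by
  unfold unifProb avg
  congr 1
  rw [Finset.sum_boole]
  congr!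

theorem unifProb_nonneg (E : α → Prop) : 0 ≤ unifProb E := by
  unfold unifProb
  positivity

theorem unifProb_mono {E F : α → Prop} (h : ∀ a, E a → F a) : unifProb E ≤ unifProb F := by
  classical
  rw [unifProb_eq_avg, unifProb_eq_avg]
  refine avg_mono fun a => ?_
  by_cases hE : E a
  · simp [hE, h a hE]
  · simp only [hE, if_false]
    split_ifs <;> norm_num

theorem unifProb_not [Nonempty α] (E : α → Prop) : unifProb (fun a => ¬ E a) = 1 - unifProb E := by
  classical
  rw [unifProb_eq_avg, unifProb_eq_avg, eq_sub_iff_add_eq, ← avg_add]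
  convert avg_const (α := α) 1 using 2
  ext a
  split_ifs <;> simp

theorem unifProb_or_le (E F : α → Prop) :
    unifProb (fun a => E a ∨ F a) ≤ unifProb E + unifProb F := by
  classical
  rw [unifProb_eq_avg, unifProb_eq_avg, unifProb_eq_avg, ← avg_add]
  refine avg_mono fun a => ?_
  by_cases hE : E a <;> by_cases hF : F a <;> simp [hE, hF]

theorem unifProb_exists_le (s : Finset ι) (E : ι → α → Prop) :
    unifProb (fun a => ∃ i ∈ s, E i a) ≤ ∑ i ∈ s, unifProb (E i) := by
  classical
  simp only [unifProb_eq_avg]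
  rw [← avg_sum]
  refine avg_mono fun a => ?_
  have h0 : ∀ i ∈ s, (0 : ℝ) ≤ if E i a then 1 else 0 := fun i _ => by split_ifs <;> norm_num
  split_ifs with h
  · obtain ⟨i, hi, hE⟩ := h
    exact le_trans (by simp [hE]) (Finset.single_le_sum h0 hi)
  · exact Finset.sum_nonneg h0

theorem unifProb_exists_le_card_mul (s : Finset ι) (E : ι → α → Prop) {p : ℝ}
    (h : ∀ i ∈ s, unifProb (E i) ≤ p) :
    unifProb (fun a => ∃ i ∈ s, E i a) ≤ s.card * p :=
  (unifProb_exists_le s E).trans ((Finset.sum_le_sum h).trans (by simp))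

theorem unifProb_le_avg (E : α → Prop) {f : α → ℝ} (h0 : ∀ a, 0 ≤ f a)
    (h : ∀ a, E a → 1 ≤ f a) : unifProb E ≤ avg f := by
  classical
  rw [unifProb_eq_avg]
  refine avg_mono fun a => ?_
  split_ifs with hE
  · exact h a hE
  · exact h0 a

/-- Chernoff's bound. -/
theorem unifProb_lt_le_exp (X : α → ℝ) (b : ℝ) :
    unifProb (fun a => b < X a) ≤ Real.exp (-b) * avg (fun a => Real.exp (X a)) := by
  rw [← avg_const_mul]
  refine unifProb_le_avg _ (fun a => by positivity) fun a ha => ?_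
  rw [← Real.exp_add]
  exact Real.one_le_exp (by linarith)

theorem unifProb_resample_le [Nonempty α] [Nonempty β] (upd : α → β → α) (old : α → β)
    (h₁ : ∀ a b, upd (upd a b) (old a) = a) (h₂ : ∀ a b, old (upd a b) = b) (E : α → Prop)
    {p : ℝ} (h : ∀ a, unifProb (fun b => E (upd a b)) ≤ p) : unifProb E ≤ p := by
  classical
  rw [unifProb_eq_avg, avg_resample upd old h₁ h₂]
  refine avg_le_of_forall_le fun a => ?_
  rw [← unifProb_eq_avg (fun b => E (upd a b))]
  exact h a

theorem exp_le_self_add_exp_sq (x : ℝ) : Real.exp x ≤ x + Real.exp (x ^ 2) := by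
  have h1 := Real.add_one_le_exp (x ^ 2)
  rcases le_or_gt |x| 1 with h | h
  · have := (abs_le.1 (Real.abs_exp_sub_one_sub_id_le h)).2
    linarith
  · rcases lt_abs.1 h with h | h
    · have : Real.exp x ≤ Real.exp (x ^ 2) := Real.exp_le_exp.2 (by nlinarith)
      linarith
    · have : Real.exp x ≤ 1 := Real.exp_le_one_iff.2 (by linarith)
      nlinarith

/-- A centred variable bounded by `b` is sub-Gaussian. -/
theorem avg_exp_le_of_abs_le [Nonempty α] {X : α → ℝ} (h0 : avg X = 0) {b : ℝ}
    (hb : ∀ a, |X a| ≤ b) : avg (fun a => Real.exp (X a)) ≤ Real.exp (b ^ 2) := by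
  refine (avg_mono fun a => exp_le_self_add_exp_sq (X a)).trans ?_
  rw [avg_add, h0, zero_add]
  refine avg_le_of_forall_le fun a => Real.exp_le_exp.2 ?_
  exact sq_le_sq.2 ((hb a).trans (le_abs_self b))

/-- Bernstein-type moment bound for a centred variable bounded by `1`. -/
theorem avg_exp_le_of_abs_le_one [Nonempty α] {X : α → ℝ} (h0 : avg X = 0)
    (hb : ∀ a, |X a| ≤ 1) :
    avg (fun a => Real.exp (X a)) ≤ Real.exp (avg fun a => X a ^ 2) := by
  have h : ∀ a, Real.exp (X a) ≤ 1 + X a + X a ^ 2 := fun a => by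
    have := (abs_le.1 (Real.abs_exp_sub_one_sub_id_le (hb a))).2
    linarith
  refine (avg_mono h).trans ?_
  rw [avg_add, avg_add, h0, avg_const]
  linarith [Real.add_one_le_exp (avg fun a => X a ^ 2)]

theorem avg_exp_sum [DecidableEq ι] [Fintype ι] (X : ι → α → ℝ) :
    avg (fun x : ι → α => Real.exp (∑ i, X i (x i))) =
      ∏ i, avg (fun a => Real.exp (X i a)) := by
  simp only [Real.exp_sum]
  exact avg_pi_prod fun i a => Real.exp (X i a)

end FiniteAverage

section ProjectionChernoff

variable {E : Type*} [Fintype E] [DecidableEq E]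

theorem exists_orthogonal_diagonalization {C : Matrix E E ℝ} (hC : Cᵀ = C) :
    ∃ (Q : Matrix E E ℝ) (d : E → ℝ), Qᵀ * Q = 1 ∧ Q * Qᵀ = 1 ∧ C = Q * diagonal d * Qᵀ := by
  have hH : C.IsHermitian := by rw [IsHermitian, conjTranspose_eq_transpose_of_trivial, hC]
  refine ⟨hH.eigenvectorUnitary, hH.eigenvalues, ?_, ?_, ?_⟩
  · have := Unitary.coe_star_mul_self hH.eigenvectorUnitary
    rwa [star_eq_conjTranspose, conjTranspose_eq_transpose_of_trivial] at this
  · have := Unitary.coe_mul_star_self hH.eigenvectorUnitary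
    rwa [Unitary.coe_star, star_eq_conjTranspose, conjTranspose_eq_transpose_of_trivial] at this
  · have := hH.spectral_theorem
    rw [Unitary.conjStarAlgAut_apply, star_eq_conjTranspose,
      conjTranspose_eq_transpose_of_trivial] at this
    exact this

theorem conj_diagonal_pow {Q : Matrix E E ℝ} (hQ : Qᵀ * Q = 1) (hQ' : Q * Qᵀ = 1) (d : E → ℝ)
    (k : ℕ) : (Q * diagonal d * Qᵀ) ^ k = Q * diagonal (fun i => d i ^ k) * Qᵀ := by
  induction k with
  | zero => simpa using hQ'.symm
  | succ k ih =>
    rw [pow_succ, ih]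
    calc Q * diagonal (fun i => d i ^ k) * Qᵀ * (Q * diagonal d * Qᵀ)
        = Q * diagonal (fun i => d i ^ k) * (Qᵀ * Q) * diagonal d * Qᵀ := by
          simp only [Matrix.mul_assoc]
      _ = _ := by
          rw [hQ, Matrix.mul_one, Matrix.mul_assoc Q, diagonal_mul_diagonal]
          simp only [pow_succ]

theorem dotProduct_conj_diagonal (Q : Matrix E E ℝ) (d v : E → ℝ) :
    v ⬝ᵥ (Q * diagonal d * Qᵀ) *ᵥ v = ∑ i, (Qᵀ *ᵥ v) i ^ 2 * d i := by
  rw [← mulVec_mulVec, ← mulVec_mulVec, dotProduct_mulVec, ← mulVec_transpose]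
  simp only [dotProduct, mulVec_diagonal]
  exact Finset.sum_congr rfl fun i _ => by ring

/-- The moments of a vector with respect to a symmetric matrix bounded below. -/
theorem exists_spectral_weights {C : Matrix E E ℝ} (hC : Cᵀ = C) {s : ℝ}
    (hs : ∀ x, s * (x ⬝ᵥ x) ≤ x ⬝ᵥ C *ᵥ x) (v : E → ℝ) :
    ∃ lam w : E → ℝ, (∀ i, s ≤ lam i) ∧ (∀ i, 0 ≤ w i) ∧
      ∀ k : ℕ, v ⬝ᵥ (C ^ k) *ᵥ v = ∑ i, w i * lam i ^ k := by
  obtain ⟨Q, d, hQ, hQ', rfl⟩ := exists_orthogonal_diagonalization hC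
  refine ⟨d, fun i => (Qᵀ *ᵥ v) i ^ 2, fun i => ?_, fun i => sq_nonneg _, fun k => ?_⟩
  · have h := hs (Q *ᵥ Pi.single i 1)
    have h1 : Qᵀ *ᵥ (Q *ᵥ Pi.single i 1) = Pi.single i (1 : ℝ) := by
      rw [mulVec_mulVec, hQ, one_mulVec]
    rw [dotProduct_conj_diagonal, h1, dotProduct_mulVec, ← mulVec_transpose, h1] at h
    simpa [Pi.single_apply] using h
  · rw [conj_diagonal_pow hQ hQ', dotProduct_conj_diagonal]

theorem trace_pow_bounds {C : Matrix E E ℝ} (hC : Cᵀ = C) {s t : ℝ} (hs0 : 0 ≤ s)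
    (hs : ∀ x, s * (x ⬝ᵥ x) ≤ x ⬝ᵥ C *ᵥ x) (p : ℕ) :
    0 ≤ (C ^ p).trace ∧
    ((∀ x, x ⬝ᵥ C *ᵥ x ≤ t * (x ⬝ᵥ x)) → (C ^ p).trace ≤ Fintype.card E * t ^ p) ∧
    (0 ≤ t → (C ^ p).trace < t ^ p → ∀ x, x ⬝ᵥ C *ᵥ x ≤ t * (x ⬝ᵥ x)) := by
  obtain ⟨Q, d, hQ, hQ', rfl⟩ := exists_orthogonal_diagonalization hC
  have h1 : ∀ i, Qᵀ *ᵥ (Q *ᵥ Pi.single i 1) = Pi.single i (1 : ℝ) := fun i => by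
    rw [mulVec_mulVec, hQ, one_mulVec]
  have h2 : ∀ x : E → ℝ, (Qᵀ *ᵥ x) ⬝ᵥ (Qᵀ *ᵥ x) = x ⬝ᵥ x := fun x => by
    rw [dotProduct_mulVec, ← mulVec_transpose, transpose_transpose, mulVec_mulVec, hQ', one_mulVec]
  have hd : ∀ i, 0 ≤ d i := fun i => by
    have h := hs (Q *ᵥ Pi.single i 1)
    rw [dotProduct_conj_diagonal, h1, dotProduct_mulVec, ← mulVec_transpose, h1] at h
    have h' : s ≤ d i := by simpa [Pi.single_apply] using h
    exact hs0.trans h'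
  have htr : ((Q * diagonal d * Qᵀ) ^ p).trace = ∑ i, d i ^ p := by
    rw [conj_diagonal_pow hQ hQ', trace_mul_comm, ← Matrix.mul_assoc, hQ, Matrix.one_mul,
      trace_diagonal]
  rw [htr]
  refine ⟨Finset.sum_nonneg fun i _ => pow_nonneg (hd i) p, ?_, ?_⟩
  · intro ht
    have : ∀ i ∈ Finset.univ, d i ^ p ≤ t ^ p := fun i _ => by
      have h := ht (Q *ᵥ Pi.single i 1)
      rw [dotProduct_conj_diagonal, h1, dotProduct_mulVec, ← mulVec_transpose, h1] at h
      have h' : d i ≤ t := by simpa [Pi.single_apply] using h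
      exact pow_le_pow_left₀ (hd i) h' p
    exact (Finset.sum_le_card_nsmul _ _ _ this).trans (by simp)
  · intro ht0 hlt x
    have hdt : ∀ i, d i ≤ t := fun i => by
      by_contra! hcon
      have : t ^ p ≤ d i ^ p := pow_le_pow_left₀ ht0 hcon.le p
      have h3 := Finset.single_le_sum (f := fun i => d i ^ p) (fun j _ => pow_nonneg (hd j) p)
        (Finset.mem_univ i)
      linarith
    rw [dotProduct_conj_diagonal, ← h2 x, dotProduct, Finset.mul_sum]
    refine Finset.sum_le_sum fun i _ => ?_
    nlinarith [hdt i, sq_nonneg ((Qᵀ *ᵥ x) i)]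

/-- Chebyshev's inequality for moments. -/
theorem moment_mul_moment_le {lam w : E → ℝ} (hl : ∀ i, 0 ≤ lam i) (hw : ∀ i, 0 ≤ w i)
    (a k : ℕ) :
    (∑ i, w i * lam i ^ a) * (∑ i, w i * lam i ^ k) ≤ (∑ i, w i) * ∑ i, w i * lam i ^ (a + k) := by
  have h : 0 ≤ ∑ i, ∑ j, w i * w j * ((lam i ^ a - lam j ^ a) * (lam i ^ k - lam j ^ k)) := by
    refine Finset.sum_nonneg fun i _ => Finset.sum_nonneg fun j _ =>
      mul_nonneg (mul_nonneg (hw i) (hw j)) ?_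
    rcases le_total (lam i) (lam j) with h | h
    · exact mul_nonneg_of_nonpos_of_nonpos (sub_nonpos.2 (pow_le_pow_left₀ (hl i) h a))
        (sub_nonpos.2 (pow_le_pow_left₀ (hl i) h k))
    · exact mul_nonneg (sub_nonneg.2 (pow_le_pow_left₀ (hl j) h a))
        (sub_nonneg.2 (pow_le_pow_left₀ (hl j) h k))
  have e : ∑ i, ∑ j, w i * w j * ((lam i ^ a - lam j ^ a) * (lam i ^ k - lam j ^ k)) =
      2 * ((∑ i, w i) * ∑ i, w i * lam i ^ (a + k)) -
        2 * ((∑ i, w i * lam i ^ a) * (∑ i, w i * lam i ^ k)) := by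
    have e1 : ∀ i j, w i * w j * ((lam i ^ a - lam j ^ a) * (lam i ^ k - lam j ^ k)) =
        (w i * lam i ^ (a + k)) * w j + w i * (w j * lam j ^ (a + k))
          - (w i * lam i ^ a) * (w j * lam j ^ k) - (w i * lam i ^ k) * (w j * lam j ^ a) := by
      intro i j
      ring
    simp only [e1, Finset.sum_sub_distrib, Finset.sum_add_distrib, ← Finset.mul_sum,
      ← Finset.sum_mul]
    ring
  linarith

theorem trace_mul_vecMulVec_mul (A B : Matrix E E ℝ) (v : E → ℝ) :
    (A * vecMulVec v v * B).trace = v ⬝ᵥ (B * A) *ᵥ v := by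
  rw [trace_mul_comm, ← Matrix.mul_assoc, mul_vecMulVec, trace_vecMulVec, dotProduct_comm]

/-- Trace of powers under a rank one perturbation of a positive definite matrix. -/
theorem trace_pow_add_rankOne_le {C : Matrix E E ℝ} (hC : Cᵀ = C) {s : ℝ} (hs0 : 0 < s)
    (hs : ∀ x, s * (x ⬝ᵥ x) ≤ x ⬝ᵥ C *ᵥ x) {v : E → ℝ} {μ : ℝ} (hv : v ⬝ᵥ v ≤ μ) (p : ℕ) :
    ∃ M : ℝ, 0 ≤ M ∧ ∀ d : ℝ, |d| ≤ 1 → ((C + d • vecMulVec v v) ^ p).trace ≤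
      (C ^ p).trace + (d + ((1 + μ / s) ^ p - 1)) * M := by
  obtain ⟨lam, w, hlam, hw, hmom⟩ := exists_spectral_weights hC hs v
  set m : ℕ → ℝ := fun k => ∑ i, w i * lam i ^ k with hm
  have hl0 : ∀ i, 0 ≤ lam i := fun i => hs0.le.trans (hlam i)
  have hm0 : ∀ k, 0 ≤ m k := fun k =>
    Finset.sum_nonneg fun i _ => mul_nonneg (hw i) (pow_nonneg (hl0 i) k)
  have hμ0 : 0 ≤ μ := (by
    have := hmom 0
    simp only [pow_zero, one_mulVec, mul_one] at this
    rw [this] at hv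
    exact (Finset.sum_nonneg fun i _ => hw i).trans hv)
  set θ := μ / s with hθ
  have hθ0 : 0 ≤ θ := div_nonneg hμ0 hs0.le
  have hms : ∀ k, s * m k ≤ m (k + 1) := fun k => by
    simp only [hm, Finset.mul_sum]
    refine Finset.sum_le_sum fun i _ => ?_
    have := mul_le_mul_of_nonneg_left (hlam i) (mul_nonneg (hw i) (pow_nonneg (hl0 i) k))
    calc s * (w i * lam i ^ k) = w i * lam i ^ k * s := by ring
      _ ≤ _ := this
      _ = _ := by ring
  have hmm : ∀ a k, m a * m k ≤ θ * m (a + k + 1) := fun a k => by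
    have h1 := moment_mul_moment_le hl0 hw a k
    have h2 : ∑ i, w i ≤ μ := by
      have := hmom 0
      simp only [pow_zero, one_mulVec, mul_one] at this
      rwa [← this]
    calc m a * m k ≤ (∑ i, w i) * m (a + k) := h1
      _ ≤ μ * m (a + k) := mul_le_mul_of_nonneg_right h2 (hm0 _)
      _ = θ * (s * m (a + k)) := by rw [hθ]; field_simp
      _ ≤ _ := mul_le_mul_of_nonneg_left (hms _) hθ0
  refine ⟨p * m (p - 1), mul_nonneg (Nat.cast_nonneg _) (hm0 _), fun d hd => ?_⟩
  set D := C + d • vecMulVec v v with hD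
  set f : ℕ → ℕ → ℝ := fun a k => v ⬝ᵥ (C ^ a * D ^ k) *ᵥ v with hf
  have hrec : ∀ a k, f a (k + 1) = f (a + 1) k + d * (m a * f 0 k) := fun a k => by
    have : C ^ a * D ^ (k + 1) = C ^ (a + 1) * D ^ k + d • (C ^ a * vecMulVec v v * D ^ k) := by
      rw [pow_succ' D, pow_succ, ← Matrix.mul_assoc]
      conv_lhs => rw [hD, mul_add, ← hD, mul_smul_comm, add_mul, smul_mul_assoc]
    simp only [hf]
    rw [this, add_mulVec, dotProduct_add, smul_mulVec, dotProduct_smul, smul_eq_mul]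
    congr 2
    rw [mul_vecMulVec, vecMulVec_mul, vecMulVec_mulVec, dotProduct_smul, hmom a]
    simp [hm, pow_zero, dotProduct_mulVec]
  have hfb : ∀ k a, |f a k - m (a + k)| ≤ ((1 + θ) ^ k - 1) * m (a + k) := by
    intro k
    induction k with
    | zero =>
      intro a
      have : f a 0 = m a := by simp only [hf, pow_zero, mul_one]; exact hmom a
      simp [this]
    | succ k ih =>
      intro a
      have h1 := ih (a + 1)
      have h2 := ih 0
      have e1 : a + 1 + k = a + (k + 1) := by omega
      have e2 : a + k + 1 = a + (k + 1) := by omega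
      rw [e1] at h1
      rw [zero_add] at h2
      have h3 := hmm a k
      rw [e2] at h3
      have hp : (1 : ℝ) ≤ (1 + θ) ^ k := one_le_pow₀ (by linarith)
      have h4 : |f 0 k| ≤ (1 + θ) ^ k * m k := by
        have := abs_sub_abs_le_abs_sub (f 0 k) (m k)
        rw [abs_of_nonneg (hm0 k)] at this
        nlinarith
      have h5 : |d * (m a * f 0 k)| ≤ (1 + θ) ^ k * (θ * m (a + (k + 1))) := by
        rw [abs_mul, abs_mul, abs_of_nonneg (hm0 a)]
        calc |d| * (m a * |f 0 k|) ≤ 1 * (m a * ((1 + θ) ^ k * m k)) := by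
              have := hm0 a
              gcongr
          _ = (1 + θ) ^ k * (m a * m k) := by ring
          _ ≤ _ := by gcongr
      rw [hrec]
      calc |f (a + 1) k + d * (m a * f 0 k) - m (a + (k + 1))|
          = |(f (a + 1) k - m (a + (k + 1))) + d * (m a * f 0 k)| := by ring_nf
        _ ≤ _ := abs_add_le _ _
        _ ≤ ((1 + θ) ^ k - 1) * m (a + (k + 1)) + (1 + θ) ^ k * (θ * m (a + (k + 1))) :=
          add_le_add h1 h5
        _ = _ := by ring
  have htel : (D ^ p).trace - (C ^ p).trace = ∑ k ∈ Finset.range p, d * f (p - 1 - k) k := by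
    have hgen : ∀ q ≤ p, (C ^ (p - q) * D ^ q).trace - (C ^ p).trace =
        ∑ k ∈ Finset.range q, d * f (p - 1 - k) k := by
      intro q
      induction q with
      | zero => simp
      | succ q ih =>
        intro hq
        rw [Finset.sum_range_succ, ← ih (by omega)]
        have e1 : p - q = (p - (q + 1)) + 1 := by omega
        have e2 : p - 1 - q = p - (q + 1) := by omega
        have : C ^ (p - (q + 1)) * D ^ (q + 1) = C ^ (p - q) * D ^ q +
            d • (C ^ (p - (q + 1)) * vecMulVec v v * D ^ q) := by
          rw [pow_succ' D, e1, pow_succ, ← Matrix.mul_assoc]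
          conv_lhs => rw [hD, mul_add, ← hD, mul_smul_comm, add_mul, smul_mul_assoc]
        rw [this, trace_add, trace_smul, smul_eq_mul, e2, trace_mul_vecMulVec_mul]
        have : v ⬝ᵥ (D ^ q * C ^ (p - (q + 1))) *ᵥ v = f (p - (q + 1)) q := by
          have hDt : Dᵀ = D := by
            rw [hD, transpose_add, hC, transpose_smul, transpose_vecMulVec]
          simp only [hf]
          rw [dotProduct_mulVec, ← mulVec_transpose, transpose_mul, transpose_pow, transpose_pow,
            hC, hDt, dotProduct_comm]
        rw [this]
        ring
    simpa using hgen p le_rfl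
  have hterm : ∀ k ∈ Finset.range p, d * f (p - 1 - k) k ≤
      (d + ((1 + θ) ^ p - 1)) * m (p - 1) := fun k hk => by
    have hk := Finset.mem_range.1 hk
    have h := hfb k (p - 1 - k)
    have e : p - 1 - k + k = p - 1 := by omega
    rw [e] at h
    have hp : (1 + θ) ^ k ≤ (1 + θ) ^ p := pow_le_pow_right₀ (by linarith) hk.le
    have hk1 : (1 : ℝ) ≤ (1 + θ) ^ k := one_le_pow₀ (by linarith)
    have h1 : d * (f (p - 1 - k) k - m (p - 1)) ≤ ((1 + θ) ^ p - 1) * m (p - 1) := by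
      refine (le_abs_self _).trans ?_
      rw [abs_mul]
      calc |d| * |f (p - 1 - k) k - m (p - 1)| ≤ 1 * (((1 + θ) ^ k - 1) * m (p - 1)) := by
            gcongr
        _ ≤ _ := by
            rw [one_mul]
            exact mul_le_mul_of_nonneg_right (by linarith) (hm0 _)
    linarith
  have := Finset.sum_le_card_nsmul _ _ _ hterm
  rw [Finset.card_range, nsmul_eq_mul] at this
  linarith

variable {α : Type*} [Fintype α] [Nonempty α]

theorem dotProduct_projection_diagonal {P : Matrix E E ℝ} (hPs : Pᵀ = P) (c x : E → ℝ) (s : ℝ) :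
    x ⬝ᵥ (P * diagonal c * P + s • (1 : Matrix E E ℝ)) *ᵥ x =
      ∑ e, c e * (P *ᵥ x) e ^ 2 + s * (x ⬝ᵥ x) := by
  rw [add_mulVec, dotProduct_add, smul_mulVec, one_mulVec, dotProduct_smul, smul_eq_mul]
  congr 1
  have := dotProduct_conj_diagonal P c x
  rw [hPs] at this
  rw [this]
  exact Finset.sum_congr rfl fun i _ => by ring

theorem projection_row_dotProduct {P : Matrix E E ℝ} (hPs : Pᵀ = P) (hPP : P * P = P)
    (e f : E) : P e ⬝ᵥ P f = P e f := by
  have h : ∀ i, P f i = P i f := fun i => by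
    conv_lhs => rw [← hPs, transpose_apply]
  calc P e ⬝ᵥ P f = ∑ i, P e i * P i f := Finset.sum_congr rfl fun i _ => by rw [h]
    _ = (P * P) e f := (mul_apply ..).symm
    _ = P e f := by rw [hPP]

theorem projection_dotProduct_self {P : Matrix E E ℝ} (hPs : Pᵀ = P) (hPP : P * P = P)
    (x : E → ℝ) : (P *ᵥ x) ⬝ᵥ (P *ᵥ x) = x ⬝ᵥ (P *ᵥ x) := by
  rw [dotProduct_mulVec, ← mulVec_transpose, hPs, mulVec_mulVec, hPP, dotProduct_comm]

theorem projection_dotProduct_le {P : Matrix E E ℝ} (hPs : Pᵀ = P) (hPP : P * P = P)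
    (x : E → ℝ) : (P *ᵥ x) ⬝ᵥ (P *ᵥ x) ≤ x ⬝ᵥ x := by
  have h : 0 ≤ (x - P *ᵥ x) ⬝ᵥ (x - P *ᵥ x) := Finset.sum_nonneg fun i _ => mul_self_nonneg _
  rw [sub_dotProduct, dotProduct_sub, dotProduct_sub, dotProduct_comm (P *ᵥ x) x] at h
  linarith [projection_dotProduct_self hPs hPP x]

theorem avg_trace_pow_le {P : Matrix E E ℝ} (hPs : Pᵀ = P) (hPP : P * P = P)
    {μ : ℝ} (hμ : ∀ e, P e e ≤ μ) {δ : α → ℝ} (hδ0 : ∀ a, 0 ≤ δ a) (hδ1 : ∀ a, δ a ≤ 1)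
    {t η s : ℝ} (ht : 0 ≤ t) (ht1 : t ≤ 1) (hδt : avg δ + η ≤ t) (hs : 0 < s) {p : ℕ}
    (hp : (1 + μ / s) ^ p ≤ 1 + η) (S : Finset E) :
    avg (fun x : E → α => ((P * diagonal (fun e => if e ∈ S then δ (x e) else t) * P +
      s • (1 : Matrix E E ℝ)) ^ p).trace) ≤
      ((P * diagonal (fun _ => t) * P + s • (1 : Matrix E E ℝ)) ^ p).trace := by
  induction S using Finset.induction_on with
  | empty => simpa using (avg_const (α := E → α) _).le
  | insert e₀ S he ih =>
    rw [avg_resample (β := α) (fun x a => Function.update x e₀ a) (fun x => x e₀) (by simp)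
      (by simp)]
    refine le_trans (avg_mono fun x => ?_) ih
    set c : E → ℝ := fun e => if e ∈ S then δ (x e) else t with hc
    set C := P * diagonal c * P + s • (1 : Matrix E E ℝ) with hCdef
    have hc0 : ∀ e, 0 ≤ c e := fun e => by
      simp only [hc]
      split_ifs
      exacts [hδ0 _, ht]
    have hC : Cᵀ = C := by
      rw [hCdef, transpose_add, transpose_smul, transpose_one, transpose_mul, transpose_mul, hPs,
        diagonal_transpose, Matrix.mul_assoc]
    have hlow : ∀ x, s * (x ⬝ᵥ x) ≤ x ⬝ᵥ C *ᵥ x := fun y => by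
      rw [hCdef, dotProduct_projection_diagonal hPs]
      have := Finset.sum_nonneg fun e (_ : e ∈ Finset.univ) =>
        mul_nonneg (hc0 e) (sq_nonneg ((P *ᵥ y) e))
      linarith
    have hv : (P e₀) ⬝ᵥ (P e₀) ≤ μ := (projection_row_dotProduct hPs hPP e₀ e₀).trans_le (hμ e₀)
    obtain ⟨M, hM, hstep⟩ := trace_pow_add_rankOne_le hC hs hlow hv p
    have hupd : ∀ a, P * diagonal (fun e => if e ∈ insert e₀ S then
        δ (Function.update x e₀ a e) else t) * P + s • (1 : Matrix E E ℝ) =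
        C + (δ a - t) • vecMulVec (P e₀) (P e₀) := fun a => by
      have h1 : (fun e => if e ∈ insert e₀ S then δ (Function.update x e₀ a e) else t) =
          c + (δ a - t) • Pi.single e₀ (1 : ℝ) := by
        ext e
        by_cases h : e = e₀
        · subst h
          simp [hc, he]
        · simp [hc, h]
      have h2 : P * diagonal (Pi.single e₀ (1 : ℝ)) * P = vecMulVec (P e₀) (P e₀) := by
        ext i j
        rw [mul_apply, vecMulVec_apply]
        simp only [mul_diagonal, Pi.single_apply]
        simp only [mul_ite, mul_one, mul_zero, ite_mul, zero_mul, Finset.sum_ite_eq',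
          Finset.mem_univ, if_true]
        congr 1
        conv_lhs => rw [← hPs, transpose_apply]
      have h3 : diagonal (c + (δ a - t) • Pi.single e₀ (1 : ℝ)) =
          diagonal c + (δ a - t) • diagonal (Pi.single e₀ (1 : ℝ)) := by
        rw [← diagonal_smul]
        exact (diagonal_add _ _).symm
      rw [h1, h3, mul_add, add_mul, mul_smul_comm, smul_mul_assoc, h2, hCdef]
      abel
    simp only [hupd]
    have hd : ∀ a, |δ a - t| ≤ 1 := fun a => abs_le.2 ⟨by linarith [hδ0 a], by linarith [hδ1 a]⟩
    refine (avg_mono fun a => hstep (δ a - t) (hd a)).trans ?_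
    have : ∀ a, (C ^ p).trace + (δ a - t + ((1 + μ / s) ^ p - 1)) * M =
        (C ^ p).trace + (-t + ((1 + μ / s) ^ p - 1)) * M + M * δ a := fun a => by ring
    simp only [this]
    rw [avg_add, avg_const, avg_const_mul]
    nlinarith

/-- Chernoff's bound for a random coordinate compression of a projection. -/
theorem projection_chernoff {P : Matrix E E ℝ} (hPs : Pᵀ = P) (hPP : P * P = P)
    {μ : ℝ} (hμ : ∀ e, P e e ≤ μ) {δ : α → ℝ} (hδ0 : ∀ a, 0 ≤ δ a) (hδ1 : ∀ a, δ a ≤ 1)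
    {t η s σ : ℝ} (ht : 0 ≤ t) (ht1 : t ≤ 1) (hδt : avg δ + η ≤ t) (hs : 0 < s) (hσ : 0 ≤ σ)
    {p : ℕ} (hp : (1 + μ / s) ^ p ≤ 1 + η) :
    unifProb (fun x : E → α => ¬ ∀ z : E → ℝ,
      ∑ e, δ (x e) * (P *ᵥ z) e ^ 2 ≤ σ * (z ⬝ᵥ z)) ≤
      Fintype.card E * ((t + s) / (σ + s)) ^ p := by
  have hlow : ∀ c : E → ℝ, (∀ e, 0 ≤ c e) → ∀ x, s * (x ⬝ᵥ x) ≤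
      x ⬝ᵥ (P * diagonal c * P + s • (1 : Matrix E E ℝ)) *ᵥ x := fun c hc y => by
    rw [dotProduct_projection_diagonal hPs]
    have := Finset.sum_nonneg fun e (_ : e ∈ Finset.univ) =>
      mul_nonneg (hc e) (sq_nonneg ((P *ᵥ y) e))
    linarith
  have hsymm : ∀ c : E → ℝ, (P * diagonal c * P + s • (1 : Matrix E E ℝ))ᵀ =
      P * diagonal c * P + s • (1 : Matrix E E ℝ) := fun c => by
    rw [transpose_add, transpose_smul, transpose_one, transpose_mul, transpose_mul, hPs,
      diagonal_transpose, Matrix.mul_assoc]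
  have hpos : 0 < (σ + s) ^ p := by positivity
  have h := avg_trace_pow_le hPs hPP hμ hδ0 hδ1 ht ht1 hδt hs hp Finset.univ
  simp only [Finset.mem_univ, if_true] at h
  have hinit := (trace_pow_bounds (t := t + s) (hsymm fun _ => t) hs.le (hlow _ fun _ => ht) p).2.1
    (fun x => by
      rw [dotProduct_projection_diagonal hPs, ← Finset.mul_sum]
      have h1 := projection_dotProduct_le hPs hPP x
      simp only [dotProduct, ← sq] at h1 ⊢
      nlinarith)
  rw [div_pow, mul_div_assoc', div_eq_inv_mul]
  refine le_trans ?_ (mul_le_mul_of_nonneg_left (h.trans hinit) (inv_nonneg.2 hpos.le))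
  rw [← avg_const_mul]
  have htr : ∀ x : E → α, ((P * diagonal (fun e => δ (x e)) * P + s • (1 : Matrix E E ℝ)) ^ p).trace
      < (σ + s) ^ p → ∀ z : E → ℝ, ∑ e, δ (x e) * (P *ᵥ z) e ^ 2 ≤ σ * (z ⬝ᵥ z) := fun x hx z => by
    have := (trace_pow_bounds (hsymm _) hs.le (hlow _ fun e => hδ0 (x e)) p).2.2 (by positivity) hx z
    rw [dotProduct_projection_diagonal hPs] at this
    linarith
  refine unifProb_le_avg _ (fun x => mul_nonneg (inv_nonneg.2 hpos.le) ?_) fun x hx => ?_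
  · exact (trace_pow_bounds (t := 0) (hsymm _) hs.le (hlow _ fun e => hδ0 (x e)) p).1
  · rw [← div_eq_inv_mul, le_div_iff₀ hpos, one_mul]
    by_contra! hcon
    exact hx (htr x hcon)

end ProjectionChernoff

section SpectralNet

open scoped Matrix.Norms.L2Operator

theorem norm_toLp_eq_sqrt {ι : Type*} [Fintype ι] (x : ι → ℝ) :
    ‖WithLp.toLp 2 x‖ = Real.sqrt (x ⬝ᵥ x) := by
  rw [EuclideanSpace.norm_eq]
  congr 1
  exact Finset.sum_congr rfl fun i _ => by simp [sq]

theorem dotProduct_self_nonneg' {ι : Type*} [Fintype ι] (x : ι → ℝ) : 0 ≤ x ⬝ᵥ x :=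
  Finset.sum_nonneg fun i _ => mul_self_nonneg (x i)

theorem dotProduct_le_sqrt_mul_sqrt {ι : Type*} [Fintype ι] (x y : ι → ℝ) :
    x ⬝ᵥ y ≤ Real.sqrt (x ⬝ᵥ x) * Real.sqrt (y ⬝ᵥ y) := by
  have := Real.sum_mul_le_sqrt_mul_sqrt Finset.univ x y
  simpa [dotProduct, sq] using this

variable {ι κ : Type*} [Fintype ι] [Fintype κ] [DecidableEq ι] [DecidableEq κ]

theorem sqrt_mulVec_le_norm (M : Matrix ι κ ℝ) (x : κ → ℝ) :
    Real.sqrt ((M *ᵥ x) ⬝ᵥ (M *ᵥ x)) ≤ ‖M‖ * Real.sqrt (x ⬝ᵥ x) := by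
  rw [← norm_toLp_eq_sqrt, ← norm_toLp_eq_sqrt]
  exact l2_opNorm_mulVec M (WithLp.toLp 2 x)

theorem dotProduct_mulVec_le_norm (M : Matrix ι κ ℝ) (x : κ → ℝ) (y : ι → ℝ) :
    y ⬝ᵥ M *ᵥ x ≤ ‖M‖ * Real.sqrt (x ⬝ᵥ x) * Real.sqrt (y ⬝ᵥ y) := by
  refine (dotProduct_le_sqrt_mul_sqrt _ _).trans ?_
  rw [mul_comm]
  exact mul_le_mul_of_nonneg_right (sqrt_mulVec_le_norm M x) (Real.sqrt_nonneg _)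

theorem norm_le_of_sqrt_mulVec_le {M : Matrix ι κ ℝ} {b : ℝ} (hb : 0 ≤ b)
    (h : ∀ x : κ → ℝ, Real.sqrt ((M *ᵥ x) ⬝ᵥ (M *ᵥ x)) ≤ b * Real.sqrt (x ⬝ᵥ x)) : ‖M‖ ≤ b := by
  rw [l2_opNorm_def]
  refine ContinuousLinearMap.opNorm_le_bound _ hb fun x => ?_
  have := h x.ofLp
  rw [← norm_toLp_eq_sqrt, ← norm_toLp_eq_sqrt] at this
  exact this

theorem norm_le_of_dotProduct_le {M : Matrix ι κ ℝ} {b : ℝ} (hb : 0 ≤ b)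
    (h : ∀ (x : κ → ℝ) (y : ι → ℝ), x ⬝ᵥ x ≤ 1 → y ⬝ᵥ y ≤ 1 → y ⬝ᵥ M *ᵥ x ≤ b) : ‖M‖ ≤ b := by
  refine norm_le_of_sqrt_mulVec_le hb fun x => ?_
  set u := Real.sqrt ((M *ᵥ x) ⬝ᵥ (M *ᵥ x)) with hu
  set w := Real.sqrt (x ⬝ᵥ x) with hw
  have hu2 : u * u = (M *ᵥ x) ⬝ᵥ (M *ᵥ x) := Real.mul_self_sqrt (dotProduct_self_nonneg' _)
  have hw2 : w * w = x ⬝ᵥ x := Real.mul_self_sqrt (dotProduct_self_nonneg' _)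
  rcases (Real.sqrt_nonneg ((M *ᵥ x) ⬝ᵥ (M *ᵥ x))).eq_or_lt with h0 | h0
  · rw [hu, ← h0]
    exact mul_nonneg hb (Real.sqrt_nonneg _)
  rw [← hu] at h0
  have hw0 : 0 < w := by
    refine (Real.sqrt_nonneg _).lt_of_ne fun h' => ?_
    have : x = 0 := dotProduct_self_eq_zero.1 (by rw [← hw2, hw, ← h']; simp)
    rw [this] at hu
    simp at hu
    linarith
  have := h (w⁻¹ • x) (u⁻¹ • (M *ᵥ x))
    (by simp only [smul_dotProduct, dotProduct_smul, smul_eq_mul, ← hw2]; field_simp; exact le_rfl)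
    (by simp only [smul_dotProduct, dotProduct_smul, smul_eq_mul, ← hu2]; field_simp; exact le_rfl)
  rw [mulVec_smul, smul_dotProduct, dotProduct_smul, ← hu2, smul_eq_mul, smul_eq_mul] at this
  have e : u⁻¹ * (w⁻¹ * (u * u)) = u / w := by field_simp
  rwa [e, div_le_iff₀ hw0] at this

theorem sum_Icc_two_pow_neg_natAbs (B : ℕ) :
    ∑ k ∈ Finset.Icc (-(B : ℤ)) B, (1 / 2 : ℝ) ^ k.natAbs = 3 - 2 * (1 / 2) ^ B := by
  induction B with
  | zero => simp; norm_num
  | succ B ih =>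
    have h : Finset.Icc (-((B + 1 : ℕ) : ℤ)) (B + 1 : ℕ) =
        insert ((B + 1 : ℕ) : ℤ) (insert (-((B + 1 : ℕ) : ℤ)) (Finset.Icc (-(B : ℤ)) B)) := by
      ext k
      simp only [Finset.mem_Icc, Finset.mem_insert]
      omega
    rw [h, Finset.sum_insert (by simp; omega), Finset.sum_insert (by simp), ih, Int.natAbs_neg,
      Int.natAbs_natCast, pow_succ]
    ring

theorem sum_Icc_exp_neg_sq_le (B : ℕ) :
    ∑ k ∈ Finset.Icc (-(B : ℤ)) B, Real.exp (-(k : ℝ) ^ 2) ≤ 3 := by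
  refine le_trans (Finset.sum_le_sum fun k _ => ?_)
    ((sum_Icc_two_pow_neg_natAbs B).le.trans (by linarith [pow_pos (one_half_pos (α := ℝ)) B]))
  have h1 : Real.exp (-1) ≤ 1 / 2 := by
    rw [Real.exp_neg, one_div]
    exact inv_anti₀ (by norm_num) (by linarith [Real.add_one_le_exp 1])
  have h2 : (k.natAbs : ℝ) ≤ (k : ℝ) ^ 2 := by
    have : (k.natAbs : ℤ) ≤ k ^ 2 := by
      rw [← Int.natAbs_sq]
      exact_mod_cast Nat.le_self_pow two_ne_zero _
    have h3 : ((k.natAbs : ℤ) : ℝ) ≤ ((k ^ 2 : ℤ) : ℝ) := Int.cast_le.2 this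
    rwa [Int.cast_pow, Int.cast_natCast] at h3
  calc Real.exp (-(k : ℝ) ^ 2) ≤ Real.exp (k.natAbs * (-1)) := Real.exp_le_exp.2 (by linarith)
    _ = Real.exp (-1) ^ k.natAbs := Real.exp_nat_mul _ _
    _ ≤ _ := pow_le_pow_left₀ (Real.exp_pos _).le h1 _

/-- Integer vectors with squared length at most `R`. -/
noncomputable def integerNet (n R : ℕ) : Finset (Fin n → ℤ) :=
  (Fintype.piFinset fun _ => Finset.Icc (-(R : ℤ)) R).filter fun k => ∑ i, k i ^ 2 ≤ R

theorem mem_integerNet {n R : ℕ} {k : Fin n → ℤ} : k ∈ integerNet n R ↔ ∑ i, k i ^ 2 ≤ R := by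
  simp only [integerNet, Finset.mem_filter, Fintype.mem_piFinset, Finset.mem_Icc,
    and_iff_right_iff_imp]
  intro h i
  have h1 : k i ^ 2 ≤ R := (Finset.single_le_sum (fun j _ => sq_nonneg (k j))
    (Finset.mem_univ i)).trans h
  constructor <;> nlinarith

theorem card_integerNet_le (n R : ℕ) : ((integerNet n R).card : ℝ) ≤ Real.exp (R + 2 * n) := by
  have h3 : (3 : ℝ) ≤ Real.exp 2 := by linarith [Real.add_one_le_exp 2]
  calc ((integerNet n R).card : ℝ) = ∑ k ∈ integerNet n R, (1 : ℝ) := by simp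
    _ ≤ ∑ k ∈ integerNet n R, Real.exp R * ∏ i, Real.exp (-(k i : ℝ) ^ 2) := by
        refine Finset.sum_le_sum fun k hk => ?_
        rw [← Real.exp_sum, ← Real.exp_add]
        refine Real.one_le_exp ?_
        have : ∑ i, (k i : ℝ) ^ 2 ≤ R := by exact_mod_cast mem_integerNet.1 hk
        rw [Finset.sum_neg_distrib]
        linarith
    _ ≤ ∑ k ∈ Fintype.piFinset fun _ : Fin n => Finset.Icc (-(R : ℤ)) R,
          Real.exp R * ∏ i, Real.exp (-(k i : ℝ) ^ 2) :=
        Finset.sum_le_sum_of_subset_of_nonneg (Finset.filter_subset _ _)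
          fun _ _ _ => by positivity
    _ = Real.exp R * ∏ _i : Fin n, ∑ k ∈ Finset.Icc (-(R : ℤ)) R, Real.exp (-(k : ℝ) ^ 2) := by
        rw [← Finset.mul_sum, Finset.prod_univ_sum]
    _ ≤ Real.exp R * Real.exp 2 ^ n := by
        rw [Finset.prod_const, Finset.card_univ, Fintype.card_fin]
        refine mul_le_mul_of_nonneg_left (pow_le_pow_left₀ ?_ ?_ n) (Real.exp_pos _).le
        · exact Finset.sum_nonneg fun _ _ => (Real.exp_pos _).le
        · exact (sum_Icc_exp_neg_sq_le R).trans h3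
    _ = _ := by rw [← Real.exp_nat_mul, ← Real.exp_add]; ring_nf

theorem exists_int_truncation (t : ℝ) : ∃ k : ℤ, (k : ℝ) ^ 2 ≤ t ^ 2 ∧ (t - k) ^ 2 ≤ 1 := by
  rcases le_total 0 t with h | h
  · refine ⟨⌊t⌋, ?_, ?_⟩
    · have h0 : (0 : ℝ) ≤ ⌊t⌋ := by exact_mod_cast Int.floor_nonneg.2 h
      exact pow_le_pow_left₀ h0 (Int.floor_le t) 2
    · nlinarith [Int.floor_le t, Int.lt_floor_add_one t]
  · refine ⟨⌈t⌉, ?_, ?_⟩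
    · have h0 : (⌈t⌉ : ℝ) ≤ 0 := by exact_mod_cast Int.ceil_le.2 (by simpa using h)
      nlinarith [Int.le_ceil t]
    · nlinarith [Int.le_ceil t, Int.ceil_lt_add_one t]

theorem exists_net_point {n N : ℕ} (hn : n ≤ N) (hN : 0 < N) (x : Fin n → ℝ) (hx : x ⬝ᵥ x ≤ 1) :
    ∃ k ∈ integerNet n (16 * N), ∃ x' : Fin n → ℝ,
      x' = (fun i => (k i : ℝ) / (4 * Real.sqrt N)) ∧ x' ⬝ᵥ x' ≤ 1 ∧
        Real.sqrt ((x - x') ⬝ᵥ (x - x')) ≤ 1 / 4 := by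
  set t := 4 * Real.sqrt N with ht
  have hN' : (0 : ℝ) < N := by exact_mod_cast hN
  have hs : Real.sqrt N * Real.sqrt N = N := Real.mul_self_sqrt hN'.le
  have ht0 : 0 < t := by positivity
  have ht2 : t ^ 2 = 16 * N := by rw [ht]; nlinarith
  choose k hk1 hk2 using fun i => exists_int_truncation (t * x i)
  have hsum : ∑ i, (k i : ℝ) ^ 2 ≤ t ^ 2 := by
    calc ∑ i, (k i : ℝ) ^ 2 ≤ ∑ i, (t * x i) ^ 2 := Finset.sum_le_sum fun i _ => hk1 i
      _ = t ^ 2 * (x ⬝ᵥ x) := by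
        rw [dotProduct, Finset.mul_sum]
        exact Finset.sum_congr rfl fun i _ => by ring
      _ ≤ t ^ 2 := by nlinarith [sq_nonneg t]
  refine ⟨k, mem_integerNet.2 ?_, _, rfl, ?_, ?_⟩
  · rw [ht2] at hsum
    exact_mod_cast hsum
  · calc _ = (∑ i, (k i : ℝ) ^ 2) / t ^ 2 := by
          rw [dotProduct, Finset.sum_div]
          exact Finset.sum_congr rfl fun i _ => by ring
      _ ≤ 1 := div_le_one_of_le₀ hsum (sq_nonneg t)
  · rw [show (1 / 4 : ℝ) = Real.sqrt (1 / 16) by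
      rw [show (1 / 16 : ℝ) = (1 / 4) ^ 2 by norm_num, Real.sqrt_sq (by norm_num)]]
    refine Real.sqrt_le_sqrt ?_
    calc _ = (∑ i, (t * x i - k i) ^ 2) / t ^ 2 := by
          rw [dotProduct, Finset.sum_div]
          refine Finset.sum_congr rfl fun i _ => ?_
          simp only [Pi.sub_apply]
          field_simp
      _ ≤ n / t ^ 2 := by
          gcongr
          calc _ ≤ ∑ _i : Fin n, (1 : ℝ) := Finset.sum_le_sum fun i _ => hk2 i
            _ = n := by simp
      _ ≤ 1 / 16 := by
          rw [ht2, div_le_div_iff₀ (by positivity) (by norm_num)]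
          have : (n : ℝ) ≤ N := by exact_mod_cast hn
          linarith

/-- A random matrix with sub-Gaussian bilinear forms has spectral norm of order `√n1`. -/
theorem unifProb_norm_le_of_subgaussian {α : Type*} [Fintype α] {n1 n2 : ℕ} (hn : n2 ≤ n1)
    (hn1 : 0 < n1) (M : α → Matrix (Fin n1) (Fin n2) ℝ) {κ : ℝ} (hκ : 0 < κ)
    (hM : ∀ (x : Fin n2 → ℝ) (y : Fin n1 → ℝ),
      avg (fun a => Real.exp (y ⬝ᵥ M a *ᵥ x)) ≤ Real.exp (κ * ((x ⬝ᵥ x) * (y ⬝ᵥ y)))) :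
    unifProb (fun a => ¬ ‖M a‖ ≤ 25 * Real.sqrt (κ * n1)) ≤ Real.exp (-n1) := by
  have hN : (0 : ℝ) < n1 := by exact_mod_cast hn1
  set q := Real.sqrt (κ * n1) with hq
  have hq0 : 0 < q := Real.sqrt_pos.2 (by positivity)
  have hq2 : q ^ 2 = κ * n1 := Real.sq_sqrt (by positivity)
  set b := 25 / 2 * q with hb
  have hb0 : 0 < b := by positivity
  set T := 4 * Real.sqrt n1 with hT
  let X : (Fin n2 → ℤ) → Fin n2 → ℝ := fun k i => (k i : ℝ) / T
  let Y : (Fin n1 → ℤ) → Fin n1 → ℝ := fun k i => (k i : ℝ) / T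
  let net := (integerNet n2 (16 * n1)) ×ˢ (integerNet n1 (16 * n1))
  have hstep : unifProb (fun a => ¬ ‖M a‖ ≤ 25 * q) ≤ unifProb (fun a => ∃ kl ∈ net,
      X kl.1 ⬝ᵥ X kl.1 ≤ 1 ∧ Y kl.2 ⬝ᵥ Y kl.2 ≤ 1 ∧ b < Y kl.2 ⬝ᵥ M a *ᵥ X kl.1) := by
    refine unifProb_mono fun a ha => ?_
    by_contra! hcon
    refine ha ?_
    have : ‖M a‖ ≤ b + ‖M a‖ / 2 := by
      refine norm_le_of_dotProduct_le (by positivity) fun x y hx hy => ?_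
      obtain ⟨k, hk, x', rfl, hx1, hx2⟩ := exists_net_point hn hn1 x hx
      obtain ⟨l, hl, y', rfl, hy1, hy2⟩ := exists_net_point le_rfl hn1 y hy
      have h1 := hcon (k, l) (Finset.mem_product.2 ⟨hk, hl⟩) hx1 hy1
      have h2 := dotProduct_mulVec_le_norm (M a) (x - X k) (Y l)
      have h3 := dotProduct_mulVec_le_norm (M a) x (y - Y l)
      have hs1 : Real.sqrt (Y l ⬝ᵥ Y l) ≤ 1 := Real.sqrt_le_one.2 hy1
      have hs2 : Real.sqrt (x ⬝ᵥ x) ≤ 1 := Real.sqrt_le_one.2 hx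
      have e : y ⬝ᵥ M a *ᵥ x = Y l ⬝ᵥ M a *ᵥ X k + Y l ⬝ᵥ M a *ᵥ (x - X k) +
          (y - Y l) ⬝ᵥ M a *ᵥ x := by
        rw [mulVec_sub, dotProduct_sub, sub_dotProduct]
        ring
      have h4 : ‖M a‖ * Real.sqrt ((x - X k) ⬝ᵥ (x - X k)) * Real.sqrt (Y l ⬝ᵥ Y l) ≤
          ‖M a‖ * (1 / 4) * 1 := by gcongr
      have h5 : ‖M a‖ * Real.sqrt (x ⬝ᵥ x) * Real.sqrt ((y - Y l) ⬝ᵥ (y - Y l)) ≤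
          ‖M a‖ * 1 * (1 / 4) := by gcongr
      simp only at h1
      linarith
    linarith
  refine hstep.trans ((unifProb_exists_le_card_mul net _ (p := Real.exp (-(39 * n1))) ?_).trans ?_)
  · rintro ⟨k, l⟩ -
    by_cases hX : X k ⬝ᵥ X k ≤ 1 ∧ Y l ⬝ᵥ Y l ≤ 1
    · set t := b / (2 * κ) with ht
      have ht0 : 0 < t := by positivity
      calc _ ≤ unifProb (fun a => t * b < (Y l ⬝ᵥ M a *ᵥ (t • X k))) :=
            unifProb_mono fun a ha => by
              rw [mulVec_smul, dotProduct_smul, smul_eq_mul]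
              exact mul_lt_mul_of_pos_left ha.2.2 ht0
        _ ≤ Real.exp (-(t * b)) * Real.exp (κ * (((t • X k) ⬝ᵥ (t • X k)) * (Y l ⬝ᵥ Y l))) :=
            (unifProb_lt_le_exp _ _).trans
              (mul_le_mul_of_nonneg_left (hM _ _) (Real.exp_pos _).le)
        _ ≤ _ := by
            rw [← Real.exp_add]
            refine Real.exp_le_exp.2 ?_
            have h1 : (t • X k) ⬝ᵥ (t • X k) = t ^ 2 * (X k ⬝ᵥ X k) := by
              simp only [smul_dotProduct, dotProduct_smul, smul_eq_mul]
              ring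
            have h2 : (X k ⬝ᵥ X k) * (Y l ⬝ᵥ Y l) ≤ 1 :=
              mul_le_one₀ hX.1 (dotProduct_self_nonneg' _) hX.2
            have h3 : κ * (((t • X k) ⬝ᵥ (t • X k)) * (Y l ⬝ᵥ Y l)) ≤ κ * t ^ 2 := by
              rw [h1, mul_assoc]
              exact mul_le_mul_of_nonneg_left (by nlinarith [sq_nonneg t]) hκ.le
            have h4 : κ * t ^ 2 - t * b = -(625 / 16) * n1 := by
              have : b ^ 2 = 625 / 4 * (κ * n1) := by rw [hb, mul_pow, hq2]; norm_num
              have e : κ * t ^ 2 - t * b = -(b ^ 2) / (4 * κ) := by rw [ht]; field_simp; ring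
              rw [e, this]
              field_simp
              norm_num
            nlinarith
    · refine le_trans (le_of_eq ?_) (Real.exp_pos _).le
      have : ∀ a : α, ¬ (X k ⬝ᵥ X k ≤ 1 ∧ Y l ⬝ᵥ Y l ≤ 1 ∧ b < Y l ⬝ᵥ M a *ᵥ X k) :=
        fun a ha => hX ⟨ha.1, ha.2.1⟩
      simp [unifProb, this]
  · have h1 := card_integerNet_le n2 (16 * n1)
    have h2 := card_integerNet_le n1 (16 * n1)
    have hn' : (n2 : ℝ) ≤ n1 := by exact_mod_cast hn
    rw [Finset.card_product]
    push_cast at h1 h2 ⊢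
    calc _ ≤ Real.exp (16 * n1 + 2 * n2) * Real.exp (16 * n1 + 2 * n1) *
          Real.exp (-(39 * n1)) := by gcongr
      _ ≤ _ := by
        rw [← Real.exp_add, ← Real.exp_add]
        exact Real.exp_le_exp.2 (by linarith)

end SpectralNet

section Deterministic

open scoped Matrix.Norms.L2Operator

variable {n1 n2 r : ℕ}

theorem minner_eq_trace (A B : Matrix (Fin n1) (Fin n2) ℝ) : minner A B = (Aᵀ * B).trace := by
  simp only [minner, trace, diag_apply, mul_apply, transpose_apply]
  exact Finset.sum_comm

theorem bddAbove_spec (A : Matrix (Fin n1) (Fin n2) ℝ) (c : ℝ)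
    (hc : c ∈ {c : ℝ | ∃ x : Fin n2 → ℝ, (∑ j, x j ^ 2) ≤ 1 ∧
      c = Real.sqrt (∑ i, (∑ j, A i j * x j) ^ 2)}) : c ≤ ‖A‖ := by
  obtain ⟨x, hx, rfl⟩ := hc
  have h := sqrt_mulVec_le_norm A x
  have h1 : Real.sqrt (x ⬝ᵥ x) ≤ 1 := by
    rw [Real.sqrt_le_one]
    simpa [dotProduct, sq] using hx
  calc _ = Real.sqrt ((A *ᵥ x) ⬝ᵥ (A *ᵥ x)) := by simp [dotProduct, mulVec, sq]
    _ ≤ ‖A‖ * 1 := h.trans (mul_le_mul_of_nonneg_left h1 (norm_nonneg _))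
    _ = _ := mul_one _

theorem spec_eq_norm (A : Matrix (Fin n1) (Fin n2) ℝ) : spec A = ‖A‖ := by
  refine le_antisymm (csSup_le ⟨_, 0, by simp, rfl⟩ (bddAbove_spec A)) ?_
  have hmem : ∀ x : Fin n2 → ℝ, x ⬝ᵥ x ≤ 1 → Real.sqrt ((A *ᵥ x) ⬝ᵥ (A *ᵥ x)) ≤ spec A := by
    intro x hx
    refine le_csSup ⟨‖A‖, fun c hc => bddAbove_spec A c hc⟩ ⟨x, ?_, ?_⟩
    · simpa [dotProduct, sq] using hx
    · simp [dotProduct, mulVec, sq]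
  refine norm_le_of_dotProduct_le ?_ fun x y hx hy => ?_
  · exact (Real.sqrt_nonneg _).trans (hmem 0 (by simp))
  · refine (dotProduct_le_sqrt_mul_sqrt _ _).trans ?_
    have h1 : Real.sqrt (y ⬝ᵥ y) ≤ 1 := Real.sqrt_le_one.2 hy
    calc _ ≤ 1 * Real.sqrt ((A *ᵥ x) ⬝ᵥ (A *ᵥ x)) :=
          mul_le_mul_of_nonneg_right h1 (Real.sqrt_nonneg _)
      _ ≤ spec A := by rw [one_mul]; exact hmem x hx

theorem abs_apply_le_norm (B : Matrix (Fin n1) (Fin n2) ℝ) (i : Fin n1) (j : Fin n2) :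
    |B i j| ≤ ‖B‖ := by
  have h1 : ∀ C : Matrix (Fin n1) (Fin n2) ℝ, C i j ≤ ‖C‖ := by
    intro C
    have := dotProduct_mulVec_le_norm C (Pi.single j 1) (Pi.single i 1)
    simpa using this
  refine abs_le.2 ⟨?_, h1 B⟩
  have := h1 (-B)
  rw [norm_neg, neg_apply] at this
  linarith

theorem minner_le_nuc (A : Matrix (Fin n1) (Fin n2) ℝ) {B : Matrix (Fin n1) (Fin n2) ℝ}
    (hB : ‖B‖ ≤ 1) : minner A B ≤ nuc A := by
  refine le_csSup ⟨l1norm A, ?_⟩ ⟨B, (spec_eq_norm B).le.trans hB, rfl⟩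
  rintro c ⟨C, hC, rfl⟩
  rw [spec_eq_norm] at hC
  refine Finset.sum_le_sum fun i _ => Finset.sum_le_sum fun j _ => ?_
  refine (le_abs_self _).trans ?_
  rw [abs_mul]
  exact mul_le_of_le_one_right (abs_nonneg _) ((abs_apply_le_norm C i j).trans hC)

theorem minner_factored (U : Matrix (Fin n1) (Fin r) ℝ) (V : Matrix (Fin n2) (Fin r) ℝ)
    (σ : Fin r → ℝ) (B : Matrix (Fin n1) (Fin n2) ℝ) :
    minner (U * diagonal σ * Vᵀ) B = ∑ k, σ k * (Uᵀ * B * V) k k := by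
  rw [minner_eq_trace, transpose_mul, transpose_mul, transpose_transpose, diagonal_transpose,
    Matrix.mul_assoc, trace_mul_comm, Matrix.mul_assoc, Matrix.mul_assoc]
  simp only [trace, diag_apply, diagonal_mul, Matrix.mul_assoc]

theorem orthonormal_column {U : Matrix (Fin n1) (Fin r) ℝ} (hU : Uᵀ * U = 1) (k : Fin r) :
    U.col k ⬝ᵥ U.col k = 1 := by
  have := congrFun (congrFun hU k) k
  rw [mul_apply, one_apply_eq] at this
  simpa [dotProduct] using this

theorem nuc_factored_le {U : Matrix (Fin n1) (Fin r) ℝ} {V : Matrix (Fin n2) (Fin r) ℝ}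
    {σ : Fin r → ℝ} (hU : Uᵀ * U = 1) (hV : Vᵀ * V = 1) (hσ : ∀ k, 0 < σ k) :
    nuc (U * diagonal σ * Vᵀ) ≤ ∑ k, σ k := by
  refine csSup_le ⟨_, 0, by rw [spec_eq_norm]; simp, rfl⟩ ?_
  rintro c ⟨B, hB, rfl⟩
  rw [spec_eq_norm] at hB
  rw [minner_factored]
  refine Finset.sum_le_sum fun k _ => mul_le_of_le_one_right (hσ k).le ?_
  have h := dotProduct_mulVec_le_norm B (V.col k) (U.col k)
  rw [orthonormal_column hU, orthonormal_column hV] at h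
  have e : (Uᵀ * B * V) k k = U.col k ⬝ᵥ B *ᵥ V.col k := by
    rw [Matrix.mul_assoc, mul_apply, dotProduct]
    refine Finset.sum_congr rfl fun i _ => ?_
    rw [mul_apply]
    rfl
  rw [e]
  refine h.trans ?_
  simpa using hB

theorem norm_add_le_one_of_orthogonal {U : Matrix (Fin n1) (Fin r) ℝ}
    {V : Matrix (Fin n2) (Fin r) ℝ} {G : Matrix (Fin n1) (Fin n2) ℝ} (hU : Uᵀ * U = 1)
    (hV : Vᵀ * V = 1) (hGU : Uᵀ * G = 0) (hGV : G * V = 0) (hG : ‖G‖ ≤ 1) :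
    ‖U * Vᵀ + G‖ ≤ 1 := by
  refine norm_le_of_sqrt_mulVec_le zero_le_one fun x => ?_
  rw [one_mul]
  refine Real.sqrt_le_sqrt ?_
  have hGU' : Gᵀ * U = 0 := by rw [← transpose_transpose U, ← transpose_mul, hGU, transpose_zero]
  have e1 : ((U * Vᵀ + G) *ᵥ x) ⬝ᵥ ((U * Vᵀ + G) *ᵥ x) =
      x ⬝ᵥ (V * Vᵀ) *ᵥ x + (G *ᵥ x) ⬝ᵥ (G *ᵥ x) := by
    have : (U * Vᵀ + G)ᵀ * (U * Vᵀ + G) = V * Vᵀ + Gᵀ * G := by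
      rw [transpose_add, transpose_mul, transpose_transpose, Matrix.add_mul, Matrix.mul_add,
        Matrix.mul_add, Matrix.mul_assoc V, ← Matrix.mul_assoc Uᵀ, hU, Matrix.one_mul,
        Matrix.mul_assoc V, hGU, ← Matrix.mul_assoc Gᵀ, hGU']
      simp
    rw [dotProduct_mulVec, vecMul_mulVec, ← dotProduct_mulVec, this, add_mulVec, dotProduct_add,
      ← mulVec_mulVec _ Gᵀ G, dotProduct_mulVec _ Gᵀ, vecMul_transpose]
  set y := x - (V * Vᵀ) *ᵥ x with hy
  have e2 : G *ᵥ x = G *ᵥ y := by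
    rw [hy, mulVec_sub, mulVec_mulVec, ← Matrix.mul_assoc, hGV]
    simp
  have hVV : (V * Vᵀ) * (V * Vᵀ) = V * Vᵀ := by
    rw [Matrix.mul_assoc, ← Matrix.mul_assoc Vᵀ, hV, Matrix.one_mul]
  have e3 : y ⬝ᵥ y = x ⬝ᵥ x - x ⬝ᵥ (V * Vᵀ) *ᵥ x := by
    have h1 : ((V * Vᵀ) *ᵥ x) ⬝ᵥ ((V * Vᵀ) *ᵥ x) = x ⬝ᵥ (V * Vᵀ) *ᵥ x := by
      rw [dotProduct_mulVec, vecMul_mulVec, ← dotProduct_mulVec, transpose_mul,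
        transpose_transpose, hVV]
    rw [hy, sub_dotProduct, dotProduct_sub, dotProduct_sub, h1,
      dotProduct_comm ((V * Vᵀ) *ᵥ x) x]
    ring
  have h4 : (G *ᵥ y) ⬝ᵥ (G *ᵥ y) ≤ y ⬝ᵥ y := by
    have h := (sqrt_mulVec_le_norm G y).trans
      (mul_le_of_le_one_left (Real.sqrt_nonneg _) hG)
    exact (Real.sqrt_le_sqrt_iff (dotProduct_self_nonneg' _)).1 h
  rw [e1, e2]
  linarith

/-- The matrix with the given family of entries. -/
def mat (z : Fin n1 × Fin n2 → ℝ) : Matrix (Fin n1) (Fin n2) ℝ := Matrix.of fun i j => z (i, j)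

/-- The family of entries of a matrix. -/
def entries (M : Matrix (Fin n1) (Fin n2) ℝ) : Fin n1 × Fin n2 → ℝ := fun e => M e.1 e.2

@[simp] theorem mat_entries (M : Matrix (Fin n1) (Fin n2) ℝ) : mat (entries M) = M := rfl

@[simp] theorem entries_mat (z : Fin n1 × Fin n2 → ℝ) : entries (mat z) = z := rfl

theorem minner_eq_dotProduct (A B : Matrix (Fin n1) (Fin n2) ℝ) :
    minner A B = entries A ⬝ᵥ entries B := by
  simp [minner, dotProduct, entries, Fintype.sum_prod_type]

theorem l1norm_eq_sum (A : Matrix (Fin n1) (Fin n2) ℝ) : l1norm A = ∑ e, |entries A e| := by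
  simp [l1norm, entries, Fintype.sum_prod_type]

theorem norm_mat_le (z : Fin n1 × Fin n2 → ℝ) : ‖mat z‖ ≤ Real.sqrt (z ⬝ᵥ z) := by
  refine norm_le_of_dotProduct_le (Real.sqrt_nonneg _) fun x y hx hy => ?_
  have e : y ⬝ᵥ mat z *ᵥ x = (fun e : Fin n1 × Fin n2 => y e.1 * x e.2) ⬝ᵥ z := by
    simp only [dotProduct, mulVec, mat, of_apply, Fintype.sum_prod_type, Finset.mul_sum]
    exact Finset.sum_congr rfl fun i _ => Finset.sum_congr rfl fun j _ => by ring
  have h2 : (fun e : Fin n1 × Fin n2 => y e.1 * x e.2) ⬝ᵥ (fun e => y e.1 * x e.2) =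
      (y ⬝ᵥ y) * (x ⬝ᵥ x) := by
    simp only [dotProduct, Fintype.sum_prod_type, Finset.sum_mul_sum]
    exact Finset.sum_congr rfl fun i _ => Finset.sum_congr rfl fun j _ => by ring
  rw [e]
  refine (dotProduct_le_sqrt_mul_sqrt _ _).trans
    (mul_le_of_le_one_left (Real.sqrt_nonneg _) (Real.sqrt_le_one.2 ?_))
  rw [h2]
  exact mul_le_one₀ hy (dotProduct_self_nonneg' _) hx

/-- The pair `(L0, S0)` is the unique pair with its sum and at most its objective value. -/
def StrictlyRecovered (lam : ℝ) (L0 S0 : Matrix (Fin n1) (Fin n2) ℝ) : Prop :=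
  ∀ L S : Matrix (Fin n1) (Fin n2) ℝ, L + S = L0 + S0 →
    nuc L + lam * l1norm S ≤ nuc L0 + lam * l1norm S0 → L = L0 ∧ S = S0

theorem frob_nonpos_iff (A : Matrix (Fin n1) (Fin n2) ℝ) : frob A ≤ 0 ↔ A = 0 := by
  constructor
  · intro h
    have h0 := (Real.sqrt_eq_zero (Finset.sum_nonneg fun i _ => Finset.sum_nonneg fun j _ =>
      sq_nonneg (A i j))).1 (le_antisymm h (Real.sqrt_nonneg _))
    rw [Finset.sum_eq_zero_iff_of_nonneg fun i _ => Finset.sum_nonneg fun j _ =>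
      sq_nonneg (A i j)] at h0
    ext i j
    have h1 := h0 i (Finset.mem_univ i)
    rw [Finset.sum_eq_zero_iff_of_nonneg fun j _ => sq_nonneg (A i j)] at h1
    simpa using h1 j (Finset.mem_univ j)
  · rintro rfl
    simp [frob]

theorem StrictlyRecovered.eq_of_isStablePCPMin {lam : ℝ} {L0 S0 Lh Sh : Matrix (Fin n1) (Fin n2) ℝ}
    (h : StrictlyRecovered lam L0 S0) (hmin : IsStablePCPMin (L0 + S0) lam 0 Lh Sh) :
    Lh = L0 ∧ Sh = S0 :=
  h Lh Sh (sub_eq_zero.1 ((frob_nonpos_iff _).1 hmin.1))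
    (hmin.2 L0 S0 ((frob_nonpos_iff _).2 (sub_self _)))

theorem StrictlyRecovered.mono {lam : ℝ} {L0 S0 S1 : Matrix (Fin n1) (Fin n2) ℝ} (hlam : 0 ≤ lam)
    (h : StrictlyRecovered lam L0 S0) (hS : ∀ i j, S1 i j = S0 i j ∨ S1 i j = 0) :
    StrictlyRecovered lam L0 S1 := by
  intro L S hLS hobj
  have h1 : l1norm (S + (S0 - S1)) ≤ l1norm S + l1norm (S0 - S1) := by
    simp only [l1norm_eq_sum, ← Finset.sum_add_distrib]
    exact Finset.sum_le_sum fun e _ => abs_add_le _ _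
  have h2 : l1norm S0 = l1norm S1 + l1norm (S0 - S1) := by
    simp only [l1norm_eq_sum, ← Finset.sum_add_distrib]
    refine Finset.sum_congr rfl fun e _ => ?_
    rcases hS e.1 e.2 with h | h <;> simp [entries, h]
  have h3 := h L (S + (S0 - S1)) (by rw [← add_assoc, hLS]; abel) (by
    have := mul_le_mul_of_nonneg_left h1 hlam
    rw [h2]
    linarith)
  refine ⟨h3.1, ?_⟩
  rw [h3.1] at hLS
  exact add_left_cancel hLS

theorem sqrt_dotProduct_self_add_le {ι : Type*} [Fintype ι] (x y : ι → ℝ) :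
    Real.sqrt ((x + y) ⬝ᵥ (x + y)) ≤ Real.sqrt (x ⬝ᵥ x) + Real.sqrt (y ⬝ᵥ y) := by
  simp only [← norm_toLp_eq_sqrt]
  exact norm_add_le _ _

theorem sqrt_dotProduct_self_le_sum_abs {ι : Type*} [Fintype ι] (x : ι → ℝ) :
    Real.sqrt (x ⬝ᵥ x) ≤ ∑ i, |x i| := by
  rw [Real.sqrt_le_left (Finset.sum_nonneg fun i _ => abs_nonneg _)]
  have : x ⬝ᵥ x = ∑ i, |x i| ^ 2 := by simp [dotProduct, sq]
  rw [this]
  exact Finset.sum_sq_le_sq_sum_of_nonneg fun i _ => abs_nonneg _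

/-- The orthogonal projection onto the complement of the tangent space, acting on entries. -/
def perpProj (U : Matrix (Fin n1) (Fin r) ℝ) (V : Matrix (Fin n2) (Fin r) ℝ) :
    Matrix (Fin n1 × Fin n2) (Fin n1 × Fin n2) ℝ :=
  (1 - U * Uᵀ).kronecker (1 - V * Vᵀ)

theorem mat_perpProj_mulVec (U : Matrix (Fin n1) (Fin r) ℝ) (V : Matrix (Fin n2) (Fin r) ℝ)
    (z : Fin n1 × Fin n2 → ℝ) :
    mat (perpProj U V *ᵥ z) = (1 - U * Uᵀ) * mat z * (1 - V * Vᵀ) := by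
  have hV : (1 - V * Vᵀ)ᵀ = 1 - V * Vᵀ := by simp
  ext i j
  rw [mul_apply]
  simp only [mat, of_apply, mulVec, dotProduct, perpProj, kroneckerMap_apply,
    Fintype.sum_prod_type, mul_apply (M := 1 - U * Uᵀ), Finset.sum_mul, kronecker]
  rw [Finset.sum_comm]
  refine Finset.sum_congr rfl fun l _ => Finset.sum_congr rfl fun k _ => ?_
  rw [← hV, transpose_apply, hV]
  ring

theorem one_sub_self_mul_transpose_idem {U : Matrix (Fin n1) (Fin r) ℝ} (hU : Uᵀ * U = 1) :
    (1 - U * Uᵀ) * (1 - U * Uᵀ) = 1 - U * Uᵀ := by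
  have h : U * Uᵀ * (U * Uᵀ) = U * Uᵀ := by
    rw [Matrix.mul_assoc, ← Matrix.mul_assoc Uᵀ, hU, Matrix.one_mul]
  rw [Matrix.sub_mul, Matrix.mul_sub (U * Uᵀ), h]
  simp

theorem perpProj_transpose (U : Matrix (Fin n1) (Fin r) ℝ) (V : Matrix (Fin n2) (Fin r) ℝ) :
    (perpProj U V)ᵀ = perpProj U V := by
  have hU : (1 - U * Uᵀ)ᵀ = 1 - U * Uᵀ := by simp
  have hV : (1 - V * Vᵀ)ᵀ = 1 - V * Vᵀ := by simp
  rw [perpProj, kronecker, ← kroneckerMap_transpose, hU, hV]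

theorem perpProj_mul_self {U : Matrix (Fin n1) (Fin r) ℝ} {V : Matrix (Fin n2) (Fin r) ℝ}
    (hU : Uᵀ * U = 1) (hV : Vᵀ * V = 1) : perpProj U V * perpProj U V = perpProj U V := by
  rw [perpProj, kronecker, ← mul_kronecker_mul, one_sub_self_mul_transpose_idem hU,
    one_sub_self_mul_transpose_idem hV]

theorem norm_one_sub_self_mul_transpose_le {U : Matrix (Fin n1) (Fin r) ℝ} (hU : Uᵀ * U = 1) :
    ‖1 - U * Uᵀ‖ ≤ 1 := by
  refine norm_le_of_sqrt_mulVec_le zero_le_one fun x => ?_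
  rw [one_mul]
  have hP : (1 - U * Uᵀ)ᵀ = 1 - U * Uᵀ := by simp
  exact Real.sqrt_le_sqrt (projection_dotProduct_le hP (one_sub_self_mul_transpose_idem hU) x)

theorem norm_mat_perpProj_mulVec_le {U : Matrix (Fin n1) (Fin r) ℝ} {V : Matrix (Fin n2) (Fin r) ℝ}
    (hU : Uᵀ * U = 1) (hV : Vᵀ * V = 1) (z : Fin n1 × Fin n2 → ℝ) :
    ‖mat (perpProj U V *ᵥ z)‖ ≤ ‖mat z‖ := by
  rw [mat_perpProj_mulVec]
  calc _ ≤ ‖(1 - U * Uᵀ) * mat z‖ * ‖1 - V * Vᵀ‖ := l2_opNorm_mul _ _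
    _ ≤ ‖(1 - U * Uᵀ) * mat z‖ :=
      mul_le_of_le_one_right (norm_nonneg _) (norm_one_sub_self_mul_transpose_le hV)
    _ ≤ ‖1 - U * Uᵀ‖ * ‖mat z‖ := l2_opNorm_mul _ _
    _ ≤ ‖mat z‖ := mul_le_of_le_one_left (norm_nonneg _) (norm_one_sub_self_mul_transpose_le hU)

theorem transpose_mul_mat_perpProj {U : Matrix (Fin n1) (Fin r) ℝ} {V : Matrix (Fin n2) (Fin r) ℝ}
    (hU : Uᵀ * U = 1) (z : Fin n1 × Fin n2 → ℝ) : Uᵀ * mat (perpProj U V *ᵥ z) = 0 := by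
  have h : Uᵀ * (1 - U * Uᵀ) = 0 := by
    rw [Matrix.mul_sub, ← Matrix.mul_assoc, hU]
    simp
  rw [mat_perpProj_mulVec, ← Matrix.mul_assoc, ← Matrix.mul_assoc, h]
  simp

theorem mat_perpProj_mul {U : Matrix (Fin n1) (Fin r) ℝ} {V : Matrix (Fin n2) (Fin r) ℝ}
    (hV : Vᵀ * V = 1) (z : Fin n1 × Fin n2 → ℝ) : mat (perpProj U V *ᵥ z) * V = 0 := by
  have h : (1 - V * Vᵀ) * V = 0 := by
    rw [Matrix.sub_mul, Matrix.mul_assoc, hV]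
    simp
  rw [mat_perpProj_mulVec, Matrix.mul_assoc, h]
  simp

theorem perpProj_mulVec_entries {U : Matrix (Fin n1) (Fin r) ℝ} {V : Matrix (Fin n2) (Fin r) ℝ}
    (hU : Uᵀ * U = 1) : perpProj U V *ᵥ entries (U * Vᵀ) = 0 := by
  have h := mat_perpProj_mulVec U V (entries (U * Vᵀ))
  rw [mat_entries, ← Matrix.mul_assoc, Matrix.sub_mul 1, Matrix.mul_assoc U, hU] at h
  rw [← entries_mat (perpProj U V *ᵥ entries (U * Vᵀ)), h]
  simp
  rfl

/-- A dual certificate `perpProj U V *ᵥ w` forces exact recovery. -/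
theorem strictlyRecovered_of_certificate {U : Matrix (Fin n1) (Fin r) ℝ}
    {V : Matrix (Fin n2) (Fin r) ℝ} {σ : Fin r → ℝ} (hU : Uᵀ * U = 1) (hV : Vᵀ * V = 1)
    (hσ : ∀ k, 0 < σ k) {lam : ℝ} (hlam : 0 < lam) (hlam1 : lam < 1)
    {S0 : Matrix (Fin n1) (Fin n2) ℝ} {d s w : Fin n1 × Fin n2 → ℝ}
    (hd : ∀ e, d e = 0 ∨ d e = 1)
    (hs : ∀ e, |s e| ≤ 1) (hS : ∀ e, d e = 1 → s e * entries S0 e = |entries S0 e|)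
    (hS0 : ∀ e, d e = 0 → entries S0 e = 0)
    (hinj : ∀ z, ∑ e, d e * ((1 - perpProj U V) *ᵥ z) e ^ 2 ≤ 1 / 4 * (z ⬝ᵥ z))
    (hw : ‖mat (perpProj U V *ᵥ w)‖ ≤ 1 / 2)
    (hon : ∑ e, d e * ((entries (U * Vᵀ) + perpProj U V *ᵥ w) e - lam * s e) ^ 2 ≤ (lam / 4) ^ 2)
    (hoff : ∀ e, d e = 0 → |(entries (U * Vᵀ) + perpProj U V *ᵥ w) e| ≤ lam / 2) :
    StrictlyRecovered lam (U * diagonal σ * Vᵀ) S0 := by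
  intro L S hLS hobj
  set L0 := U * diagonal σ * Vᵀ with hL0
  set Q := perpProj U V with hQ
  set h : Fin n1 × Fin n2 → ℝ := entries (L - L0) with hh
  set g := Q *ᵥ h with hg
  set C := entries (U * Vᵀ) + Q *ᵥ w with hC
  set γ := Real.sqrt (g ⬝ᵥ g) with hγ
  have hSe : ∀ e, entries S e = entries S0 e - h e := by
    intro e
    have : S = S0 - (L - L0) := by rw [eq_sub_of_add_eq hLS]; abel
    rw [this]
    rfl
  have hQs : Qᵀ = Q := perpProj_transpose U V
  have hQQ : Q * Q = Q := perpProj_mul_self hU hV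
  have hγ0 : 0 ≤ γ := Real.sqrt_nonneg _
  have hγ2 : γ * γ = g ⬝ᵥ g := Real.mul_self_sqrt (dotProduct_self_nonneg' _)
  -- the nuclear norm
  set B := U * Vᵀ + mat (Q *ᵥ (w + (1 / 2 / γ) • h)) with hB
  have hmat : mat (Q *ᵥ (w + (1 / 2 / γ) • h)) = mat (Q *ᵥ w) + mat ((1 / 2 / γ) • g) := by
    rw [mulVec_add, mulVec_smul]
    rfl
  have hB1 : ‖B‖ ≤ 1 := by
    refine norm_add_le_one_of_orthogonal hU hV (transpose_mul_mat_perpProj hU _)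
      (mat_perpProj_mul hV _) ?_
    rw [hmat]
    refine (norm_add_le _ _).trans ?_
    have : ‖mat ((1 / 2 / γ) • g)‖ ≤ 1 / 2 := by
      refine (norm_mat_le _).trans ?_
      rw [smul_dotProduct, dotProduct_smul, ← hγ2, smul_eq_mul, smul_eq_mul]
      rcases hγ0.eq_or_lt with h0 | h0
      · rw [← h0]; simp
      · rw [show 1 / 2 / γ * (1 / 2 / γ * (γ * γ)) = (1 / 2) ^ 2 by field_simp,
          Real.sqrt_sq (by norm_num)]
    linarith
  have hnuc1 : minner L0 B = ∑ k, σ k := by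
    rw [hL0, minner_factored, hB, Matrix.mul_add, transpose_mul_mat_perpProj hU, add_zero,
      ← Matrix.mul_assoc, hU, Matrix.one_mul, hV]
    simp
  have hhg : h ⬝ᵥ g = γ * γ := by
    rw [hγ2, hg, dotProduct_mulVec (Q *ᵥ h), ← mulVec_transpose, hQs, mulVec_mulVec, hQQ,
      dotProduct_comm]
  have hnuc2 : minner (L - L0) B = h ⬝ᵥ C + 1 / 2 * γ := by
    rw [minner_eq_dotProduct, ← hh, hB, hmat]
    have : entries (U * Vᵀ + (mat (Q *ᵥ w) + mat ((1 / 2 / γ) • g))) = C + (1 / 2 / γ) • g := by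
      rw [hC, add_assoc]; rfl
    rw [this, dotProduct_add, dotProduct_smul, hhg, smul_eq_mul]
    congr 1
    rcases hγ0.eq_or_lt with h0 | h0
    · rw [← h0]; simp
    · field_simp
  have hnuc : nuc L0 + h ⬝ᵥ C + 1 / 2 * γ ≤ nuc L := by
    have h1 := minner_le_nuc L hB1
    have h2 : minner L B = minner L0 B + minner (L - L0) B := by
      simp only [minner_eq_trace, ← trace_add, ← Matrix.add_mul, ← transpose_add]
      rw [add_sub_cancel]
    have h3 := nuc_factored_le hU hV hσ
    linarith
  -- the entrywise norm
  set hon' : Fin n1 × Fin n2 → ℝ := fun e => d e * h e with hhon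
  set hoff' : Fin n1 × Fin n2 → ℝ := fun e => (1 - d e) * h e with hhoff
  have hl1 : ∀ e, |entries S0 e| - lam⁻¹ * (h e * C e) + lam⁻¹ * (hon' e * (C e - lam * s e)) +
      1 / 2 * |hoff' e| ≤ |entries S e| := by
    intro e
    rw [hSe]
    rcases hd e with h0 | h0
    · simp only [hhon, hhoff, h0, hS0 e h0]
      have h1 := hoff e h0
      have h2 : -(h e * C e) ≤ lam / 2 * |h e| := by
        refine (neg_le_abs _).trans ?_
        rw [abs_mul, mul_comm]
        exact mul_le_mul_of_nonneg_right h1 (abs_nonneg _)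
      have h3 : lam⁻¹ * (-(h e * C e)) ≤ 1 / 2 * |h e| := by
        calc _ ≤ lam⁻¹ * (lam / 2 * |h e|) := mul_le_mul_of_nonneg_left h2 (by positivity)
          _ = _ := by field_simp
      simp only [zero_sub, abs_neg, abs_zero, zero_mul, mul_zero, sub_zero, one_mul]
      linarith
    · simp only [hhon, hhoff, h0, ← hS e h0]
      have h1 : s e * (entries S0 e - h e) ≤ |entries S0 e - h e| := by
        refine (le_abs_self _).trans ?_
        rw [abs_mul]
        exact mul_le_of_le_one_left (abs_nonneg _) (hs e)
      have h2 : lam⁻¹ * (1 * h e * (C e - lam * s e)) = lam⁻¹ * (h e * C e) - h e * s e := by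
        field_simp
      rw [h2]
      simp only [sub_self, zero_mul, abs_zero]
      linarith
  have hsum := Finset.sum_le_sum fun e (_ : e ∈ Finset.univ) => hl1 e
  rw [Finset.sum_add_distrib, Finset.sum_add_distrib, Finset.sum_sub_distrib, ← l1norm_eq_sum,
    ← l1norm_eq_sum, ← Finset.mul_sum, ← Finset.mul_sum, ← Finset.mul_sum] at hsum
  set a := Real.sqrt (hon' ⬝ᵥ hon') with ha
  set b := Real.sqrt (hoff' ⬝ᵥ hoff') with hb
  have ha0 : 0 ≤ a := Real.sqrt_nonneg _
  have hb0 : 0 ≤ b := Real.sqrt_nonneg _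
  have hbl1 : b ≤ ∑ e, |hoff' e| := sqrt_dotProduct_self_le_sum_abs _
  have hdd : ∀ e, d e * d e = d e := fun e => by rcases hd e with h | h <;> simp [h]
  have hcs : -(a * (lam / 4)) ≤ ∑ e, hon' e * (C e - lam * s e) := by
    have h1 := dotProduct_le_sqrt_mul_sqrt (-hon') (fun e => d e * (C e - lam * s e))
    have h2 : (-hon') ⬝ᵥ (fun e => d e * (C e - lam * s e)) =
        -∑ e, hon' e * (C e - lam * s e) := by
      rw [neg_dotProduct]
      congr 1
      refine Finset.sum_congr rfl fun e _ => ?_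
      simp only [hhon]
      linear_combination (h e * (C e - lam * s e)) * hdd e
    have h3 : (fun e => d e * (C e - lam * s e)) ⬝ᵥ (fun e => d e * (C e - lam * s e)) =
        ∑ e, d e * (C e - lam * s e) ^ 2 := by
      refine Finset.sum_congr rfl fun e _ => ?_
      linear_combination (C e - lam * s e) ^ 2 * hdd e
    have h4 : Real.sqrt (∑ e, d e * (C e - lam * s e) ^ 2) ≤ lam / 4 := by
      rw [Real.sqrt_le_left (by positivity)]
      exact hon
    rw [h2, h3, neg_dotProduct, dotProduct_neg, neg_neg] at h1
    have := mul_le_mul_of_nonneg_left h4 ha0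
    linarith
  have hmain : 1 / 2 * γ + lam / 2 * b ≤ lam / 4 * a := by
    have h1 := mul_le_mul_of_nonneg_left hsum hlam.le
    have h2 : h ⬝ᵥ C = ∑ e, h e * C e := rfl
    have h3 : lam * (l1norm S0 - lam⁻¹ * ∑ e, h e * C e +
        lam⁻¹ * ∑ e, hon' e * (C e - lam * s e) + 1 / 2 * ∑ e, |hoff' e|) =
        lam * l1norm S0 - h ⬝ᵥ C + ∑ e, hon' e * (C e - lam * s e) +
        lam / 2 * ∑ e, |hoff' e| := by
      rw [h2]; field_simp
    rw [h3] at h1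
    have h4 := mul_le_mul_of_nonneg_left hbl1 (half_pos hlam).le
    linarith
  -- injectivity
  have hha : h = hon' + hoff' := by ext e; simp only [hhon, hhoff, Pi.add_apply]; ring
  have hnh : Real.sqrt (h ⬝ᵥ h) ≤ a + b := by
    conv_lhs => rw [hha]
    exact sqrt_dotProduct_self_add_le _ _
  have hab : a ≤ b + 2 * γ := by
    have e1 : hon' = (fun e => d e * ((1 - Q) *ᵥ h) e) + fun e => d e * g e := by
      ext e
      simp only [hhon, Pi.add_apply, sub_mulVec, one_mulVec, Pi.sub_apply, ← hg]
      ring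
    have h1 := sqrt_dotProduct_self_add_le (fun e => d e * ((1 - Q) *ᵥ h) e) fun e => d e * g e
    rw [← e1, ← ha] at h1
    have h2 : Real.sqrt ((fun e => d e * ((1 - Q) *ᵥ h) e) ⬝ᵥ fun e => d e * ((1 - Q) *ᵥ h) e) ≤
        1 / 2 * Real.sqrt (h ⬝ᵥ h) := by
      rw [Real.sqrt_le_left (by positivity), mul_pow, Real.sq_sqrt (dotProduct_self_nonneg' _)]
      refine le_trans (le_of_eq ?_) ((hinj h).trans (by linarith))
      refine Finset.sum_congr rfl fun e _ => ?_
      linear_combination (((1 - Q) *ᵥ h) e) ^ 2 * hdd e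
    have h3 : Real.sqrt ((fun e => d e * g e) ⬝ᵥ fun e => d e * g e) ≤ γ := by
      refine Real.sqrt_le_sqrt (Finset.sum_le_sum fun e _ => ?_)
      rcases hd e with h | h <;> simp [h, mul_self_nonneg]
    linarith
  have hb00 : lam * b ≤ 0 := by nlinarith
  have hb' : b = 0 := le_antisymm (nonpos_of_mul_nonpos_right hb00 hlam) hb0
  have hγ' : γ = 0 := by
    refine le_antisymm ?_ hγ0
    have : (1 - lam) * γ ≤ 0 := by nlinarith
    exact nonpos_of_mul_nonpos_right this (by linarith)
  have ha' : a = 0 := by linarith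
  have hh0 : h = 0 := by
    have : Real.sqrt (h ⬝ᵥ h) = 0 := le_antisymm (by linarith) (Real.sqrt_nonneg _)
    exact dotProduct_self_eq_zero.1 ((Real.sqrt_eq_zero (dotProduct_self_nonneg' _)).1 this)
  have hL : L = L0 := by
    rw [← sub_eq_zero, ← mat_entries (L - L0), ← hh, hh0]
    rfl
  refine ⟨hL, ?_⟩
  rw [hL] at hLS
  exact add_left_cancel hLS

end Deterministic

section IndependentSums

variable {ι α : Type*} [Fintype ι] [DecidableEq ι] [Fintype α] [Nonempty α]

theorem avg_exp_sum_le_of_abs_le {X : ι → α → ℝ} {B : ι → ℝ} (h0 : ∀ i, avg (X i) = 0)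
    (hB : ∀ i a, |X i a| ≤ B i) :
    avg (fun x : ι → α => Real.exp (∑ i, X i (x i))) ≤ Real.exp (∑ i, B i ^ 2) := by
  rw [avg_exp_sum, Real.exp_sum]
  exact Finset.prod_le_prod (fun i _ => avg_nonneg fun a => (Real.exp_pos _).le)
    fun i _ => avg_exp_le_of_abs_le (h0 i) (hB i)

theorem avg_exp_sum_le_of_abs_le_one {X : ι → α → ℝ} (h0 : ∀ i, avg (X i) = 0)
    (hB : ∀ i a, |X i a| ≤ 1) :
    avg (fun x : ι → α => Real.exp (∑ i, X i (x i))) ≤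
      Real.exp (∑ i, avg fun a => X i a ^ 2) := by
  rw [avg_exp_sum, Real.exp_sum]
  exact Finset.prod_le_prod (fun i _ => avg_nonneg fun a => (Real.exp_pos _).le)
    fun i _ => avg_exp_le_of_abs_le_one (h0 i) (hB i)

theorem unifProb_not_forall_abs_le {α : Type*} [Fintype α] (X : ι → α → ℝ) {b M : ℝ}
    (h1 : ∀ i, avg (fun a => Real.exp (X i a)) ≤ M)
    (h2 : ∀ i, avg (fun a => Real.exp (-X i a)) ≤ M) :
    unifProb (fun a => ¬ ∀ i, |X i a| ≤ b) ≤ Fintype.card ι * (2 * (Real.exp (-b) * M)) := by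
  have h : ∀ i ∈ (Finset.univ : Finset ι), unifProb (fun a => b < X i a ∨ b < -X i a) ≤
      2 * (Real.exp (-b) * M) := by
    intro i _
    refine (unifProb_or_le _ _).trans ?_
    have e1 := (unifProb_lt_le_exp (X i) b).trans
      (mul_le_mul_of_nonneg_left (h1 i) (Real.exp_pos _).le)
    have e2 := (unifProb_lt_le_exp (fun a => -X i a) b).trans
      (mul_le_mul_of_nonneg_left (h2 i) (Real.exp_pos _).le)
    linarith
  refine le_trans (unifProb_mono fun a ha => ?_) (unifProb_exists_le_card_mul _ _ h)
  push Not at ha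
  obtain ⟨i, hi⟩ := ha
  exact ⟨i, Finset.mem_univ i, lt_abs.1 hi⟩

end IndependentSums

section Golfing

/-- The indicator that the batch label is zero. -/
def hit {K : ℕ} (k : Fin K) : ℝ := if (k : ℕ) = 0 then 1 else 0

theorem hit_eq {K : ℕ} (k : Fin K) : hit k = 0 ∨ hit k = 1 := by
  unfold hit; split_ifs <;> simp

variable {K : ℕ} [NeZero K]

theorem sum_hit : ∑ k : Fin K, hit k = 1 := by
  have : ∀ k : Fin K, hit k = if k = 0 then 1 else 0 := by
    intro k
    simp only [hit, Fin.ext_iff, Fin.val_zero]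
  simp [this]

theorem avg_hit : avg (hit (K := K)) = 1 / K := by
  simp [avg, sum_hit]

theorem avg_one_sub_hit : avg (fun k : Fin K => 1 - K * hit k) = 0 := by
  have hK : (K : ℝ) ≠ 0 := Nat.cast_ne_zero.2 (NeZero.ne K)
  simp only [sub_eq_add_neg, ← neg_mul]
  rw [avg_add, avg_const, avg_const_mul, avg_hit]
  field_simp
  simp

theorem abs_one_sub_hit_le (k : Fin K) : |1 - K * hit k| ≤ K := by
  have hK : (1 : ℝ) ≤ K := Nat.one_le_cast.2 (Nat.one_le_iff_ne_zero.2 (NeZero.ne K))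
  rcases hit_eq k with h | h <;> rw [h, abs_le] <;> constructor <;> linarith

theorem avg_one_sub_hit_sq_le : avg (fun k : Fin K => (1 - K * hit k) ^ 2) ≤ K := by
  have hK : (K : ℝ) ≠ 0 := Nat.cast_ne_zero.2 (NeZero.ne K)
  have h : ∀ k : Fin K, (1 - K * hit k) ^ 2 = 1 + (K ^ 2 - 2 * K) * hit k := by
    intro k
    rcases hit_eq k with h | h <;> rw [h] <;> ring
  simp only [h]
  rw [avg_add, avg_const, avg_const_mul, avg_hit]
  have : 1 + ((K : ℝ) ^ 2 - 2 * K) * (1 / K) = K - 1 := by field_simp; ring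
  linarith

variable {E : Type*} [Fintype E] [DecidableEq E]

/-- The centred reweighting of a family by a batch of labels. -/
def centered (x : E → Fin K) (z : E → ℝ) : E → ℝ := fun e => (1 - K * hit (x e)) * z e

theorem projection_abs_apply_le {P : Matrix E E ℝ} (hPs : Pᵀ = P) (hPP : P * P = P) {μ : ℝ}
    (hμ : ∀ e, P e e ≤ μ) (e f : E) : |P e f| ≤ μ := by
  have h0 : ∀ a, 0 ≤ P a a := fun a => by
    rw [← projection_row_dotProduct hPs hPP a a]; exact dotProduct_self_nonneg' _
  have key : ∀ x y : E → ℝ, x ⬝ᵥ x ≤ μ → y ⬝ᵥ y ≤ μ → x ⬝ᵥ y ≤ μ := by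
    intro x y hx hy
    have := dotProduct_self_nonneg' (x - y)
    rw [sub_dotProduct, dotProduct_sub, dotProduct_sub, dotProduct_comm y x] at this
    linarith
  have he : P e ⬝ᵥ P e ≤ μ := by rw [projection_row_dotProduct hPs hPP]; exact hμ e
  have hf : P f ⬝ᵥ P f ≤ μ := by rw [projection_row_dotProduct hPs hPP]; exact hμ f
  rw [← projection_row_dotProduct hPs hPP e f]
  refine abs_le.2 ⟨?_, key _ _ he hf⟩
  have := key (-P e) (P f) (by simpa using he) hf
  rw [neg_dotProduct] at this
  linarith

theorem unifProb_projection_centered_le {P : Matrix E E ℝ} (hPs : Pᵀ = P) (hPP : P * P = P) {μ : ℝ}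
    (hμ : ∀ e, P e e ≤ μ) {z : E → ℝ} {b τ : ℝ} (hb : 0 < b) (hz : ∀ e, |z e| ≤ b) (hτ : 0 < τ)
    (hτ1 : τ * (K * μ) ≤ 1) :
    unifProb (fun x : E → Fin K => ¬ ∀ e, |(P *ᵥ centered x z) e| ≤ b / 2) ≤
      Fintype.card E * (2 * (Real.exp (-(τ / 2)) * Real.exp (τ ^ 2 * (K * μ)))) := by
  have hcoef : ∀ e f, |τ / b * P e f * z f| ≤ τ * |P e f| := by
    intro e f
    rw [abs_mul, abs_mul, abs_of_pos (div_pos hτ hb)]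
    calc _ ≤ τ / b * |P e f| * b := mul_le_mul_of_nonneg_left (hz f) (by positivity)
      _ = _ := by field_simp
  have hmgf : ∀ (s : ℝ) (_ : |s| ≤ 1) (e : E), avg (fun x : E → Fin K =>
      Real.exp (∑ f, s * (τ / b * P e f * z f) * (1 - K * hit (x f)))) ≤
      Real.exp (τ ^ 2 * (K * μ)) := by
    intro s hs e
    have hcoef' : ∀ f, |s * (τ / b * P e f * z f)| ≤ τ * |P e f| := by
      intro f
      rw [abs_mul]
      exact (mul_le_of_le_one_left (abs_nonneg _) hs).trans (hcoef e f)
    refine (avg_exp_sum_le_of_abs_le_one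
      (X := fun f (k : Fin K) => s * (τ / b * P e f * z f) * (1 - K * hit k)) ?_ ?_).trans ?_
    · intro f
      rw [avg_const_mul, avg_one_sub_hit, mul_zero]
    · intro f k
      rw [abs_mul]
      calc _ ≤ (τ * μ) * K := mul_le_mul ((hcoef' f).trans (mul_le_mul_of_nonneg_left
            (projection_abs_apply_le hPs hPP hμ e f) hτ.le)) (abs_one_sub_hit_le k) (abs_nonneg _)
            (mul_nonneg hτ.le ((abs_nonneg _).trans (projection_abs_apply_le hPs hPP hμ e f)))
        _ = τ * (K * μ) := by ring
        _ ≤ 1 := hτ1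
    · refine Real.exp_le_exp.2 ?_
      calc ∑ f, avg (fun k : Fin K => (s * (τ / b * P e f * z f) * (1 - K * hit k)) ^ 2)
          ≤ ∑ f, τ ^ 2 * K * (P e f * P e f) := by
            refine Finset.sum_le_sum fun f _ => ?_
            simp only [mul_pow _ (1 - (K : ℝ) * hit _)]
            rw [avg_const_mul]
            have h1 : (s * (τ / b * P e f * z f)) ^ 2 ≤ (τ * |P e f|) ^ 2 :=
              sq_le_sq.2 ((hcoef' f).trans (le_abs_self _))
            rw [mul_pow τ, sq_abs] at h1
            calc _ ≤ (τ ^ 2 * P e f ^ 2) * K :=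
                  mul_le_mul h1 avg_one_sub_hit_sq_le (avg_nonneg fun _ => sq_nonneg _)
                    (by positivity)
              _ = _ := by ring
        _ = τ ^ 2 * K * P e e := by
            rw [← Finset.mul_sum, ← projection_row_dotProduct hPs hPP e e]
            rfl
        _ ≤ τ ^ 2 * (K * μ) := by
            rw [mul_assoc]
            gcongr
            exact hμ e
  have hX : ∀ (e : E) (x : E → Fin K), τ / b * (P *ᵥ centered x z) e =
      ∑ f, (τ / b * P e f * z f) * (1 - K * hit (x f)) := by
    intro e x
    rw [mulVec, dotProduct, Finset.mul_sum]
    refine Finset.sum_congr rfl fun f _ => ?_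
    simp only [centered]
    ring
  refine le_trans (unifProb_mono fun x hx => ?_) (unifProb_not_forall_abs_le
    (fun e (x : E → Fin K) => τ / b * (P *ᵥ centered x z) e) (b := τ / 2) ?_ ?_)
  · contrapose! hx
    intro e
    have := hx e
    rw [abs_mul, abs_of_pos (div_pos hτ hb)] at this
    calc |(P *ᵥ centered x z) e| = (τ / b * |(P *ᵥ centered x z) e|) * (b / τ) := by field_simp
      _ ≤ τ / 2 * (b / τ) := by gcongr
      _ = b / 2 := by field_simp
  · intro e
    simpa only [hX, one_mul] using hmgf 1 (by simp) e
  · intro e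
    have := hmgf (-1) (by simp) e
    simpa only [hX, neg_mul, one_mul, Finset.sum_neg_distrib] using this

theorem dotProduct_mat_mulVec {n1 n2 : ℕ} (y : Fin n1 → ℝ) (x : Fin n2 → ℝ)
    (z : Fin n1 × Fin n2 → ℝ) :
    y ⬝ᵥ mat z *ᵥ x = (fun e : Fin n1 × Fin n2 => y e.1 * x e.2) ⬝ᵥ z := by
  simp only [dotProduct, mulVec, mat, of_apply, Fintype.sum_prod_type, Finset.mul_sum]
  exact Finset.sum_congr rfl fun i _ => Finset.sum_congr rfl fun j _ => by ring

theorem dotProduct_self_tensor {n1 n2 : ℕ} (y : Fin n1 → ℝ) (x : Fin n2 → ℝ) :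
    (fun e : Fin n1 × Fin n2 => y e.1 * x e.2) ⬝ᵥ (fun e => y e.1 * x e.2) =
      (x ⬝ᵥ x) * (y ⬝ᵥ y) := by
  rw [mul_comm]
  simp only [dotProduct, Fintype.sum_prod_type, Finset.sum_mul_sum]
  exact Finset.sum_congr rfl fun i _ => Finset.sum_congr rfl fun j _ => by ring

open scoped Matrix.Norms.L2Operator in
theorem unifProb_norm_centered_le {n1 n2 : ℕ} (hn : n2 ≤ n1) (hn1 : 0 < n1)
    {z : Fin n1 × Fin n2 → ℝ} {b : ℝ} (hb : 0 < b) (hz : ∀ e, |z e| ≤ b) :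
    unifProb (fun x : Fin n1 × Fin n2 → Fin K =>
      ¬ ‖mat (centered x z)‖ ≤ 25 * (K * b * Real.sqrt n1)) ≤ Real.exp (-n1) := by
  have hK : (0 : ℝ) < K := Nat.cast_pos.2 (Nat.pos_of_ne_zero (NeZero.ne K))
  have h := unifProb_norm_le_of_subgaussian hn hn1
    (fun x : Fin n1 × Fin n2 → Fin K => mat (centered x z)) (κ := (K * b) ^ 2) (by positivity) ?_
  · rwa [Real.sqrt_mul (sq_nonneg _), Real.sqrt_sq (by positivity)] at h
  · intro x y
    have e1 : ∀ w : Fin n1 × Fin n2 → Fin K, y ⬝ᵥ mat (centered w z) *ᵥ x =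
        ∑ e, y e.1 * x e.2 * z e * (1 - K * hit (w e)) := by
      intro w
      rw [dotProduct_mat_mulVec]
      refine Finset.sum_congr rfl fun e _ => ?_
      simp only [centered]
      ring
    simp only [e1]
    refine (avg_exp_sum_le_of_abs_le (X := fun (e : Fin n1 × Fin n2) (k : Fin K) =>
      y e.1 * x e.2 * z e * (1 - K * hit k)) (B := fun e => K * b * |y e.1 * x e.2|) ?_ ?_).trans ?_
    · intro e
      rw [avg_const_mul, avg_one_sub_hit, mul_zero]
    · intro e k
      rw [abs_mul, abs_mul]
      calc _ ≤ |y e.1 * x e.2| * b * K := by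
            gcongr
            · exact hz e
            · exact abs_one_sub_hit_le k
        _ = _ := by ring
    · refine Real.exp_le_exp.2 (le_of_eq ?_)
      rw [← dotProduct_self_tensor, dotProduct, Finset.mul_sum]
      refine Finset.sum_congr rfl fun e _ => ?_
      rw [mul_pow, sq_abs]
      ring

/-- The golfing iterates. -/
def golf (P : Matrix E E ℝ) (z : E → ℝ) (x : ℕ → E → Fin K) : ℕ → E → ℝ
  | 0 => z
  | j + 1 => P *ᵥ centered (x j) (golf P z x j)

theorem golf_congr (P : Matrix E E ℝ) (z : E → ℝ) {x x' : ℕ → E → Fin K} {j : ℕ}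
    (h : ∀ i < j, x i = x' i) : golf P z x j = golf P z x' j := by
  induction j with
  | zero => rfl
  | succ j ih =>
    rw [golf, golf, ih fun i hi => h i (by omega), h j (by omega)]

/-- The correction accumulated by the first `J` golfing iterates. -/
def golfSum (P : Matrix E E ℝ) (z : E → ℝ) (x : ℕ → E → Fin K) (J : ℕ) : E → ℝ :=
  fun e => ∑ j ∈ Finset.range J, K * hit (x j e) * golf P z x j e

theorem projection_mulVec_golf {P : Matrix E E ℝ} (hPP : P * P = P) {z : E → ℝ}
    (hz : P *ᵥ z = z) (x : ℕ → E → Fin K) (j : ℕ) : P *ᵥ golf P z x j = golf P z x j := by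
  cases j with
  | zero => exact hz
  | succ j => rw [golf, mulVec_mulVec, hPP]

theorem golfSum_succ (P : Matrix E E ℝ) (z : E → ℝ) (x : ℕ → E → Fin K) (J : ℕ) :
    golfSum P z x (J + 1) = golfSum P z x J + (golf P z x J - centered (x J) (golf P z x J)) := by
  ext e
  simp only [golfSum, Finset.sum_range_succ, Pi.add_apply, Pi.sub_apply, centered]
  ring

theorem golf_eq_sub {P : Matrix E E ℝ} (hPP : P * P = P) {z : E → ℝ}
    (hz : P *ᵥ z = z) (x : ℕ → E → Fin K) (J : ℕ) :
    golf P z x J = z - P *ᵥ golfSum P z x J := by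
  induction J with
  | zero =>
    have h : golfSum P z x 0 = 0 := by ext; simp [golfSum]
    rw [h, mulVec_zero, sub_zero, golf]
  | succ J ih =>
    rw [golfSum_succ, mulVec_add, mulVec_sub, projection_mulVec_golf hPP hz, golf]
    nth_rw 2 [ih]
    abel

theorem abs_golfSum_le {P : Matrix E E ℝ} {z : E → ℝ} {x : ℕ → E → Fin K} {J : ℕ} {b : ℝ}
    (h : ∀ j ≤ J, ∀ e, |golf P z x j e| ≤ b * (1 / 2) ^ j) (hb : 0 ≤ b) (e : E) :
    |golfSum P z x J e| ≤ 2 * (K * b) := by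
  have hgeo : ∑ j ∈ Finset.range J, (1 / 2 : ℝ) ^ j ≤ 2 := by
    rw [geom_sum_eq (by norm_num)]
    have := pow_pos (one_half_pos (α := ℝ)) J
    rw [div_le_iff_of_neg (by norm_num)]
    linarith
  calc |golfSum P z x J e| ≤ ∑ j ∈ Finset.range J, |K * hit (x j e) * golf P z x j e| :=
        Finset.abs_sum_le_sum_abs _ _
    _ ≤ ∑ j ∈ Finset.range J, K * b * (1 / 2) ^ j := by
        refine Finset.sum_le_sum fun j hj => ?_
        have h1 := h j (Finset.mem_range.1 hj).le e
        rcases hit_eq (x j e) with h0 | h0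
        · rw [h0]; simp; positivity
        · rw [h0, mul_one, abs_mul, Nat.abs_cast, mul_assoc]
          exact mul_le_mul_of_nonneg_left h1 (Nat.cast_nonneg _)
    _ ≤ 2 * (K * b) := by
        rw [← Finset.mul_sum, mul_comm]
        exact mul_le_mul_of_nonneg_right hgeo (by positivity)

open scoped Matrix.Norms.L2Operator in
theorem norm_mat_perp_golfSum_le {n1 n2 r : ℕ} {U : Matrix (Fin n1) (Fin r) ℝ}
    {V : Matrix (Fin n2) (Fin r) ℝ} (hU : Uᵀ * U = 1) (hV : Vᵀ * V = 1)
    {z : Fin n1 × Fin n2 → ℝ} (hz : (1 - perpProj U V) *ᵥ z = z)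
    {x : ℕ → Fin n1 × Fin n2 → Fin K} {J : ℕ} {c : ℝ} (hc : 0 ≤ c)
    (h : ∀ j < J, ‖mat (centered (x j) (golf (1 - perpProj U V) z x j))‖ ≤ c * (1 / 2) ^ j) :
    ‖mat (perpProj U V *ᵥ golfSum (1 - perpProj U V) z x J)‖ ≤ 2 * c := by
  have hPP : (1 - perpProj U V) * (1 - perpProj U V) = 1 - perpProj U V := by
    rw [Matrix.sub_mul, Matrix.mul_sub (perpProj U V), perpProj_mul_self hU hV]
    simp
  have hperp : ∀ j, perpProj U V *ᵥ golf (1 - perpProj U V) z x j = 0 := by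
    intro j
    rw [← projection_mulVec_golf hPP hz x j, mulVec_mulVec, Matrix.mul_sub,
      perpProj_mul_self hU hV]
    simp
  have key : ∀ j ≤ J, ‖mat (perpProj U V *ᵥ golfSum (1 - perpProj U V) z x j)‖ ≤
      2 * c * (1 - (1 / 2) ^ j) := by
    intro j
    induction j with
    | zero =>
      intro _
      have : golfSum (1 - perpProj U V) z x 0 = 0 := by ext; simp [golfSum]
      rw [this, mulVec_zero]
      have h0 : mat (0 : Fin n1 × Fin n2 → ℝ) = 0 := rfl
      simp [h0]
    | succ j ih =>
      intro hj
      rw [golfSum_succ, mulVec_add, mulVec_sub, hperp, zero_sub]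
      have e : ∀ u v : Fin n1 × Fin n2 → ℝ, mat (u + -v) = mat u - mat v := by
        intro u v
        ext i j
        simp [mat, sub_eq_add_neg]
      rw [e]
      refine (norm_sub_le _ _).trans ?_
      have h1 := ih (by omega)
      have h2 := (norm_mat_perpProj_mulVec_le hU hV
        (centered (x j) (golf (1 - perpProj U V) z x j))).trans (h j (by omega))
      rw [pow_succ]
      linarith
  refine (key J le_rfl).trans ?_
  have := pow_pos (one_half_pos (α := ℝ)) J
  nlinarith

end Golfing

section SparseCertificate

open scoped Matrix.Norms.L2Operator

/-- The real sign of a Boolean. -/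
def sgn (b : Bool) : ℝ := if b then 1 else -1

theorem abs_sgn (b : Bool) : |sgn b| = 1 := by cases b <;> simp [sgn]

theorem avg_sgn : avg sgn = 0 := by simp [avg, sgn]

variable {E : Type*} [Fintype E] [DecidableEq E]

theorem exists_symmetric_inverse_one_sub [Nonempty E] {A : Matrix E E ℝ} (hA : Aᵀ = A)
    (hA1 : ‖A‖ ≤ 1 / 2) :
    ∃ R : Matrix E E ℝ, (1 - A) * R = 1 ∧ R * (1 - A) = 1 ∧ Rᵀ = R ∧ ‖R‖ ≤ 2 := by
  have hlt : ‖A‖ < 1 := by linarith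
  set u := Units.oneSub A hlt with hu
  have h1 : (1 - A) * (↑u⁻¹ : Matrix E E ℝ) = 1 := u.mul_inv
  have h2 : (↑u⁻¹ : Matrix E E ℝ) * (1 - A) = 1 := u.inv_mul
  refine ⟨↑u⁻¹, h1, h2, ?_, ?_⟩
  · have h3 : (↑u⁻¹ : Matrix E E ℝ)ᵀ * (1 - A) = 1 := by
      have := congrArg transpose h1
      rwa [transpose_mul, transpose_sub, transpose_one, hA] at this
    calc (↑u⁻¹ : Matrix E E ℝ)ᵀ = (↑u⁻¹ : Matrix E E ℝ)ᵀ * ((1 - A) * (↑u⁻¹ : Matrix E E ℝ)) := by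
          rw [h1, Matrix.mul_one]
      _ = ↑u⁻¹ := by rw [← Matrix.mul_assoc, h3, Matrix.one_mul]
  · have h4 : (↑u⁻¹ : Matrix E E ℝ) = 1 + A * (↑u⁻¹ : Matrix E E ℝ) := by
      rw [Matrix.sub_mul, Matrix.one_mul] at h1
      rw [← h1]; abel
    have h5 : ‖(1 : Matrix E E ℝ)‖ ≤ 1 := by
      refine norm_le_of_sqrt_mulVec_le zero_le_one fun x => ?_
      rw [one_mulVec, one_mul]
    have h6 : ‖(↑u⁻¹ : Matrix E E ℝ)‖ ≤ 1 + ‖A‖ * ‖(↑u⁻¹ : Matrix E E ℝ)‖ := by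
      calc ‖(↑u⁻¹ : Matrix E E ℝ)‖ = ‖1 + A * (↑u⁻¹ : Matrix E E ℝ)‖ := congrArg _ h4
        _ ≤ ‖(1 : Matrix E E ℝ)‖ + ‖A * (↑u⁻¹ : Matrix E E ℝ)‖ := norm_add_le _ _
        _ ≤ 1 + ‖A‖ * ‖(↑u⁻¹ : Matrix E E ℝ)‖ := add_le_add h5 (l2_opNorm_mul _ _)
    nlinarith [norm_nonneg (↑u⁻¹ : Matrix E E ℝ)]

theorem avg_exp_dotProduct_sign_le (q : E → ℝ) :
    avg (fun u : E → Bool => Real.exp (q ⬝ᵥ fun e => sgn (u e))) ≤ Real.exp (q ⬝ᵥ q) := by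
  refine (avg_exp_sum_le_of_abs_le (X := fun e b => q e * sgn b) (B := fun e => |q e|) ?_ ?_).trans ?_
  · intro e
    rw [avg_const_mul, avg_sgn, mul_zero]
  · intro e b
    rw [abs_mul, abs_sgn, mul_one]
  · refine Real.exp_le_exp.2 (le_of_eq (Finset.sum_congr rfl fun e _ => ?_))
    rw [sq_abs, sq]

theorem dotProduct_self_mulVec_le (M : Matrix E E ℝ) {c : ℝ} (hM : ‖M‖ ≤ c) (x : E → ℝ) :
    (M *ᵥ x) ⬝ᵥ (M *ᵥ x) ≤ c ^ 2 * (x ⬝ᵥ x) := by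
  have h0 : 0 ≤ c := (norm_nonneg _).trans hM
  have h := (sqrt_mulVec_le_norm M x).trans (mul_le_mul_of_nonneg_right hM (Real.sqrt_nonneg _))
  rw [Real.sqrt_le_left (by positivity), mul_pow, Real.sq_sqrt (dotProduct_self_nonneg' _)] at h
  exact h

theorem norm_diagonal_projection_diagonal_le {P : Matrix E E ℝ} {d : E → ℝ}
    (hd : ∀ e, d e = 0 ∨ d e = 1) {c : ℝ} (hc : 0 ≤ c)
    (h : ∀ z : E → ℝ, ∑ e, d e * (P *ᵥ z) e ^ 2 ≤ c ^ 2 * (z ⬝ᵥ z)) :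
    ‖diagonal d * P * diagonal d‖ ≤ c := by
  refine norm_le_of_sqrt_mulVec_le hc fun x => ?_
  rw [Real.sqrt_le_left (by positivity), mul_pow, Real.sq_sqrt (dotProduct_self_nonneg' _)]
  have e1 : ((diagonal d * P * diagonal d) *ᵥ x) ⬝ᵥ ((diagonal d * P * diagonal d) *ᵥ x) =
      ∑ e, d e * (P *ᵥ (diagonal d *ᵥ x)) e ^ 2 := by
    simp only [← mulVec_mulVec, dotProduct]
    refine Finset.sum_congr rfl fun e _ => ?_
    rw [mulVec_diagonal]
    rcases hd e with h | h <;> rw [h] <;> ring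
  rw [e1]
  refine (h _).trans (mul_le_mul_of_nonneg_left (Finset.sum_le_sum fun e _ => ?_) (sq_nonneg c))
  rw [mulVec_diagonal]
  rcases hd e with h | h <;> rw [h] <;> simp [mul_self_nonneg]

theorem unifProb_sign_certificate_le {n1 n2 : ℕ} (hn : n2 ≤ n1) (hn1 : 0 < n1) (hn2 : 0 < n2)
    {P : Matrix (Fin n1 × Fin n2) (Fin n1 × Fin n2) ℝ} (hPs : Pᵀ = P) (hPP : P * P = P) {μ : ℝ}
    (hμ : ∀ e, P e e ≤ μ) {d : Fin n1 × Fin n2 → ℝ} (hd : ∀ e, d e = 0 ∨ d e = 1)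
    (h : ∀ z, ∑ e, d e * (P *ᵥ z) e ^ 2 ≤ (1 / 400) ^ 2 * (z ⬝ᵥ z)) {τ : ℝ} (hτ : 0 < τ) :
    unifProb (fun u : Fin n1 × Fin n2 → Bool => ¬ ∃ X : Fin n1 × Fin n2 → ℝ,
      (∀ e, d e = 0 → X e = 0) ∧ (∀ e, d e = 1 → (X - P *ᵥ X) e = sgn (u e)) ∧
      (∀ e, |(P *ᵥ X) e| ≤ 1 / 4) ∧
      ‖mat (X - fun e => d e * sgn (u e))‖ ≤ Real.sqrt n1 / 8) ≤
    Fintype.card (Fin n1 × Fin n2) * (2 * (Real.exp (-(τ / 4)) * Real.exp (τ ^ 2 * (4 * μ)))) +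
      Real.exp (-n1) := by
  have : Nonempty (Fin n1 × Fin n2) := ⟨(⟨0, hn1⟩, ⟨0, hn2⟩)⟩
  set D := diagonal d with hD
  have hDD : D * D = D := by
    rw [hD, diagonal_mul_diagonal]
    congr 1
    ext e
    rcases hd e with h | h <;> simp [h]
  have hDs : Dᵀ = D := diagonal_transpose _
  set A := D * P * D with hA
  have hAs : Aᵀ = A := by
    rw [hA, transpose_mul, transpose_mul, hDs, hPs, Matrix.mul_assoc]
  have hA1 : ‖A‖ ≤ 1 / 400 := norm_diagonal_projection_diagonal_le hd (by norm_num) h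
  obtain ⟨R, hR1, hR2, hRs, hR⟩ := exists_symmetric_inverse_one_sub hAs (by linarith)
  have hDA : D * A = A := by rw [hA, ← Matrix.mul_assoc, ← Matrix.mul_assoc, hDD]
  have hAD : A * D = A := by rw [hA, Matrix.mul_assoc, hDD]
  have hDR : D * R = R * D := by
    calc D * R = R * (1 - A) * (D * R) := by rw [hR2, Matrix.one_mul]
      _ = R * (((1 - A) * D) * R) := by simp only [Matrix.mul_assoc]
      _ = R * ((D * (1 - A)) * R) := by
        rw [Matrix.sub_mul, Matrix.mul_sub, hDA, hAD, Matrix.one_mul, Matrix.mul_one]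
      _ = R * D := by rw [Matrix.mul_assoc D, hR1, Matrix.mul_one]
  have hR1' : R - 1 = A * R := by
    rw [Matrix.sub_mul, Matrix.one_mul] at hR1
    rw [← hR1]; abel
  have hRn : ‖R - 1‖ ≤ 1 / 200 := by
    rw [hR1']
    refine (l2_opNorm_mul _ _).trans ?_
    calc ‖A‖ * ‖R‖ ≤ 1 / 400 * 2 := mul_le_mul hA1 hR (norm_nonneg _) (by norm_num)
      _ = _ := by norm_num
  -- inner products with the signs
  have hDle : ∀ q : Fin n1 × Fin n2 → ℝ, (D *ᵥ q) ⬝ᵥ (D *ᵥ q) ≤ q ⬝ᵥ q :=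
    fun q => projection_dotProduct_le hDs hDD q
  set ε : (Fin n1 × Fin n2 → Bool) → Fin n1 × Fin n2 → ℝ := fun u e => sgn (u e) with hε
  have hmgf : ∀ (M : Matrix (Fin n1 × Fin n2) (Fin n1 × Fin n2) ℝ) (_ : Mᵀ = M) (c : ℝ)
      (_ : ‖M‖ ≤ c) (q : Fin n1 × Fin n2 → ℝ),
      avg (fun u => Real.exp (q ⬝ᵥ M *ᵥ D *ᵥ ε u)) ≤ Real.exp (c ^ 2 * (q ⬝ᵥ q)) := by
    intro M hMs c hM q
    have e1 : ∀ u, q ⬝ᵥ M *ᵥ D *ᵥ ε u = (D *ᵥ M *ᵥ q) ⬝ᵥ ε u := by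
      intro u
      rw [dotProduct_mulVec, dotProduct_mulVec, ← mulVec_transpose, ← mulVec_transpose, hDs, hMs]
    simp only [e1]
    refine (avg_exp_dotProduct_sign_le _).trans (Real.exp_le_exp.2 ?_)
    exact (hDle _).trans (dotProduct_self_mulVec_le M hM q)
  -- the entries off the support
  have hent : unifProb (fun u => ¬ ∀ e, |τ * (P *ᵥ R *ᵥ D *ᵥ ε u) e| ≤ τ / 4) ≤
      Fintype.card (Fin n1 × Fin n2) *
        (2 * (Real.exp (-(τ / 4)) * Real.exp (τ ^ 2 * (4 * μ)))) := by
    have key : ∀ (s : ℝ) (_ : s ^ 2 = 1) (e : Fin n1 × Fin n2),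
        avg (fun u => Real.exp (s * (τ * (P *ᵥ R *ᵥ D *ᵥ ε u) e))) ≤
          Real.exp (τ ^ 2 * (4 * μ)) := by
      intro s hs e
      have e1 : ∀ u, s * (τ * (P *ᵥ R *ᵥ D *ᵥ ε u) e) = ((s * τ) • P e) ⬝ᵥ R *ᵥ D *ᵥ ε u := by
        intro u
        rw [smul_dotProduct, smul_eq_mul, mul_assoc]
        rfl
      simp only [e1]
      refine (hmgf R hRs 2 hR _).trans (Real.exp_le_exp.2 ?_)
      rw [smul_dotProduct, dotProduct_smul, projection_row_dotProduct hPs hPP, smul_eq_mul,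
        smul_eq_mul]
      have := mul_le_mul_of_nonneg_left (hμ e) (mul_nonneg zero_le_four (sq_nonneg τ))
      calc _ = s ^ 2 * (4 * τ ^ 2 * P e e) := by ring
        _ ≤ _ := by rw [hs]; linarith
    refine unifProb_not_forall_abs_le _ (fun e => ?_) (fun e => ?_)
    · simpa using key 1 (by norm_num) e
    · simpa using key (-1) (by norm_num) e
  -- the spectral norm
  have hspec := unifProb_norm_le_of_subgaussian hn hn1
    (fun u => mat ((R - 1) *ᵥ D *ᵥ ε u)) (κ := (1 / 200) ^ 2) (by positivity) (by
      intro x y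
      simp only [dotProduct_mat_mulVec]
      rw [← dotProduct_self_tensor]
      exact hmgf (R - 1) (by rw [transpose_sub, hRs, transpose_one]) _ hRn _)
  refine le_trans (unifProb_mono fun u hu => ?_) ((unifProb_or_le _ _).trans (add_le_add hent hspec))
  contrapose! hu
  obtain ⟨hu1, hu2⟩ := hu
  have hX : R *ᵥ D *ᵥ ε u = D *ᵥ R *ᵥ ε u := by rw [mulVec_mulVec, mulVec_mulVec, hDR]
  refine ⟨R *ᵥ D *ᵥ ε u, ?_, ?_, ?_, ?_⟩
  · intro e he
    rw [hX, hD, mulVec_diagonal, he, zero_mul]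
  · intro e he
    have h1 : (D *ᵥ (R *ᵥ D *ᵥ ε u - P *ᵥ R *ᵥ D *ᵥ ε u)) = D *ᵥ ε u := by
      have h2 : R *ᵥ D *ᵥ ε u = (R * D) *ᵥ ε u := mulVec_mulVec _ _ _
      rw [h2, mulVec_mulVec, ← sub_mulVec, mulVec_mulVec]
      congr 1
      calc D * (R * D - P * (R * D)) = D * R * D - D * P * (D * R) := by
            rw [Matrix.mul_sub, hDR]; simp only [Matrix.mul_assoc, ← hDR]
        _ = (1 - A) * (R * D) := by
            rw [hDR, Matrix.mul_assoc R, hDD, Matrix.sub_mul, Matrix.one_mul, hA, ← hDR]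
            simp only [Matrix.mul_assoc]
            rw [← Matrix.mul_assoc D D, hDD]
        _ = D := by rw [← Matrix.mul_assoc, hR1, Matrix.one_mul]
    have h3 := congrFun h1 e
    rw [hD, mulVec_diagonal, mulVec_diagonal, he, one_mul, one_mul] at h3
    exact h3
  · intro e
    have h1 := hu1 e
    rw [abs_mul, abs_of_pos hτ] at h1
    have h2 : τ * |(P *ᵥ R *ᵥ D *ᵥ ε u) e| ≤ τ * (1 / 4) := by linarith
    exact le_of_mul_le_mul_left h2 hτ
  · have h1 : (fun e => d e * sgn (u e)) = D *ᵥ ε u := by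
      ext e
      rw [hD, mulVec_diagonal]
    rw [h1]
    rw [sub_mulVec, one_mulVec] at hu2
    refine hu2.trans (le_of_eq ?_)
    rw [Real.sqrt_mul (sq_nonneg _), Real.sqrt_sq (by norm_num)]
    ring

theorem cosh_sub_one_mul_le {ρ κ s : ℝ} (hρ0 : 0 ≤ ρ) (hρ1 : ρ ≤ 1) (hκ : 0 < κ)
    (hρ : ρ * Real.exp (1 / κ ^ 2) ≤ κ) : 1 + ρ * (Real.cosh s - 1) ≤ Real.exp (κ * s ^ 2) := by
  have hcosh : Real.cosh s ≤ Real.exp |s| := by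
    rw [← Real.cosh_abs, Real.cosh_eq]
    have : Real.exp (-|s|) ≤ Real.exp |s| := Real.exp_le_exp.2 (by linarith [abs_nonneg s])
    linarith
  have hc1 := Real.one_le_cosh s
  rcases le_total (1 / κ) |s| with hs | hs
  · calc 1 + ρ * (Real.cosh s - 1) ≤ Real.cosh s := by nlinarith
      _ ≤ Real.exp |s| := hcosh
      _ ≤ Real.exp (κ * s ^ 2) := by
        refine Real.exp_le_exp.2 ?_
        rw [← sq_abs]
        have : 1 ≤ κ * |s| := by rwa [div_le_iff₀' hκ] at hs
        nlinarith [abs_nonneg s]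
  · have h1 : Real.cosh s - 1 ≤ s ^ 2 * Real.exp (1 / κ ^ 2) := by
      have h2 : Real.cosh s ≤ Real.exp (s ^ 2) :=
        (Real.cosh_le_exp_half_sq s).trans (Real.exp_le_exp.2 (by linarith [sq_nonneg s]))
      have h3 : Real.exp (s ^ 2) - 1 ≤ s ^ 2 * Real.exp (s ^ 2) := by
        have h4 := mul_le_mul_of_nonneg_right (Real.add_one_le_exp (-s ^ 2))
          (Real.exp_pos (s ^ 2)).le
        rw [← Real.exp_add, neg_add_cancel, Real.exp_zero] at h4
        linarith
      have h5 : s ^ 2 ≤ 1 / κ ^ 2 := by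
        rw [← sq_abs, ← _root_.one_div_pow]
        exact pow_le_pow_left₀ (abs_nonneg s) hs 2
      have h6 := mul_le_mul_of_nonneg_left (Real.exp_le_exp.2 h5) (sq_nonneg s)
      linarith
    have h2 : ρ * (Real.cosh s - 1) ≤ κ * s ^ 2 := by
      calc _ ≤ ρ * (s ^ 2 * Real.exp (1 / κ ^ 2)) := mul_le_mul_of_nonneg_left h1 hρ0
        _ = ρ * Real.exp (1 / κ ^ 2) * s ^ 2 := by ring
        _ ≤ _ := mul_le_mul_of_nonneg_right hρ (sq_nonneg s)
    linarith [Real.add_one_le_exp (κ * s ^ 2)]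

theorem unifProb_norm_sparse_signs_le {α : Type*} [Fintype α] [Nonempty α] {n1 n2 : ℕ}
    (hn : n2 ≤ n1) (hn1 : 0 < n1) {d : α → ℝ} (hd : ∀ a, d a = 0 ∨ d a = 1) {κ : ℝ} (hκ : 0 < κ)
    (hρ : avg d * Real.exp (1 / κ ^ 2) ≤ κ) :
    unifProb (fun y : Fin n1 × Fin n2 → α × Bool =>
      ¬ ‖mat fun e => d (y e).1 * sgn (y e).2‖ ≤ 25 * Real.sqrt (κ * n1)) ≤ Real.exp (-n1) := by
  refine unifProb_norm_le_of_subgaussian hn hn1 _ hκ fun x y => ?_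
  simp only [dotProduct_mat_mulVec]
  have e1 := avg_exp_sum
    (fun (e : Fin n1 × Fin n2) (a : α × Bool) => y e.1 * x e.2 * (d a.1 * sgn a.2))
  refine e1.le.trans ?_
  rw [← dotProduct_self_tensor, dotProduct, Finset.mul_sum, Real.exp_sum]
  refine Finset.prod_le_prod (fun i _ => avg_nonneg fun a => (Real.exp_pos _).le) fun e _ => ?_
  set s := y e.1 * x e.2
  have hd0 : 0 ≤ avg d := avg_nonneg fun a => by rcases hd a with h | h <;> simp [h]
  have hd1 : avg d ≤ 1 := avg_le_of_forall_le fun a => by rcases hd a with h | h <;> simp [h]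
  rw [avg_resample (fun (a : α × Bool) (b : Bool) => (a.1, b)) (fun a => a.2) (fun a b => rfl)
    (fun a b => rfl)]
  have e2 : ∀ a : α × Bool, avg (fun b => Real.exp (s * (d a.1 * sgn b))) =
      1 + (Real.cosh s - 1) * d a.1 := by
    intro a
    rcases hd a.1 with h | h
    · simp [h, avg_const]
    · simp [h, avg, sgn, Real.cosh_eq]
  simp only [e2]
  rw [avg_add, avg_const, avg_const_mul]
  have e3 : avg (fun a : α × Bool => d a.1) = avg d := by
    simp only [avg, Fintype.sum_prod_type, Fintype.card_prod, Fintype.card_bool]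
    simp only [Finset.sum_const, Finset.card_univ, Fintype.card_bool, nsmul_eq_mul, ← Finset.mul_sum]
    push_cast
    rw [mul_comm, mul_div_mul_right _ _ two_ne_zero]
  rw [e3, mul_comm, ← sq]
  exact cosh_sub_one_mul_le hd0 hd1 hκ hρ

end SparseCertificate

section ProductModel

open scoped Matrix.Norms.L2Operator

theorem avg_fst {α β : Type*} [Fintype α] [Fintype β] [Nonempty β] (f : α → ℝ) :
    avg (fun a : α × β => f a.1) = avg f := by
  have h : (Fintype.card β : ℝ) ≠ 0 := Nat.cast_ne_zero.2 Fintype.card_ne_zero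
  simp only [avg, Fintype.sum_prod_type, Fintype.card_prod, Finset.sum_const, Finset.card_univ,
    nsmul_eq_mul, ← Finset.mul_sum]
  push_cast
  rw [mul_comm, mul_div_mul_right _ _ h]

variable {J K : ℕ}

/-- The indicator that no label of the family is zero. -/
def missed (a : Fin J → Fin K) : ℝ := ∏ j, (1 - hit (a j))

theorem missed_eq (a : Fin J → Fin K) : missed a = 0 ∨ missed a = 1 := by
  by_cases h : ∃ j, hit (a j) = 1
  · obtain ⟨j, hj⟩ := h
    exact Or.inl (Finset.prod_eq_zero (Finset.mem_univ j) (by rw [hj, sub_self]))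
  · push Not at h
    refine Or.inr (Finset.prod_eq_one fun j _ => ?_)
    rw [(hit_eq (a j)).resolve_right (h j), sub_zero]

theorem hit_eq_zero_of_missed {a : Fin J → Fin K} (h : missed a = 1) (j : Fin J) :
    hit (a j) = 0 := by
  refine (hit_eq (a j)).resolve_right fun h1 => ?_
  have : missed a = 0 := Finset.prod_eq_zero (Finset.mem_univ j) (by rw [h1, sub_self])
  rw [h] at this
  exact one_ne_zero this

variable [NeZero K]

theorem avg_missed : avg (missed (J := J) (K := K)) = (1 - 1 / K) ^ J := by
  unfold missed
  rw [avg_pi_prod fun _ (k : Fin K) => 1 - hit k]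
  have h : avg (fun k : Fin K => 1 - hit k) = 1 - 1 / K := by
    have : (fun k : Fin K => 1 - hit k) = fun k => 1 + (-1) * hit k := by ext; ring
    rw [this, avg_add, avg_const, avg_const_mul, avg_hit]
    ring
  simp [h]

/-- The batch of labels numbered `j`. -/
def batch {E : Type*} (y : E → (Fin J → Fin K) × Bool) (j : ℕ) : E → Fin K :=
  fun e => if h : j < J then (y e).1 ⟨j, h⟩ else 0

/-- Replace the batch of labels numbered `j`. -/
def setBatch {E : Type*} (j : Fin J) (y : E → (Fin J → Fin K) × Bool) (u : E → Fin K) :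
    E → (Fin J → Fin K) × Bool :=
  fun e => (Function.update (y e).1 j (u e), (y e).2)

theorem batch_setBatch_self {E : Type*} (j : Fin J) (y : E → (Fin J → Fin K) × Bool)
    (u : E → Fin K) : batch (setBatch j y u) j = u := by
  ext e
  simp [batch, setBatch]

theorem batch_setBatch_of_ne {E : Type*} (j : Fin J) (y : E → (Fin J → Fin K) × Bool)
    (u : E → Fin K) {i : ℕ} (hi : i ≠ j) : batch (setBatch j y u) i = batch y i := by
  ext e
  by_cases h : i < J
  · have : (⟨i, h⟩ : Fin J) ≠ j := fun h' => hi (by rw [← h'])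
    simp [batch, setBatch, h, this]
  · simp [batch, h]

variable {n1 n2 : ℕ}

/-- One golfing step halves the entries and keeps the residual small in spectral norm. -/
def GolfStep (P : Matrix (Fin n1 × Fin n2) (Fin n1 × Fin n2) ℝ) (z : Fin n1 × Fin n2 → ℝ) (b : ℝ)
    (j : ℕ) (y : Fin n1 × Fin n2 → (Fin J → Fin K) × Bool) : Prop :=
  (∀ e, |golf P z (batch y) j e| ≤ b * (1 / 2) ^ j) →
    (∀ e, |golf P z (batch y) (j + 1) e| ≤ b * (1 / 2) ^ (j + 1)) ∧
      ‖mat (centered (batch y j) (golf P z (batch y) j))‖ ≤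
        25 * (K * b * Real.sqrt n1) * (1 / 2) ^ j

theorem unifProb_not_golfStep_le (hn : n2 ≤ n1) (hn1 : 0 < n1)
    {P : Matrix (Fin n1 × Fin n2) (Fin n1 × Fin n2) ℝ} (hPs : Pᵀ = P) (hPP : P * P = P) {μ : ℝ}
    (hμ : ∀ e, P e e ≤ μ) (z : Fin n1 × Fin n2 → ℝ) {b τ : ℝ} (hb : 0 < b) (hτ : 0 < τ)
    (hτ1 : τ * (K * μ) ≤ 1) (j : Fin J) :
    unifProb (fun y : Fin n1 × Fin n2 → (Fin J → Fin K) × Bool => ¬ GolfStep P z b j y) ≤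
      Fintype.card (Fin n1 × Fin n2) *
        (2 * (Real.exp (-(τ / 2)) * Real.exp (τ ^ 2 * (K * μ)))) + Real.exp (-n1) := by
  refine unifProb_resample_le (setBatch j) (fun y => batch y j) ?_ (batch_setBatch_self j) _
    fun y => ?_
  · intro y u
    ext e : 1
    simp [setBatch, batch]
  · have hgolf : ∀ u, golf P z (batch (setBatch j y u)) j = golf P z (batch y) j := fun u =>
      golf_congr P z fun i hi => batch_setBatch_of_ne j y u hi.ne
    set Z := golf P z (batch y) j with hZ
    by_cases hZb : ∀ e, |Z e| ≤ b * (1 / 2) ^ (j : ℕ)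
    · have hbj : 0 < b * (1 / 2) ^ (j : ℕ) := by positivity
      refine le_trans (unifProb_mono fun u hu => ?_) ((unifProb_or_le _ _).trans
        (add_le_add (unifProb_projection_centered_le hPs hPP hμ hbj hZb hτ hτ1)
          (unifProb_norm_centered_le hn hn1 hbj hZb)))
      contrapose! hu
      intro _
      rw [golf, hgolf, batch_setBatch_self]
      refine ⟨fun e => (hu.1 e).trans (le_of_eq ?_), hu.2.trans (le_of_eq ?_)⟩
      · rw [pow_succ]; ring
      · ring
    · refine le_trans (unifProb_mono (F := fun _ => False) fun u hu => ?_) ?_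
      · refine hu fun h => (hZb ?_).elim
        rwa [hgolf] at h
      · rw [show unifProb (fun _ : Fin n1 × Fin n2 → Fin K => False) = 0 by simp [unifProb]]
        positivity

theorem golf_bounds {P : Matrix (Fin n1 × Fin n2) (Fin n1 × Fin n2) ℝ} {z : Fin n1 × Fin n2 → ℝ}
    {b : ℝ} (hz : ∀ e, |z e| ≤ b) {y : Fin n1 × Fin n2 → (Fin J → Fin K) × Bool}
    (h : ∀ j < J, GolfStep P z b j y) :
    ∀ j ≤ J, ∀ e, |golf P z (batch y) j e| ≤ b * (1 / 2) ^ j := by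
  intro j
  induction j with
  | zero => intro _ e; simpa [golf] using hz e
  | succ j ih => intro hj; exact (h j (by omega) (ih (by omega))).1

/-- The sparse corruption in the product model. -/
def productSparse (a : Fin n1 × Fin n2 → ℝ) (y : Fin n1 × Fin n2 → (Fin J → Fin K) × Bool) :
    Matrix (Fin n1) (Fin n2) ℝ :=
  mat fun e => missed (y e).1 * (sgn (y e).2 * a e)

theorem unifProb_not_strictlyRecovered_le {r : ℕ} (hn : n2 ≤ n1) (hn1 : 1 < n1) (hn2 : 0 < n2)
    {U : Matrix (Fin n1) (Fin r) ℝ} {V : Matrix (Fin n2) (Fin r) ℝ} {σ : Fin r → ℝ}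
    {a : Fin n1 × Fin n2 → ℝ} (hU : Uᵀ * U = 1) (hV : Vᵀ * V = 1) (hσ : ∀ k, 0 < σ k)
    (ha : ∀ e, 0 < a e) {μ : ℝ} (hμ : ∀ e, (1 - perpProj U V) e e ≤ μ) {b : ℝ} (hb : 0 < b)
    (hUV : ∀ e, |entries (U * Vᵀ) e| ≤ b) (hbK : K * b * Real.sqrt n1 ≤ 1 / 800)
    (hJ : n1 * (1 / 2 : ℝ) ^ J ≤ 1) {τ₁ τ₂ p : ℝ} (hτ₁ : 0 < τ₁) (hτ₁K : τ₁ * (K * μ) ≤ 1)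
    (hτ₂ : 0 < τ₂)
    (hp : unifProb (fun y : Fin n1 × Fin n2 → (Fin J → Fin K) × Bool => ¬ ∀ z,
      ∑ e, missed (y e).1 * ((1 - perpProj U V) *ᵥ z) e ^ 2 ≤ (1 / 400) ^ 2 * (z ⬝ᵥ z)) ≤ p)
    (hρ : (1 - 1 / K : ℝ) ^ J * Real.exp (40000 ^ 2) ≤ 1 / 40000) :
    unifProb (fun y : Fin n1 × Fin n2 → (Fin J → Fin K) × Bool =>
      ¬ StrictlyRecovered (Real.sqrt n1)⁻¹ (U * diagonal σ * Vᵀ) (productSparse a y)) ≤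
    p + J * (n1 * n2 * (2 * (Real.exp (-(τ₁ / 2)) * Real.exp (τ₁ ^ 2 * (K * μ)))) +
        Real.exp (-n1)) +
      (n1 * n2 * (2 * (Real.exp (-(τ₂ / 4)) * Real.exp (τ₂ ^ 2 * (4 * μ)))) + Real.exp (-n1)) +
      Real.exp (-n1) := by
  have hn1' : 0 < n1 := by omega
  set Q := perpProj U V with hQ
  have hQs : Qᵀ = Q := perpProj_transpose U V
  have hQQ : Q * Q = Q := perpProj_mul_self hU hV
  set P := 1 - Q with hP
  have hPs : Pᵀ = P := by rw [hP, transpose_sub, transpose_one, hQs]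
  have hPP : P * P = P := by rw [hP, Matrix.sub_mul, Matrix.mul_sub Q, hQQ]; simp
  have hcard : (Fintype.card (Fin n1 × Fin n2) : ℝ) = n1 * n2 := by simp
  set z := entries (U * Vᵀ) with hz
  have hPz : P *ᵥ z = z := by
    rw [hP, sub_mulVec, one_mulVec, perpProj_mulVec_entries hU, sub_zero]
  have hgolf := unifProb_exists_le_card_mul (Finset.univ : Finset (Fin J))
    (fun j (y : Fin n1 × Fin n2 → (Fin J → Fin K) × Bool) => ¬ GolfStep P z b j y)
    fun j _ => unifProb_not_golfStep_le hn hn1' hPs hPP hμ z hb hτ₁ hτ₁K j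
  rw [Finset.card_univ, Fintype.card_fin, hcard] at hgolf
  have hsign : unifProb (fun y : Fin n1 × Fin n2 → (Fin J → Fin K) × Bool =>
      ¬ ((∀ z, ∑ e, missed (y e).1 * (P *ᵥ z) e ^ 2 ≤ (1 / 400) ^ 2 * (z ⬝ᵥ z)) →
        ∃ X : Fin n1 × Fin n2 → ℝ, (∀ e, missed (y e).1 = 0 → X e = 0) ∧
          (∀ e, missed (y e).1 = 1 → (X - P *ᵥ X) e = sgn (y e).2) ∧
          (∀ e, |(P *ᵥ X) e| ≤ 1 / 4) ∧
          ‖mat (X - fun e => missed (y e).1 * sgn (y e).2)‖ ≤ Real.sqrt n1 / 8)) ≤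
      n1 * n2 * (2 * (Real.exp (-(τ₂ / 4)) * Real.exp (τ₂ ^ 2 * (4 * μ)))) + Real.exp (-n1) := by
    refine unifProb_resample_le (fun y (u : Fin n1 × Fin n2 → Bool) => fun e => ((y e).1, u e))
      (fun y e => (y e).2) (fun y u => rfl) (fun y u => rfl) _ fun y => ?_
    by_cases hC : ∀ z, ∑ e, missed (y e).1 * (P *ᵥ z) e ^ 2 ≤ (1 / 400) ^ 2 * (z ⬝ᵥ z)
    · have h := unifProb_sign_certificate_le hn hn1' hn2 hPs hPP hμ
        (fun e => missed_eq (y e).1) hC hτ₂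
      rw [hcard] at h
      refine le_trans (unifProb_mono fun u hu hX => hu fun _ => hX) h
    · refine le_trans (unifProb_mono (F := fun _ => False) fun u hu => hu fun h => (hC h).elim) ?_
      rw [show unifProb (fun _ : Fin n1 × Fin n2 → Bool => False) = 0 by simp [unifProb]]
      positivity
  have hnorm := unifProb_norm_sparse_signs_le hn hn1' (d := missed (J := J) (K := K)) missed_eq
    (κ := 1 / 40000) (by norm_num) (by rw [avg_missed]; norm_num at hρ ⊢; exact hρ)
  refine le_trans (unifProb_mono fun y hy => ?_) ((unifProb_or_le _ _).trans (add_le_add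
    ((unifProb_or_le _ _).trans (add_le_add ((unifProb_or_le _ _).trans
      (add_le_add hp hgolf)) hsign)) hnorm))
  contrapose! hy
  obtain ⟨⟨⟨hC, hG⟩, hS⟩, hN⟩ := hy
  obtain ⟨X, hX0, hX1, hXP, hXn⟩ := hS hC
  have hG' : ∀ j < J, GolfStep P z b j y := fun j hj => hG ⟨j, hj⟩ (Finset.mem_univ _)
  have hbd := golf_bounds hUV hG'
  set q := Real.sqrt n1 with hq
  have hq1 : 1 < q := by
    rw [hq, Real.lt_sqrt zero_le_one, one_pow]
    exact_mod_cast hn1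
  have hq0 : 0 < q := by linarith
  have hqq : q * q = n1 := Real.mul_self_sqrt (Nat.cast_nonneg _)
  have hK : (1 : ℝ) ≤ K := Nat.one_le_cast.2 (Nat.one_le_iff_ne_zero.2 (NeZero.ne K))
  have hKb : K * b ≤ 1 / 800 * q⁻¹ := by
    rw [← div_eq_mul_inv, le_div_iff₀ hq0]
    exact hbK
  have hbq : b ≤ 1 / 800 * q⁻¹ := (le_mul_of_one_le_left hb.le hK).trans hKb
  set Y := golfSum P z (batch y) J with hY
  have hYn : ‖mat (Q *ᵥ Y)‖ ≤ 1 / 16 := by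
    have := norm_mat_perp_golfSum_le hU hV hPz (x := batch y) (J := J)
      (c := 25 * (K * b * q)) (by positivity) (fun j hj => (hG' j hj (hbd j hj.le)).2)
    exact this.trans (by linarith)
  have hXn' : ‖mat (Q *ᵥ X)‖ ≤ q / 4 := by
    refine (norm_mat_perpProj_mulVec_le hU hV X).trans ?_
    have e1 : mat X = mat (X - fun e => missed (y e).1 * sgn (y e).2) +
        mat (fun e => missed (y e).1 * sgn (y e).2) := by
      ext i j
      simp [mat]
    rw [e1]
    have e2 : 25 * Real.sqrt (1 / 40000 * n1) = q / 8 := by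
      rw [show (1 / 40000 : ℝ) = (1 / 200) ^ 2 by norm_num, Real.sqrt_mul (sq_nonneg _),
        Real.sqrt_sq (by norm_num), hq]
      ring
    rw [e2] at hN
    exact (norm_add_le _ _).trans (by linarith)
  have hZJ := golf_eq_sub hPP hPz (batch y) J
  have hQX : ∀ x : Fin n1 × Fin n2 → ℝ, Q *ᵥ x = x - P *ᵥ x := by
    intro x
    rw [hP, sub_mulVec, one_mulVec, sub_sub_cancel]
  have hcert : z + Q *ᵥ (Y + q⁻¹ • X) = golf P z (batch y) J + Y + q⁻¹ • (X - P *ᵥ X) := by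
    rw [mulVec_add, mulVec_smul, hQX, hQX, hZJ]
    abel
  have hY0 : ∀ e, missed (y e).1 = 1 → Y e = 0 := by
    intro e he
    refine Finset.sum_eq_zero fun j hj => ?_
    have hj' := Finset.mem_range.1 hj
    have : hit (batch y j e) = 0 := by
      simpa [batch, hj'] using hit_eq_zero_of_missed he ⟨j, hj'⟩
    rw [this]
    ring
  refine strictlyRecovered_of_certificate hU hV hσ (inv_pos.2 hq0) (inv_lt_one_of_one_lt₀ hq1)
    (d := fun e => missed (y e).1) (s := fun e => sgn (y e).2) (w := Y + q⁻¹ • X)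
    (fun e => missed_eq _) (fun e => (abs_sgn _).le) ?_ ?_ ?_ ?_ ?_ ?_
  · intro e he
    simp only [productSparse, entries_mat]
    rw [he, one_mul, abs_mul, abs_sgn, one_mul, abs_of_pos (ha e), ← mul_assoc]
    cases (y e).2 <;> simp [sgn]
  · intro e he
    simp only [productSparse, entries_mat]
    rw [he, zero_mul]
  · intro x
    refine (hC x).trans (mul_le_mul_of_nonneg_right (by norm_num) (dotProduct_self_nonneg' x))
  · have e1 : mat (Q *ᵥ (Y + q⁻¹ • X)) = mat (Q *ᵥ Y) + q⁻¹ • mat (Q *ᵥ X) := by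
      rw [mulVec_add, mulVec_smul]
      rfl
    rw [e1]
    refine (norm_add_le _ _).trans ?_
    rw [norm_smul, Real.norm_of_nonneg (inv_pos.2 hq0).le]
    have : q⁻¹ * ‖mat (Q *ᵥ X)‖ ≤ 1 / 4 := by
      calc _ ≤ q⁻¹ * (q / 4) := mul_le_mul_of_nonneg_left hXn' (inv_pos.2 hq0).le
        _ = 1 / 4 := by field_simp
    linarith
  · have e1 : ∀ e, missed (y e).1 * ((z + Q *ᵥ (Y + q⁻¹ • X)) e - q⁻¹ * sgn (y e).2) ^ 2 ≤
        (b * (1 / 2) ^ J) ^ 2 := by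
      intro e
      rcases missed_eq (y e).1 with h | h
      · rw [h, zero_mul]; positivity
      · rw [h, hcert]
        have h1 := hX1 e h
        simp only [Pi.add_apply, Pi.smul_apply, smul_eq_mul, h1, hY0 e h]
        rw [one_mul, add_zero, add_sub_cancel_right]
        exact sq_le_sq.2 ((hbd J le_rfl e).trans (le_abs_self _))
    refine (Finset.sum_le_sum fun e _ => e1 e).trans ?_
    rw [Finset.sum_const, nsmul_eq_mul, Finset.card_univ, hcard]
    have h2 : (n1 * n2 : ℝ) ≤ n1 * n1 := by gcongr
    calc (n1 * n2 : ℝ) * (b * (1 / 2) ^ J) ^ 2 ≤ n1 * n1 * (b * (1 / 2) ^ J) ^ 2 :=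
          mul_le_mul_of_nonneg_right h2 (sq_nonneg _)
      _ = (b * (n1 * (1 / 2) ^ J)) ^ 2 := by ring
      _ ≤ (b * 1) ^ 2 := by gcongr
      _ ≤ (q⁻¹ / 4) ^ 2 := by
        gcongr
        have := inv_pos.2 hq0
        linarith
  · intro e he
    rw [hcert]
    simp only [Pi.add_apply, Pi.smul_apply, Pi.sub_apply, smul_eq_mul, hX0 e he, zero_sub]
    have h1 := hbd J le_rfl e
    have h2 := abs_golfSum_le hbd hb.le e
    have h3 : |q⁻¹ * -(P *ᵥ X) e| ≤ q⁻¹ * (1 / 4) := by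
      rw [abs_mul, abs_neg, abs_of_pos (inv_pos.2 hq0)]
      exact mul_le_mul_of_nonneg_left (hXP e) (inv_pos.2 hq0).le
    have h4 : b * (1 / 2) ^ J ≤ b := mul_le_of_le_one_right hb.le
      (pow_le_one₀ (by norm_num) (by norm_num))
    have h5 := inv_pos.2 hq0
    have h6 := abs_add_le (golf P z (batch y) J e + Y e) (q⁻¹ * -(P *ᵥ X) e)
    have h7 := abs_add_le (golf P z (batch y) J e) (Y e)
    linarith

end ProductModel

section Transfer

theorem exists_perm_map_eq {E : Type*} [Fintype E] [DecidableEq E] {S T : Finset E}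
    (h : S.card = T.card) : ∃ τ : Equiv.Perm E, S.map τ.toEmbedding = T := by
  have e : {x // x ∈ S} ≃ {x // x ∈ T} := Fintype.equivOfCardEq (by simpa using h)
  refine ⟨e.extendSubtype, Finset.eq_of_subset_of_card_le ?_ (by simp [h])⟩
  intro x hx
  obtain ⟨a, ha, rfl⟩ := Finset.mem_map.1 hx
  exact e.extendSubtype_mem a ha

/-- A uniformly random permutation maps a fixed set to a uniformly random set of its size. -/
theorem avg_perm_map {E : Type*} [Fintype E] [DecidableEq E] (W : Finset E → ℝ) {T : Finset E}
    {m : ℕ} (hT : T.card = m) :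
    avg (fun π : Equiv.Perm E => W (T.map π.toEmbedding)) =
      avg (fun S : {S : Finset E // S.card = m} => W S.1) := by
  have hconst : ∀ S : {S : Finset E // S.card = m},
      avg (fun π : Equiv.Perm E => W (S.1.map π.toEmbedding)) =
        avg (fun π : Equiv.Perm E => W (T.map π.toEmbedding)) := by
    intro S
    obtain ⟨τ, rfl⟩ := exists_perm_map_eq (S.2.trans hT.symm)
    unfold avg
    congr 1
    refine (Fintype.sum_equiv (Equiv.mulRight τ) _ _ fun π => ?_).symm
    rw [Finset.map_map]
    rfl
  have hperm : ∀ π : Equiv.Perm E,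
      avg (fun S : {S : Finset E // S.card = m} => W (S.1.map π.toEmbedding)) =
        avg (fun S : {S : Finset E // S.card = m} => W S.1) := by
    intro π
    unfold avg
    congr 1
    refine Fintype.sum_equiv (π.finsetCongr.subtypeEquiv fun S => ?_) _ _ fun S => ?_
    · simp
    · simp
  have : Nonempty {S : Finset E // S.card = m} := ⟨⟨T, hT⟩⟩
  calc avg (fun π : Equiv.Perm E => W (T.map π.toEmbedding))
      = avg (fun S : {S : Finset E // S.card = m} =>
          avg (fun π : Equiv.Perm E => W (S.1.map π.toEmbedding))) := by
        simp only [hconst, avg_const]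
    _ = avg (fun π : Equiv.Perm E =>
          avg (fun S : {S : Finset E // S.card = m} => W (S.1.map π.toEmbedding))) := by
        unfold avg
        simp only [← Finset.sum_div]
        rw [Finset.sum_comm, div_right_comm]
    _ = avg (fun S : {S : Finset E // S.card = m} => W S.1) := by
        simp only [hperm, avg_const]

/-- Averages of an increasing set function over random sets of size `m` are controlled by its
average over a binomial random set, provided the latter has at least `m` elements. -/
theorem unifProb_card_mul_avg_le {E A : Type*} [Fintype E] [DecidableEq E] [Fintype A]
    {W : Finset E → ℝ} (hW0 : ∀ S, 0 ≤ W S) (hW : ∀ S T, S ⊆ T → W S ≤ W T) (D : A → Prop)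
    [DecidablePred D] (m : ℕ) :
    unifProb (fun x : E → A => m ≤ (Finset.univ.filter fun e => D (x e)).card) *
        avg (fun S : {S : Finset E // S.card = m} => W S.1) ≤
      avg (fun x : E → A => W (Finset.univ.filter fun e => D (x e))) := by
  have hinv : ∀ π : Equiv.Perm E,
      avg (fun x : E → A => W ((Finset.univ.filter fun e => D (x e)).map π.toEmbedding)) =
        avg (fun x : E → A => W (Finset.univ.filter fun e => D (x e))) := by
    intro π
    unfold avg
    congr 1
    refine Fintype.sum_equiv (Equiv.arrowCongr π (Equiv.refl A)) _ _ fun x => ?_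
    congr 1
    ext e
    simp [Equiv.arrowCongr]
  calc unifProb (fun x : E → A => m ≤ (Finset.univ.filter fun e => D (x e)).card) *
        avg (fun S : {S : Finset E // S.card = m} => W S.1)
      = avg (fun x : E → A => if m ≤ (Finset.univ.filter fun e => D (x e)).card then
          avg (fun S : {S : Finset E // S.card = m} => W S.1) else 0) := by
        rw [unifProb_eq_avg, mul_comm, ← avg_const_mul]
        simp
    _ ≤ avg (fun x : E → A => avg (fun π : Equiv.Perm E =>
          W ((Finset.univ.filter fun e => D (x e)).map π.toEmbedding))) := by
        refine avg_mono fun x => ?_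
        split_ifs with h
        · obtain ⟨T, hTs, hT⟩ := Finset.exists_subset_card_eq h
          rw [← avg_perm_map W hT]
          exact avg_mono fun π => hW _ _ (Finset.map_subset_map.2 hTs)
        · exact avg_nonneg fun _ => hW0 _
    _ = avg (fun π : Equiv.Perm E => avg (fun x : E → A =>
          W ((Finset.univ.filter fun e => D (x e)).map π.toEmbedding))) := by
        unfold avg
        simp only [← Finset.sum_div]
        rw [Finset.sum_comm, div_right_comm]
    _ = avg (fun x : E → A => W (Finset.univ.filter fun e => D (x e))) := by
        simp only [hinv, avg_const]

theorem unifProb_card_lt_le {E A : Type*} [Fintype E] [DecidableEq E] [Fintype A] [Nonempty A]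
    (D : A → Prop) [DecidablePred D] {ρ : ℝ} (hρ : avg (fun a => if D a then (1 : ℝ) else 0) = ρ)
    (m : ℕ) :
    unifProb (fun x : E → A => (Finset.univ.filter fun e => D (x e)).card < m) ≤
      Real.exp (m - Fintype.card E * (ρ / 2)) := by
  have hexp : avg (fun a => Real.exp (-(if D a then (1 : ℝ) else 0))) ≤ Real.exp (-(ρ / 2)) := by
    have h1 : Real.exp (-1) ≤ 1 / 2 := by
      have := Real.exp_neg_one_lt_d9
      linarith
    have h2 : ∀ a, Real.exp (-(if D a then (1 : ℝ) else 0)) ≤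
        1 + (-1 / 2) * (if D a then (1 : ℝ) else 0) := fun a => by
      split_ifs
      · linarith
      · simp
    refine (avg_mono h2).trans ?_
    rw [avg_add, avg_const, avg_const_mul, hρ]
    have := Real.add_one_le_exp (-(ρ / 2))
    linarith
  have hcard : ∀ x : E → A, ((Finset.univ.filter fun e => D (x e)).card : ℝ) =
      ∑ e, if D (x e) then (1 : ℝ) else 0 := fun x => by simp
  calc unifProb (fun x : E → A => (Finset.univ.filter fun e => D (x e)).card < m)
      ≤ unifProb (fun x : E → A => -(m : ℝ) < ∑ e, -(if D (x e) then (1 : ℝ) else 0)) := by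
        refine unifProb_mono fun x hx => ?_
        rw [Finset.sum_neg_distrib, ← hcard, neg_lt_neg_iff]
        exact_mod_cast hx
    _ ≤ Real.exp (- -(m : ℝ)) *
          ∏ _e : E, avg (fun a => Real.exp (-(if D a then (1 : ℝ) else 0))) := by
        refine (unifProb_lt_le_exp _ _).trans (le_of_eq ?_)
        rw [avg_exp_sum fun (_ : E) a => -(if D a then (1 : ℝ) else 0)]
    _ ≤ Real.exp (- -(m : ℝ)) * Real.exp (-(ρ / 2)) ^ Fintype.card E := by
        rw [Finset.prod_const, Finset.card_univ]
        gcongr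
        exact avg_nonneg fun _ => (Real.exp_pos _).le
    _ = Real.exp (m - Fintype.card E * (ρ / 2)) := by
        rw [← Real.exp_nat_mul, ← Real.exp_add]
        ring_nf

variable {n1 n2 m : ℕ}

/-- The matrix supported on `S` with the given magnitudes and signs. -/
def signedSparse (a : Fin n1 × Fin n2 → ℝ) (S : Finset (Fin n1 × Fin n2))
    (s : Fin n1 × Fin n2 → Bool) : Matrix (Fin n1) (Fin n2) ℝ :=
  mat fun e => if e ∈ S then sgn (s e) * a e else 0

theorem sparseOf_eq (a : Fin n1 × Fin n2 → ℝ) (ω : SampleSpace n1 n2 m) :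
    sparseOf a ω = signedSparse a ω.1.1 ω.2 := by
  ext i j
  by_cases h : ω.2 (i, j) <;> simp [sparseOf, signedSparse, mat, sgn, h]

theorem productSparse_eq {J K : ℕ} (a : Fin n1 × Fin n2 → ℝ)
    (y : Fin n1 × Fin n2 → (Fin J → Fin K) × Bool) :
    productSparse a y =
      signedSparse a (Finset.univ.filter fun e => missed (y e).1 = 1) fun e => (y e).2 := by
  ext i j
  rcases missed_eq (y (i, j)).1 with h | h <;> simp [productSparse, signedSparse, mat, h]

/-- Failure under the uniform support model is at most twice as likely as under the product
model with a slightly larger expected support. -/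
theorem unifProb_sparseOf_le {J K : ℕ} [NeZero K] {lam : ℝ} (hlam : 0 ≤ lam)
    (L0 : Matrix (Fin n1) (Fin n2) ℝ) (a : Fin n1 × Fin n2 → ℝ) {ρ : ℝ}
    (hρ : (1 - 1 / (K : ℝ)) ^ J = ρ)
    (hm : Real.exp (m - n1 * n2 * (ρ / 2)) ≤ 1 / 2) :
    unifProb (fun ω : SampleSpace n1 n2 m => ¬ StrictlyRecovered lam L0 (sparseOf a ω)) ≤
      2 * unifProb (fun y : Fin n1 × Fin n2 → (Fin J → Fin K) × Bool =>
        ¬ StrictlyRecovered lam L0 (productSparse a y)) := by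
  classical
  set W : Finset (Fin n1 × Fin n2) → ℝ := fun S =>
    unifProb fun s => ¬ StrictlyRecovered lam L0 (signedSparse a S s) with hWdef
  have hW : ∀ S T, S ⊆ T → W S ≤ W T := by
    refine fun S T hST => unifProb_mono fun s => mt fun h => h.mono hlam fun i j => ?_
    by_cases hS : (i, j) ∈ S
    · left
      simp [signedSparse, mat, hS, hST hS]
    · right
      simp [signedSparse, mat, hS]
  let D : (Fin J → Fin K) × Bool → Prop := fun b => missed b.1 = 1
  have hlhs : unifProb (fun ω : SampleSpace n1 n2 m =>
      ¬ StrictlyRecovered lam L0 (sparseOf a ω)) =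
      avg fun S : {S : Finset (Fin n1 × Fin n2) // S.card = m} => W S.1 := by
    simp only [sparseOf_eq, hWdef, unifProb_eq_avg]
    unfold avg
    rw [Fintype.sum_prod_type, Fintype.card_prod, ← Finset.sum_div, div_div, Nat.cast_mul, mul_comm]
  have hrhs : unifProb (fun y : Fin n1 × Fin n2 → (Fin J → Fin K) × Bool =>
      ¬ StrictlyRecovered lam L0 (productSparse a y)) =
      avg fun y : Fin n1 × Fin n2 → (Fin J → Fin K) × Bool =>
        W (Finset.univ.filter fun e => D (y e)) := by
    rw [unifProb_eq_avg, avg_resample (β := Fin n1 × Fin n2 → Bool)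
      (fun y s e => ((y e).1, s e)) (fun y e => (y e).2) (fun _ _ => rfl) (fun _ _ => rfl)]
    refine congrArg avg (funext fun y => ?_)
    simp only [hWdef, unifProb_eq_avg, productSparse_eq]
    rfl
  have hD : avg (fun b => if D b then (1 : ℝ) else 0) = ρ := by
    rw [← hρ, ← avg_missed (J := J) (K := K), ← avg_fst (β := Bool) missed]
    refine congrArg avg (funext fun b => ?_)
    rcases missed_eq b.1 with h | h <;> simp [D, h]
  have hhalf : 1 / 2 ≤ unifProb fun x : Fin n1 × Fin n2 → (Fin J → Fin K) × Bool =>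
      m ≤ (Finset.univ.filter fun e => D (x e)).card := by
    have h := (unifProb_card_lt_le (E := Fin n1 × Fin n2) D hD m).trans
      (le_of_eq_of_le (by simp) hm)
    simp only [← not_le] at h
    rw [unifProb_not] at h
    linarith
  have hmain := unifProb_card_mul_avg_le (fun S => unifProb_nonneg _) hW D m
  rw [hlhs, hrhs]
  have h0 : 0 ≤ avg fun S : {S : Finset (Fin n1 × Fin n2) // S.card = m} => W S.1 :=
    avg_nonneg fun S => unifProb_nonneg _
  nlinarith

end Transfer

section Recovery

theorem one_sub_perpProj_apply_self_le {n1 n2 r : ℕ} (U : Matrix (Fin n1) (Fin r) ℝ)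
    (V : Matrix (Fin n2) (Fin r) ℝ) (e : Fin n1 × Fin n2) :
    (1 - perpProj U V) e e ≤ (∑ k, U e.1 k ^ 2) + ∑ k, V e.2 k ^ 2 := by
  have hU : 0 ≤ ∑ k, U e.1 k ^ 2 := Finset.sum_nonneg fun k _ => sq_nonneg _
  have hV : 0 ≤ ∑ k, V e.2 k ^ 2 := Finset.sum_nonneg fun k _ => sq_nonneg _
  have h : (1 - perpProj U V) e e =
      1 - (1 - ∑ k, U e.1 k ^ 2) * (1 - ∑ k, V e.2 k ^ 2) := by
    simp [perpProj, kronecker, kroneckerMap_apply, mul_apply, sq]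
  rw [h]
  nlinarith [mul_nonneg hU hV]

theorem exp_neg_two_mul_le_one_sub {x : ℝ} (hx0 : 0 ≤ x) (hx : x ≤ 1 / 2) :
    Real.exp (-(2 * x)) ≤ 1 - x := by
  have h1 : (1 - x)⁻¹ ≤ Real.exp (2 * x) := by
    refine le_trans ?_ (Real.add_one_le_exp _)
    rw [inv_le_iff_one_le_mul₀ (by linarith)]
    nlinarith
  rw [Real.exp_neg]
  exact inv_le_of_inv_le₀ (by linarith) h1

theorem one_sub_inv_pow_mul_bounds {K : ℕ} (hK : 2 ≤ K) (c : ℕ) :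
    Real.exp (-(2 * c)) ≤ (1 - 1 / (K : ℝ)) ^ (c * K) ∧
      (1 - 1 / (K : ℝ)) ^ (c * K) ≤ Real.exp (-c) := by
  have hK' : (2 : ℝ) ≤ K := by exact_mod_cast hK
  have hK0 : (K : ℝ) ≠ 0 := by positivity
  have hx : 1 / (K : ℝ) ≤ 1 / 2 := one_div_le_one_div_of_le (by norm_num) hK'
  constructor
  · calc Real.exp (-(2 * c)) = Real.exp (-(2 * (1 / (K : ℝ)))) ^ (c * K) := by
          rw [← Real.exp_nat_mul]
          congr 1
          push_cast
          field_simp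
      _ ≤ _ := pow_le_pow_left₀ (Real.exp_pos _).le
          (exp_neg_two_mul_le_one_sub (by positivity) hx) _
  · calc (1 - 1 / (K : ℝ)) ^ (c * K) ≤ Real.exp (-(1 / (K : ℝ))) ^ (c * K) := by
          refine pow_le_pow_left₀ (by linarith) ?_ _
          have := Real.add_one_le_exp (-(1 / (K : ℝ)))
          linarith
      _ = Real.exp (-c) := by
          rw [← Real.exp_nat_mul]
          congr 1
          push_cast
          field_simp

theorem exp_neg_natCast_le_factorial_mul {n : ℕ} (hn : 0 < n) (k : ℕ) :
    Real.exp (-n) ≤ k.factorial * ((n : ℝ) ^ k)⁻¹ := by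
  have h := Real.pow_div_factorial_le_exp (n : ℝ) (by positivity) k
  rw [Real.exp_neg, inv_le_comm₀ (Real.exp_pos _) (by positivity)]
  refine le_trans (le_of_eq ?_) h
  rw [mul_inv, inv_inv]
  field_simp

theorem exp_neg_natCast_mul_log {n : ℕ} (hn : 0 < n) (k : ℕ) :
    Real.exp (-(k * Real.log n)) = ((n : ℝ) ^ k)⁻¹ := by
  rw [Real.exp_neg, Real.exp_nat_mul, Real.exp_log (by positivity)]

/-- The level of the auxiliary regularization in the compression bound. -/
noncomputable def regLevel : ℝ := (1 / 400) ^ 2 * Real.exp (-16)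

theorem regLevel_pos : 0 < regLevel := by
  unfold regLevel
  positivity

theorem regLevel_le : regLevel ≤ 1 / 160000 := by
  have : Real.exp (-16) ≤ 1 := Real.exp_le_one_iff.2 (by norm_num)
  unfold regLevel
  linarith

theorem unifProb_compression_le {n1 n2 r J K : ℕ} [NeZero K] (hn : n2 ≤ n1) (hn1 : 0 < n1)
    (hK : Real.log n1 ≤ K) {U : Matrix (Fin n1) (Fin r) ℝ} {V : Matrix (Fin n2) (Fin r) ℝ}
    (hU : Uᵀ * U = 1) (hV : Vᵀ * V = 1) {μ : ℝ} (hμ0 : 0 ≤ μ)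
    (hμ : ∀ e, (1 - perpProj U V) e e ≤ μ)
    (hμK : K * μ ≤ regLevel ^ 2 / 2) (hρ : (1 - 1 / (K : ℝ)) ^ J ≤ regLevel) :
    unifProb (fun y : Fin n1 × Fin n2 → (Fin J → Fin K) × Bool => ¬ ∀ z,
      ∑ e, missed (y e).1 * ((1 - perpProj U V) *ᵥ z) e ^ 2 ≤ (1 / 400) ^ 2 * (z ⬝ᵥ z)) ≤
      ((n1 : ℝ) ^ 12)⁻¹ := by
  have hs0 := regLevel_pos
  have hs1 := regLevel_le
  have hn1' : (0 : ℝ) < n1 := by exact_mod_cast hn1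
  set s := regLevel with hs
  have hPs : (1 - perpProj U V)ᵀ = 1 - perpProj U V := by
    rw [transpose_sub, transpose_one, perpProj_transpose]
  have hPP : (1 - perpProj U V) * (1 - perpProj U V) = 1 - perpProj U V := by
    rw [Matrix.sub_mul, Matrix.mul_sub (perpProj U V), perpProj_mul_self hU hV]
    simp
  have hp : (1 + μ / s) ^ K ≤ 1 + s := by
    have hx0 : 0 ≤ K * (μ / s) := by positivity
    have hx : K * (μ / s) ≤ s / 2 := by
      rw [← mul_div_assoc, div_le_iff₀ hs0]
      nlinarith
    calc (1 + μ / s) ^ K ≤ Real.exp (μ / s) ^ K := by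
          gcongr
          have := Real.add_one_le_exp (μ / s)
          linarith
      _ = Real.exp (K * (μ / s)) := by rw [← Real.exp_nat_mul]
      _ ≤ 1 + s := by
          have h1 := Real.abs_exp_sub_one_le (x := K * (μ / s))
            (by rw [abs_of_nonneg hx0]; linarith)
          rw [abs_of_nonneg hx0] at h1
          have := (abs_le.1 h1).2
          linarith
  have h := projection_chernoff (α := (Fin J → Fin K) × Bool) hPs hPP hμ
    (δ := fun a => missed a.1) (t := 2 * s) (η := s) (s := s) (σ := (1 / 400) ^ 2) (p := K)
    (fun a => by rcases missed_eq a.1 with h | h <;> simp [h])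
    (fun a => by rcases missed_eq a.1 with h | h <;> simp [h])
    (by linarith) (by linarith) (by rw [avg_fst, avg_missed]; linarith) hs0 (by norm_num) hp
  refine h.trans ?_
  have hratio : (2 * s + s) / ((1 / 400) ^ 2 + s) ≤ Real.exp (-14) := by
    have h3 : (3 : ℝ) ≤ Real.exp 2 := by
      have := Real.add_one_le_exp (2 : ℝ)
      linarith
    have h14 : Real.exp (-14) = Real.exp 2 * Real.exp (-16) := by
      rw [← Real.exp_add]
      norm_num
    rw [div_le_iff₀ (by positivity), h14]
    have h16 := Real.exp_pos (-16)
    have : 3 * s ≤ Real.exp 2 * Real.exp (-16) * (1 / 400) ^ 2 := by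
      rw [hs, regLevel]
      nlinarith
    have h0 : 0 ≤ Real.exp 2 * Real.exp (-16) * s := by positivity
    linarith
  have hpow : ((2 * s + s) / ((1 / 400) ^ 2 + s)) ^ K ≤ ((n1 : ℝ) ^ 14)⁻¹ := by
    calc ((2 * s + s) / ((1 / 400) ^ 2 + s)) ^ K ≤ Real.exp (-14) ^ K := by gcongr
      _ = Real.exp (-(14 * K)) := by
          rw [← Real.exp_nat_mul]
          ring_nf
      _ ≤ Real.exp (-((14 : ℕ) * Real.log n1)) := by
          refine Real.exp_le_exp.2 ?_
          push_cast
          linarith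
      _ = ((n1 : ℝ) ^ 14)⁻¹ := exp_neg_natCast_mul_log hn1 14
  have hcard : (Fintype.card (Fin n1 × Fin n2) : ℝ) ≤ n1 ^ 2 := by
    simp only [Fintype.card_prod, Fintype.card_fin]
    exact_mod_cast (Nat.mul_le_mul_left n1 hn).trans (by rw [sq])
  calc (Fintype.card (Fin n1 × Fin n2) : ℝ) * ((2 * s + s) / ((1 / 400) ^ 2 + s)) ^ K
      ≤ n1 ^ 2 * ((n1 : ℝ) ^ 14)⁻¹ := by gcongr
    _ = ((n1 : ℝ) ^ 12)⁻¹ := by field_simp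

/-- The constant in the failure probability of the product model with `c` rounds per label. -/
noncomputable def failureConst (c : ℕ) : ℝ :=
  3 + 2 * c * (2 + (11).factorial) + 2 * (11).factorial

/-- Failure probability of exact recovery under the product model. -/
theorem unifProb_productSparse_le {n1 n2 r K c : ℕ} [NeZero K] (hn : n2 ≤ n1) (hn2 : 0 < n2)
    (hn1 : 1 < n1) (hL : 1 ≤ Real.log n1) (hLK : Real.log n1 ≤ K) (hK2 : 2 ≤ K)
    (hK : K ≤ 2 * Real.log n1) (hc : 2 ≤ c) (hcs : Real.exp (-c) ≤ regLevel)
    (hce : Real.exp (-c) * Real.exp (40000 ^ 2) ≤ 1 / 40000)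
    {U : Matrix (Fin n1) (Fin r) ℝ} {V : Matrix (Fin n2) (Fin r) ℝ} {σ : Fin r → ℝ}
    {a : Fin n1 × Fin n2 → ℝ} (hU : Uᵀ * U = 1) (hV : Vᵀ * V = 1) (hσ : ∀ k, 0 < σ k)
    (ha : ∀ e, 0 < a e) {g : ℝ} (hg0 : 0 ≤ g) (hg : g ≤ regLevel ^ 2 / 8)
    (hμ : ∀ e, (1 - perpProj U V) e e ≤ 2 * g / Real.log n1 ^ 2)
    (hUV : ∀ e, |entries (U * Vᵀ) e| ≤ Real.sqrt (g / (Real.log n1 ^ 2 * n1))) :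
    unifProb (fun y : Fin n1 × Fin n2 → (Fin (c * K) → Fin K) × Bool =>
      ¬ StrictlyRecovered (Real.sqrt n1)⁻¹ (U * diagonal σ * Vᵀ) (productSparse a y)) ≤
      failureConst c * ((n1 : ℝ) ^ 10)⁻¹ := by
  have hn0 : 0 < n1 := by omega
  have hn1' : (1 : ℝ) ≤ n1 := by exact_mod_cast hn0
  have hs0 := regLevel_pos
  have hs1 := regLevel_le
  have hK0 : (0 : ℝ) < K := by positivity
  set L := Real.log n1 with hLdef
  have hL0 : 0 < L := by linarith
  have hLn : L ≤ n1 := by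
    have := Real.log_le_sub_one_of_pos (x := (n1 : ℝ)) (by linarith)
    linarith
  set μ := 2 * g / L ^ 2 with hμdef
  have hμ0 : 0 ≤ μ := by positivity
  have hg1 : g ≤ 1 / 28800 := by nlinarith
  have hKμ : K * μ ≤ 4 * g / L := by
    calc K * μ ≤ 2 * L * μ := by gcongr
      _ = 4 * g / L := by rw [hμdef]; field_simp; ring
  have hKμ' : K * μ ≤ regLevel ^ 2 / 2 := by
    refine hKμ.trans ?_
    rw [div_le_iff₀ hL0]
    nlinarith [sq_nonneg regLevel]
  have hρ := (one_sub_inv_pow_mul_bounds hK2 c).2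
  have hb : 0 < 1 / (800 * K * Real.sqrt n1) := by
    have : 0 < Real.sqrt n1 := Real.sqrt_pos.2 (by linarith)
    positivity
  have hUVb : ∀ e, |entries (U * Vᵀ) e| ≤ 1 / (800 * K * Real.sqrt n1) := by
    refine fun e => (hUV e).trans ((Real.sqrt_le_left hb.le).2 ?_)
    rw [div_pow, mul_pow, Real.sq_sqrt (by linarith), one_pow,
      div_le_div_iff₀ (by positivity) (by positivity)]
    have hK4 : (K : ℝ) ^ 2 ≤ 4 * L ^ 2 := by nlinarith
    have hg2 : g * 2560000 ≤ 1 := by nlinarith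
    have h1 : (800 * (K : ℝ)) ^ 2 ≤ 2560000 * L ^ 2 := by nlinarith
    calc g * ((800 * K) ^ 2 * n1) ≤ g * (2560000 * L ^ 2 * n1) := by gcongr
      _ = (g * 2560000) * (L ^ 2 * n1) := by ring
      _ ≤ 1 * (L ^ 2 * n1) := by gcongr
  have hJ : n1 * (1 / 2 : ℝ) ^ (c * K) ≤ 1 := by
    have hhalf : (1 / 2 : ℝ) ^ 2 ≤ Real.exp (-1) := by
      have := Real.exp_neg_one_gt_d9
      norm_num at this ⊢
      linarith
    have : (1 / 2 : ℝ) ^ (c * K) ≤ (n1 : ℝ)⁻¹ := by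
      calc (1 / 2 : ℝ) ^ (c * K) ≤ (1 / 2 : ℝ) ^ (2 * K) :=
            pow_le_pow_of_le_one (by norm_num) (by norm_num) (Nat.mul_le_mul_right K hc)
        _ = ((1 / 2 : ℝ) ^ 2) ^ K := pow_mul _ _ _
        _ ≤ Real.exp (-1) ^ K := by gcongr
        _ = Real.exp (-K) := by rw [← Real.exp_nat_mul]; ring_nf
        _ ≤ Real.exp (-L) := Real.exp_le_exp.2 (by linarith)
        _ = (n1 : ℝ)⁻¹ := by rw [Real.exp_neg, hLdef, Real.exp_log (by linarith)]
    calc n1 * (1 / 2 : ℝ) ^ (c * K) ≤ n1 * (n1 : ℝ)⁻¹ := by gcongr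
      _ = 1 := mul_inv_cancel₀ (by linarith)
  have hmain := unifProb_not_strictlyRecovered_le (J := c * K) (K := K) hn hn1 hn2 hU hV hσ ha hμ hb
    hUVb (le_of_eq (by
      have : Real.sqrt n1 ≠ 0 := (Real.sqrt_pos.2 (by linarith)).ne'
      field_simp)) hJ (τ₁ := 30 * L) (τ₂ := 60 * L)
    (by positivity) (by
      calc 30 * L * (K * μ) ≤ 30 * L * (4 * g / L) := by gcongr
        _ = 120 * g := by field_simp; ring
        _ ≤ 1 := by linarith) (by positivity)
    (unifProb_compression_le hn hn0 hLK hU hV hμ0 hμ hKμ' (hρ.trans hcs))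
    ((mul_le_mul_of_nonneg_right hρ (Real.exp_pos _).le).trans hce)
  refine hmain.trans ?_
  have h14 : Real.exp (-(14 * L)) = ((n1 : ℝ) ^ 14)⁻¹ := by
    simpa using exp_neg_natCast_mul_log hn0 14
  have he1 : Real.exp (-(30 * L / 2)) * Real.exp ((30 * L) ^ 2 * (K * μ)) ≤ ((n1 : ℝ) ^ 14)⁻¹ := by
    rw [← Real.exp_add, ← h14]
    refine Real.exp_le_exp.2 ?_
    have : (30 * L) ^ 2 * (K * μ) ≤ L := by
      calc (30 * L) ^ 2 * (K * μ) ≤ (30 * L) ^ 2 * (4 * g / L) := by gcongr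
        _ = 3600 * g * L := by field_simp; ring
        _ ≤ 1 * L := by gcongr; linarith
        _ = L := one_mul L
    linarith
  have he2 : Real.exp (-(60 * L / 4)) * Real.exp ((60 * L) ^ 2 * (4 * μ)) ≤ ((n1 : ℝ) ^ 14)⁻¹ := by
    rw [← Real.exp_add, ← h14]
    refine Real.exp_le_exp.2 ?_
    have : (60 * L) ^ 2 * (4 * μ) = 28800 * g := by rw [hμdef]; field_simp; ring
    linarith
  have hN : (n1 : ℝ) * n2 ≤ n1 ^ 2 := by
    rw [sq]
    gcongr
  have hen := exp_neg_natCast_le_factorial_mul hn0 11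
  set F : ℝ := (Nat.factorial 11 : ℝ) with hF
  have hF0 : 0 ≤ F := by positivity
  set w : ℝ := (n1 : ℝ)⁻¹ with hw
  have hw0 : 0 < w := by positivity
  have hw1 : w ≤ 1 := inv_le_one_of_one_le₀ hn1'
  have hnw : (n1 : ℝ) * w = 1 := mul_inv_cancel₀ (by linarith)
  rw [← inv_pow, ← hw] at he1 he2 hen
  rw [← inv_pow, ← inv_pow, ← hw]
  have hcK : ((c * K : ℕ) : ℝ) ≤ 2 * c * n1 := by
    push_cast
    calc (c : ℝ) * K ≤ c * (2 * n1) := by gcongr; linarith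
      _ = 2 * c * n1 := by ring
  have hpw : ∀ {i j : ℕ}, j ≤ i → w ^ i ≤ w ^ j := fun h => pow_le_pow_of_le_one hw0.le hw1 h
  have hn14 : (n1 : ℝ) ^ 2 * (2 * w ^ 14) = 2 * w ^ 12 := by
    calc (n1 : ℝ) ^ 2 * (2 * w ^ 14) = 2 * (n1 * w) ^ 2 * w ^ 12 := by ring
      _ = 2 * w ^ 12 := by rw [hnw]; ring
  have hA : (n1 : ℝ) * n2 * (2 * (Real.exp (-(30 * L / 2)) *
      Real.exp ((30 * L) ^ 2 * (K * μ)))) ≤ 2 * w ^ 12 := by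
    rw [← hn14]
    gcongr
  have hB : (n1 : ℝ) * n2 * (2 * (Real.exp (-(60 * L / 4)) *
      Real.exp ((60 * L) ^ 2 * (4 * μ)))) ≤ 2 * w ^ 12 := by
    rw [← hn14]
    gcongr
  have hC : ((c * K : ℕ) : ℝ) * ((n1 : ℝ) * n2 * (2 * (Real.exp (-(30 * L / 2)) *
      Real.exp ((30 * L) ^ 2 * (K * μ)))) + Real.exp (-n1)) ≤ 2 * c * (2 + F) * w ^ 10 := by
    calc _ ≤ 2 * c * n1 * (2 * w ^ 12 + F * w ^ 11) := by gcongr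
      _ ≤ 2 * c * n1 * (2 * w ^ 11 + F * w ^ 11) := by gcongr ?_ * (2 * ?_ + _); exact hpw (by norm_num)
      _ = 2 * c * (2 + F) * (n1 * w) * w ^ 10 := by ring
      _ = 2 * c * (2 + F) * w ^ 10 := by rw [hnw, mul_one]
  have h12 : w ^ 12 ≤ w ^ 10 := hpw (by norm_num)
  have h11 : F * w ^ 11 ≤ F * w ^ 10 := mul_le_mul_of_nonneg_left (hpw (by norm_num)) hF0
  have : failureConst c * w ^ 10 =
      w ^ 10 + 2 * c * (2 + F) * w ^ 10 + (2 * w ^ 10 + F * w ^ 10) + F * w ^ 10 := by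
    rw [failureConst, ← hF]
    ring
  rw [this]
  exact add_le_add (add_le_add (add_le_add h12 hC)
    (add_le_add (hB.trans (by linarith)) (hen.trans h11))) (hen.trans h11)

theorem exists_rounds : ∃ c : ℕ, 2 ≤ c ∧ Real.exp (-c) ≤ regLevel ∧
    Real.exp (-c) * Real.exp (40000 ^ 2) ≤ 1 / 40000 := by
  have hlim := Real.tendsto_exp_neg_atTop_nhds_zero.comp
    (tendsto_natCast_atTop_atTop (R := ℝ))
  have h1 := hlim.eventually_le_const regLevel_pos
  have h2 := hlim.eventually_le_const
    (show 0 < 1 / 40000 / Real.exp (40000 ^ 2) by positivity)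
  obtain ⟨c, h1, h2, hc⟩ := (h1.and (h2.and (Filter.eventually_ge_atTop 2))).exists
  exact ⟨c, hc, h1, (le_div_iff₀ (Real.exp_pos _)).1 h2⟩

end Recovery

/-- in the noiseless case Z0 = 0, StablePCP_c(0) with λ = 1/√n1 recovers
(L0, S0) exactly, with probability ≥ 1 − c′·n1⁻¹⁰ over the random support and signs. -/
theorem stablePCP_exact_recovery :
    ∃ ρr' ρs' c' : ℝ, 0 < ρr' ∧ 0 < ρs' ∧ 0 < c' ∧
      ∀ (n1 n2 r m : ℕ) (ν : ℝ), 0 < n2 → n2 ≤ n1 → 0 < ν →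
        ∀ (U : Matrix (Fin n1) (Fin r) ℝ) (V : Matrix (Fin n2) (Fin r) ℝ)
          (σ : Fin r → ℝ) (a : Fin n1 × Fin n2 → ℝ),
          Uᵀ * U = 1 → Vᵀ * V = 1 → (∀ k, 0 < σ k) → (∀ p, 0 < a p) →
          (∀ i : Fin n1, (∑ k, U i k ^ 2) ≤ ν * r / n1) →
          (∀ j : Fin n2, (∑ k, V j k ^ 2) ≤ ν * r / n2) →
          (∀ i j, |∑ k, U i k * V j k| ≤ Real.sqrt (ν * r / (n1 * n2))) →
          (r : ℝ) ≤ ρr' * n2 * ν⁻¹ * ((Real.log n1) ^ 2)⁻¹ →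
          (m : ℝ) ≤ ρs' * n1 * n2 →
          1 - c' * ((n1 : ℝ) ^ 10)⁻¹ ≤
            unifProb (fun ω : SampleSpace n1 n2 m =>
              ∀ Lh Sh : Matrix (Fin n1) (Fin n2) ℝ,
                IsStablePCPMin (U * Matrix.diagonal σ * Vᵀ + sparseOf a ω)
                    (Real.sqrt n1)⁻¹ 0 Lh Sh →
                  Lh = U * Matrix.diagonal σ * Vᵀ ∧ Sh = sparseOf a ω) := by
  obtain ⟨c, hc2, hcs, hce⟩ := exists_rounds
  set n0 : ℝ := 3 + 4 * Real.exp (2 * c) with hn0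
  have hn0pos : 0 < n0 := by positivity
  have hF : 0 ≤ failureConst c := by
    unfold failureConst
    positivity
  have hs0 := regLevel_pos
  refine ⟨regLevel ^ 2 / 8, Real.exp (-(2 * c)) / 4, 2 * failureConst c + n0 ^ 10, by positivity,
    by positivity, by positivity, ?_⟩
  intro n1 n2 r m ν hn2 hn hν U V σ a hU hV hσ ha hUi hVj hUV hr hm
  have hn1pos : 0 < n1 := hn2.trans_le hn
  have hn1r : (0 : ℝ) < n1 := by exact_mod_cast hn1pos
  have hn2r : (0 : ℝ) < n2 := by exact_mod_cast hn2
  have hn' : (n2 : ℝ) ≤ n1 := by exact_mod_cast hn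
  rcases lt_or_ge (n1 : ℝ) n0 with hsmall | hlarge
  · refine le_trans ?_ (unifProb_nonneg _)
    have h1 : (1 : ℝ) ≤ n0 ^ 10 * ((n1 : ℝ) ^ 10)⁻¹ := by
      rw [← div_eq_mul_inv, one_le_div (by positivity)]
      gcongr
    have h2 : 0 ≤ 2 * failureConst c * ((n1 : ℝ) ^ 10)⁻¹ := by positivity
    linarith
  have he0 := Real.exp_pos (2 * c)
  have hn3 : (3 : ℝ) ≤ n1 := by linarith
  have hn1gt : 1 < n1 := by
    have : (1 : ℝ) < n1 := by linarith
    exact_mod_cast this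
  have hL : 1 < Real.log n1 := by
    rw [Real.lt_log_iff_exp_lt hn1r]
    have := Real.exp_one_lt_d9
    linarith
  set L := Real.log n1 with hLdef
  have hL0 : 0 < L := by linarith
  set K := ⌈L⌉₊ with hKdef
  have hLK : L ≤ K := Nat.le_ceil L
  have hK2 : 2 ≤ K := Nat.lt_ceil.2 (by simpa using hL)
  have hK : (K : ℝ) ≤ 2 * L := by
    have := Nat.ceil_lt_add_one hL0.le
    linarith
  have : NeZero K := ⟨by omega⟩
  have hνr : ν * r / n2 ≤ regLevel ^ 2 / 8 / L ^ 2 := by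
    calc ν * r / n2 ≤ ν * (regLevel ^ 2 / 8 * n2 * ν⁻¹ * (L ^ 2)⁻¹) / n2 := by gcongr
      _ = regLevel ^ 2 / 8 / L ^ 2 := by field_simp
  have hνr1 : ν * r / n1 ≤ ν * r / n2 := by gcongr
  have hμ : ∀ e, (1 - perpProj U V) e e ≤ 2 * (regLevel ^ 2 / 8) / L ^ 2 := fun e => by
    have h1 := one_sub_perpProj_apply_self_le U V e
    have h2 := hUi e.1
    have h3 := hVj e.2
    rw [mul_div_assoc]
    linarith
  have hUVe : ∀ e, |entries (U * Vᵀ) e| ≤ Real.sqrt (regLevel ^ 2 / 8 / (L ^ 2 * n1)) := fun e => by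
    have h1 := hUV e.1 e.2
    simp only [entries, mul_apply, transpose_apply]
    refine h1.trans (Real.sqrt_le_sqrt ?_)
    rw [mul_comm (n1 : ℝ), ← div_div, ← div_div]
    gcongr
  have hprod := unifProb_productSparse_le hn hn2 hn1gt hL.le hLK hK2 hK hc2 hcs hce hU hV hσ ha
    (by positivity) le_rfl hμ hUVe
  have hρ := (one_sub_inv_pow_mul_bounds hK2 c).1
  have hnn : (n1 : ℝ) ≤ n1 * n2 :=
    le_mul_of_one_le_right hn1r.le (by exact_mod_cast hn2)
  have hee : Real.exp (-(2 * c)) * Real.exp (2 * c) = 1 := by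
    rw [← Real.exp_add]
    simp
  have hexp0 := Real.exp_pos (-(2 * (c : ℝ)))
  have htail : Real.exp (m - n1 * n2 * ((1 - 1 / (K : ℝ)) ^ (c * K) / 2)) ≤ 1 / 2 := by
    have h1 : (m : ℝ) - n1 * n2 * ((1 - 1 / (K : ℝ)) ^ (c * K) / 2) ≤ -1 := by
      have h2 : (n1 : ℝ) * n2 * Real.exp (-(2 * c)) ≤
          n1 * n2 * (1 - 1 / (K : ℝ)) ^ (c * K) := by gcongr
      have h3 : 4 * Real.exp (2 * c) ≤ n1 * n2 := by linarith
      have h4 := mul_le_mul_of_nonneg_right h3 hexp0.le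
      have h5 : 4 * Real.exp (2 * c) * Real.exp (-(2 * c)) = 4 := by linarith
      linarith
    have h6 := Real.exp_neg_one_lt_d9
    have h7 := Real.exp_le_exp.2 h1
    linarith
  have htrans := unifProb_sparseOf_le (m := m) (lam := (Real.sqrt n1)⁻¹) (by positivity)
    (U * diagonal σ * Vᵀ) a rfl htail
  have hmN : m ≤ (Finset.univ : Finset (Fin n1 × Fin n2)).card := by
    have h1 : Real.exp (-(2 * (c : ℝ))) ≤ 1 := Real.exp_le_one_iff.2 (by
      have : (0 : ℝ) ≤ c := c.cast_nonneg
      linarith)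
    have h2 : (m : ℝ) ≤ n1 * n2 := by
      have : (0 : ℝ) < n1 * n2 := by positivity
      nlinarith
    simp only [Finset.card_univ, Fintype.card_prod, Fintype.card_fin]
    exact_mod_cast h2
  obtain ⟨T, -, hT⟩ := Finset.exists_subset_card_eq hmN
  have : Nonempty (SampleSpace n1 n2 m) := ⟨⟨⟨T, hT⟩, fun _ => true⟩⟩
  rw [unifProb_not] at htrans
  have h10 : 0 ≤ n0 ^ 10 * ((n1 : ℝ) ^ 10)⁻¹ := by positivity
  calc 1 - (2 * failureConst c + n0 ^ 10) * ((n1 : ℝ) ^ 10)⁻¹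
      ≤ unifProb fun ω : SampleSpace n1 n2 m =>
          StrictlyRecovered (Real.sqrt n1)⁻¹ (U * diagonal σ * Vᵀ) (sparseOf a ω) := by linarith
    _ ≤ _ := unifProb_mono fun ω h Lh Sh hmin => h.eq_of_isStablePCPMin hmin
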